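/- For every integer v ≥ 4, let β(v) denote the maximum number of edges of a bipartite almost planar simple graph on v vertices. Then β(v) = 3v − 8 if v is even and v ≠ 6, and β(v) = 3v − 9 if v is odd or v = 6. -/

import Mathlib

/-!
The upper bound compares the graph `G` with a planar graph obtained from an almost planar drawing,
and the lower bound is given by explicit drawings.

**Planarity.** All topology enters through `planar_bound`: a simple bipartite graph whose vertices
are represented by disjoint connected compact plane sets, and whose edges are represented by
disjoint connected compact sets meeting only the sets of their two ends, has at most `2 |V| - 4`
edges. No Jordan curve theorem is needed: the sets are discretized on a fine grid (`GConn_disc`),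
so that the graph becomes a minor of a grid graph (`minor_bound`), and in the grid graph cells,
edges and points satisfy Euler's formula, which gives the bound by counting faces (`pg_bound`).

**Resolving crossings.** In a small disc around a crossing of `e` and `f`, the four ends of the two
edges on the boundary circle are reconnected by two disjoint chords (`exists_resolution`). Since an
edge crosses at most one other edge, following the resolved curves from the first class to the
second one gives pairwise disjoint strands: the strand of `e` starts at the end of `e` in the first
class and finishes either at the other end of `e` or at the end of the edge `τ e` crossing it
(`exists_strands`, `exists_model`). The strands remain plane when, for some of the pairs `e`, `τ e`,
one of the two edges is added, routed through the crossing (`resolved_bound`).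

**Counting.** Call `e` active if `e` and `τ e ≠ e` have no common end and neither joins a pair of
vertices joined by such a strand. Let `EE` be the set of pairs joined by edges or by strands of
crossed edges, and let `UU` consist of the pairs in `EE` not joined by active edges. Keeping one edge
of each active pair gives a set `QQ` with `|EE| + |UU| = 2 |QQ|` and `|QQ| ≤ 2n - 4`. If any two
vertices are joined by at most two strands of crossed edges, then the degree of a vertex in `G` is at
most three times its degree in `UU` (`deg_α`, `deg_β`). Hence minimum degree four gives
`|UU| ≥ 2 max(|A|, |B|)` for the classes `A`, `B`, which is at least `n`, and at least `n + 1` if `n`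
is odd. So `|E| ≤ |EE| ≤ 4n - 8 - |UU|` is at most `3n - 8` or `3n - 9`, respectively (`count`).

**Induction.** The upper bound is proved by induction on `n` (`BDrawing.bound_aux`). Deleting one or
two vertices shows that the degrees in a minimal counterexample are large enough for `count`. Three
strands from `w` to `z` would give a plane `K₃,₃` unless deleting `w` and `z` disconnects the graph
(`no_three_strands`), and in that case induction applied to the two sides bounds the number of edges
(`Model.atMostTwo`).

**Lower bound.** The vertices are placed on a line and the edges drawn as parabolic arcs above or
below it, so that crossings are governed by interleaving of arcs (`arcGraph_almostPlanar`). Complete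
bipartite graphs suffice for at most seven vertices (`lower_small`), and for more vertices a path
together with families of arcs of constant sum attains the bound (`lower_big`).
-/

open Set

/-- A drawing of a simple graph `G` in the plane: an injective placement of vertices
together with, for each edge, a continuous injective curve between the points of its
endpoints, whose interior avoids all vertex points; any two distinct edge curves meet in
finitely many points, and no point lies in the interiors of three distinct edge curves. -/
structure Drawing {V : Type*} (G : SimpleGraph V) where
  pos : V → ℝ × ℝ
  pos_inj : Function.Injective pos
  curve : G.edgeSet → ℝ → ℝ × ℝ
  curve_cont : ∀ e, ContinuousOn (curve e) (Icc 0 1)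
  curve_inj : ∀ e, InjOn (curve e) (Icc 0 1)
  curve_ends : ∀ e : G.edgeSet, ∃ a b : V, (e : Sym2 V) = s(a, b) ∧
      curve e 0 = pos a ∧ curve e 1 = pos b
  interior_no_vertex : ∀ e, ∀ t ∈ Ioo (0 : ℝ) 1, ∀ v, curve e t ≠ pos v
  finite_meet : ∀ e f, e ≠ f → (curve e '' Icc 0 1 ∩ curve f '' Icc 0 1).Finite
  no_triple_point : ∀ p : ℝ × ℝ, ∀ e f g, e ≠ f → e ≠ g → f ≠ g →
      p ∈ curve e '' Ioo 0 1 → p ∈ curve f '' Ioo 0 1 → p ∈ curve g '' Ioo 0 1 → False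

/-- Two edges cross in a drawing if some point lies in the interiors of both curves. -/
def Drawing.Crosses {V : Type*} {G : SimpleGraph V} (D : Drawing G) (e f : G.edgeSet) : Prop :=
  e ≠ f ∧ ∃ p : ℝ × ℝ, p ∈ D.curve e '' Ioo 0 1 ∧ p ∈ D.curve f '' Ioo 0 1

/-- A drawing is almost planar (1-planar) if every edge crosses at most one other edge. -/
def Drawing.IsAlmostPlanar {V : Type*} {G : SimpleGraph V} (D : Drawing G) : Prop :=
  ∀ e f g, D.Crosses e f → D.Crosses e g → f = g

/-- A graph is almost planar if it admits a drawing in which every edge crosses at most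
one other edge. -/
def SimpleGraph.AlmostPlanar {V : Type*} (G : SimpleGraph V) : Prop :=
  ∃ D : Drawing G, D.IsAlmostPlanar

/-! ### Counting edges of plane bipartite graphs -/

/-- Identifying the faces `l e` and `r e` for all `e ∈ S` reduces the number of faces by at most
the number of elements of `S`. -/
theorem exists_merge {Φ E : Type*} [Fintype Φ] [DecidableEq Φ] (l r : E → Φ) (S : Finset E) :
    ∃ g : Φ → Φ, (∀ e ∈ S, g (l e) = g (r e)) ∧
      Fintype.card Φ ≤ (Finset.univ.image g).card + S.card := by
  classical
  induction S using Finset.induction_on with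
  | empty => exact ⟨id, by simp, by simp⟩
  | insert e S he ih =>
    obtain ⟨g, hg, hc⟩ := ih
    refine ⟨fun x => if g x = g (l e) then g (r e) else g x, ?_, ?_⟩
    · intro f hf
      rcases Finset.mem_insert.1 hf with rfl | hf
      · simp
      · simp [hg f hf]
    · rw [Finset.card_insert_of_notMem he]
      have : (Finset.univ.image g).erase (g (l e)) ⊆
          Finset.univ.image (fun x => if g x = g (l e) then g (r e) else g x) := by
        intro y hy
        simp only [Finset.mem_erase, Finset.mem_image, Finset.mem_univ, true_and] at hy ⊢
        obtain ⟨hy, x, rfl⟩ := hy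
        exact ⟨x, by simp [hy]⟩
      have h1 := Finset.card_le_card this
      have h2 := Finset.pred_card_le_card_erase (s := Finset.univ.image g) (a := g (l e))
      omega

/-- A nonempty set of edges of a simple bipartite graph in which all degrees are even has at least
four elements. -/
theorem four_le_of_even {I V : Type*} [DecidableEq V] (a b : I → V)
    (hab : ∀ i j, a i ≠ b j) (inj : ∀ i j, a i = a j → b i = b j → i = j)
    (J : Finset I) (hne : J.Nonempty)
    (hev : ∀ v, Even (J.filter (fun i => a i = v ∨ b i = v)).card) : 4 ≤ J.card := by
  classical
  -- every vertex touched by one edge of `J` is touched by a second one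
  have second : ∀ v, ∀ i ∈ J, (a i = v ∨ b i = v) → ∃ j ∈ J, j ≠ i ∧ (a j = v ∨ b j = v) := by
    intro v i hi hv
    have hmem : i ∈ J.filter (fun i => a i = v ∨ b i = v) := by simp [hi, hv]
    have h1 : 1 < (J.filter (fun i => a i = v ∨ b i = v)).card := by
      have := hev v
      have h0 := Finset.card_pos.2 ⟨i, hmem⟩
      rcases this with ⟨k, hk⟩
      omega
    obtain ⟨j, hj, hji⟩ := Finset.exists_mem_ne h1 i
    simp only [Finset.mem_filter] at hj
    exact ⟨j, hj.1, hji, hj.2⟩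
  obtain ⟨i, hi⟩ := hne
  obtain ⟨j, hj, hji, hja⟩ := second (a i) i hi (Or.inl rfl)
  have hja : a j = a i := hja.resolve_right (fun h => hab i j h.symm)
  obtain ⟨k, hk, hki, hkb⟩ := second (b i) i hi (Or.inr rfl)
  have hkb : b k = b i := hkb.resolve_left (fun h => hab k i h)
  obtain ⟨m, hm, hmk, hma⟩ := second (a k) k hk (Or.inl rfl)
  have hma : a m = a k := hma.resolve_right (fun h => hab k m h.symm)
  have hbj : b j ≠ b i := fun h => hji (inj _ _ hja h)
  have hak : a k ≠ a i := fun h => hki (inj _ _ h hkb)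
  have hbm : b m ≠ b k := fun h => hmk (inj _ _ hma h)
  have : ({i, j, k, m} : Finset I) ⊆ J := by
    intro x hx
    simp only [Finset.mem_insert, Finset.mem_singleton] at hx
    rcases hx with rfl | rfl | rfl | rfl <;> assumption
  have h4 : ({i, j, k, m} : Finset I).card = 4 := by
    rw [Finset.card_insert_of_notMem, Finset.card_insert_of_notMem, Finset.card_pair hmk.symm]
    · simp only [Finset.mem_insert, Finset.mem_singleton, not_or]
      exact ⟨fun h => hak (by rw [← h, hja]), fun h => hak (by rw [← hma, ← h, hja])⟩
    · simp only [Finset.mem_insert, Finset.mem_singleton, not_or]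
      exact ⟨hji.symm, hki.symm, fun h => hak (by rw [← hma, ← h])⟩
  calc 4 = _ := h4.symm
    _ ≤ _ := Finset.card_le_card this

/-- Edge bound for a bipartite minor of a plane graph. The plane graph is given combinatorially by
points `P`, edges `E` with ends `s e`, `t e`, and faces `Φ`, with `l e`, `r e` the faces on both
sides of `e`: the boundary of any set of faces has even degrees (`heven`), Euler's inequality holds
(`heuler`), and the dual graph is connected (`hdual`). The points are coloured by the vertices `V` of
the minor; each colour class has a spanning tree, along whose edges `rk` decreases towards the root
`seed v`, and the edge `i` of the minor is represented by the edge `rep i`.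

Deleting all edges other than tree edges and representatives merges faces. By Euler's inequality
at least `|I| - |V| + 2` of them remain, and the boundary of each one contains at least four
representatives by `four_le_of_even`, whereas each representative is on at most two boundaries. -/
theorem pg_bound {P E Φ V I : Type*} [DecidableEq P] [Fintype P] [Fintype E] [Fintype Φ] [Fintype V] [Fintype I]
    (s t : E → P) (l r : E → Φ)
    (heven : ∀ (χ : Φ → ZMod 2) (p : P), ∑ e, ((if s e = p then 1 else 0) +
        (if t e = p then 1 else 0)) * (χ (l e) + χ (r e)) = (0 : ZMod 2))
    (heuler : Fintype.card E + 2 ≤ Fintype.card P + Fintype.card Φ)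
    (hdual : ∀ χ : Φ → Prop, (∀ e, χ (l e) ↔ χ (r e)) → ∀ φ φ', χ φ → χ φ')
    (col : P → V) (rk : P → ℕ) (seed : V → P) (hseed : ∀ v, col (seed v) = v)
    (hpar : ∀ p, p ≠ seed (col p) → ∃ e, ∃ q, ((s e = p ∧ t e = q) ∨ (s e = q ∧ t e = p)) ∧
        col q = col p ∧ rk q < rk p)
    (a b : I → V) (rep : I → E)
    (hrep : ∀ i, (col (s (rep i)) = a i ∧ col (t (rep i)) = b i) ∨
        (col (s (rep i)) = b i ∧ col (t (rep i)) = a i))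
    (hab : ∀ i j, a i ≠ b j) (inj : ∀ i j, a i = a j → b i = b j → i = j)
    (hV : 3 ≤ Fintype.card V) : Fintype.card I + 4 ≤ 2 * Fintype.card V := by
  classical
  rcases isEmpty_or_nonempty E with hE | hE
  · have : IsEmpty I := ⟨fun i => hE.false (rep i)⟩
    simp only [Fintype.card_of_isEmpty]
    omega
  have : Nonempty P := ⟨s hE.some⟩
  choose! pe par hpe hcol hrk using hpar
  have seed_inj : Function.Injective seed := fun u v h => by rw [← hseed u, h, hseed]
  set NS : Finset P := Finset.univ.filter (fun p => p ≠ seed (col p)) with hNS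
  have hNSmem : ∀ p, p ∈ NS ↔ p ≠ seed (col p) := by simp [hNS]
  have hNSc : NS.card + Fintype.card V = Fintype.card P := by
    have h1 : (Finset.univ.filter (fun p => ¬ p ≠ seed (col p))) = Finset.univ.image seed := by
      ext p
      simp only [Finset.mem_filter, Finset.mem_univ, true_and, not_not, Finset.mem_image]
      exact ⟨fun h => ⟨_, h.symm⟩, by rintro ⟨v, rfl⟩; rw [hseed]⟩
    have h2 := Finset.card_filter_add_card_filter_not (s := (Finset.univ : Finset P))
      (fun p => p ≠ seed (col p))
    rw [h1, Finset.card_image_of_injective _ seed_inj, Finset.card_univ, Finset.card_univ] at h2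
    exact h2
  have pe_inj : ∀ p ∈ NS, ∀ p' ∈ NS, pe p = pe p' → p = p' := by
    intro p hp p' hp' h
    rw [hNSmem] at hp hp'
    have h1 := hpe p hp
    have h2 := hpe p' hp'
    have h3 := hrk p hp
    have h4 := hrk p' hp'
    rw [h] at h1
    rcases h1 with ⟨h1, h1'⟩ | ⟨h1, h1'⟩ <;> rcases h2 with ⟨h2, h2'⟩ | ⟨h2, h2'⟩
    · exact h1.symm.trans h2
    · have e1 : rk p = rk (par p') := by rw [← h1, h2]
      have e2 : rk (par p) = rk p' := by rw [← h1', h2']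
      omega
    · have e1 : rk p' = rk (par p) := by rw [← h2, h1]
      have e2 : rk (par p') = rk p := by rw [← h2', h1']
      omega
    · exact h1'.symm.trans h2'
  have rep_inj : Function.Injective rep := by
    intro i j h
    have h1 := hrep i
    have h2 := hrep j
    rw [h] at h1
    rcases h1 with ⟨h1, h1'⟩ | ⟨h1, h1'⟩ <;> rcases h2 with ⟨h2, h2'⟩ | ⟨h2, h2'⟩
    · exact inj _ _ (h1.symm.trans h2) (h1'.symm.trans h2')
    · exact absurd (h1.symm.trans h2) (hab _ _)
    · exact absurd (h2.symm.trans h1) (hab _ _)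
    · exact inj _ _ (h1'.symm.trans h2') (h1.symm.trans h2)
  have pe_col : ∀ p ∈ NS, col (s (pe p)) = col p ∧ col (t (pe p)) = col p := by
    intro p hp
    rw [hNSmem] at hp
    rcases hpe p hp with ⟨h, h'⟩ | ⟨h, h'⟩ <;> rw [h, h'] <;> simp [hcol p hp]
  set K : Finset E := NS.image pe ∪ Finset.univ.image rep with hK
  have hKc : K.card = NS.card + Fintype.card I := by
    rw [hK, Finset.card_union_of_disjoint, Finset.card_image_of_injOn,
      Finset.card_image_of_injective _ rep_inj, Finset.card_univ]
    · exact fun p hp p' hp' h => pe_inj p hp p' hp' h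
    · rw [Finset.disjoint_left]
      intro e he he'
      simp only [Finset.mem_image, Finset.mem_univ, true_and] at he he'
      obtain ⟨p, hp, rfl⟩ := he
      obtain ⟨i, hi⟩ := he'
      have h1 := pe_col p hp
      have h2 := hrep i
      rw [hi, h1.1, h1.2] at h2
      rcases h2 with ⟨h, h'⟩ | ⟨h, h'⟩
      · exact hab i i (h.symm.trans h')
      · exact hab i i (h'.symm.trans h)
  obtain ⟨g, hg, hgc⟩ := exists_merge l r Kᶜ
  rw [Finset.card_compl] at hgc
  have hKle : K.card ≤ Fintype.card E := Finset.card_le_univ _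
  set F : Finset Φ := Finset.univ.image g with hF
  have hFc : 2 + Fintype.card I ≤ F.card + Fintype.card V := by omega
  -- the boundary of a class of faces
  set D : Φ → Finset E := fun ψ => Finset.univ.filter (fun e => ¬ (g (l e) = ψ ↔ g (r e) = ψ))
    with hD
  have hDK : ∀ ψ, D ψ ⊆ K := by
    intro ψ e he
    by_contra h
    have := hg e (by simpa using h)
    simp only [hD, Finset.mem_filter, this] at he
    tauto
  have ind : ∀ ψ e, ((if g (l e) = ψ then 1 else 0) + (if g (r e) = ψ then 1 else 0) : ZMod 2) =
      if e ∈ D ψ then 1 else 0 := by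
    intro ψ e
    simp only [hD, Finset.mem_filter, Finset.mem_univ, true_and]
    by_cases h1 : g (l e) = ψ <;> by_cases h2 : g (r e) = ψ <;> simp [h1, h2]
    decide
  have evenD : ∀ ψ p, ∑ e ∈ D ψ, ((if s e = p then 1 else 0) + (if t e = p then 1 else 0)) =
      (0 : ZMod 2) := by
    intro ψ p
    have := heven (fun φ => if g φ = ψ then 1 else 0) p
    simp only [ind] at this
    simp only [mul_ite, mul_one, mul_zero] at this
    rwa [← Finset.sum_filter, Finset.filter_mem_eq_inter, Finset.univ_inter] at this
  set J : Φ → Finset I := fun ψ => Finset.univ.filter (fun i => rep i ∈ D ψ) with hJ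
  by_cases hF2 : F.card ≤ 1
  · omega
  have hJ4 : ∀ ψ ∈ F, 4 ≤ (J ψ).card := by
    intro ψ hψ
    have hDne : (D ψ).Nonempty := by
      by_contra hemp
      rw [Finset.not_nonempty_iff_eq_empty] at hemp
      obtain ⟨ψ', hψ', hne⟩ := Finset.exists_mem_ne (by omega : 1 < F.card) ψ
      simp only [hF, Finset.mem_image, Finset.mem_univ, true_and] at hψ hψ'
      obtain ⟨φ, hφ⟩ := hψ
      obtain ⟨φ', hφ'⟩ := hψ'
      refine hne (hφ'.symm.trans (hdual (fun x => g x = ψ) ?_ φ φ' hφ))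
      intro e
      by_contra hcon
      have : e ∈ D ψ := by simp [hD, hcon]
      simp [hemp] at this
    apply four_le_of_even a b hab inj
    -- a boundary consisting of tree edges has odd degree at a point of maximal `rk`
    · by_contra hemp
      rw [Finset.not_nonempty_iff_eq_empty] at hemp
      have hsub : ∀ e ∈ D ψ, ∃ p ∈ NS, pe p = e := by
        intro e he
        have h1 := hDK ψ he
        simp only [hK, Finset.mem_union, Finset.mem_image, Finset.mem_univ, true_and] at h1
        rcases h1 with h1 | ⟨i, hi⟩
        · exact h1
        · have : i ∈ J ψ := by simp [hJ, hi, he]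
          simp [hemp] at this
      obtain ⟨p, hp, hmax⟩ := Finset.exists_max_image (NS.filter (fun p => pe p ∈ D ψ)) rk (by
        obtain ⟨e, he⟩ := hDne
        obtain ⟨p, hp, rfl⟩ := hsub e he
        exact ⟨p, by simp [hp, he]⟩)
      rw [Finset.mem_filter] at hp
      have h1 := evenD ψ p
      rw [Finset.sum_eq_single_of_mem _ hp.2] at h1
      · have h3 := (hNSmem p).1 hp.1
        rcases hpe p h3 with ⟨h, h'⟩ | ⟨h, h'⟩
        · have h4 := hrk p h3
          have : par p ≠ p := fun h => by rw [h] at h4; omega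
          simp [h, h', this] at h1
        · have h4 := hrk p h3
          have : par p ≠ p := fun h => by rw [h] at h4; omega
          simp [h, h', this] at h1
      · intro e he hne
        obtain ⟨q, hq, rfl⟩ := hsub e he
        have h3 := (hNSmem q).1 hq
        have h4 := hrk q h3
        have h5 := hmax q (by simp [hq, he])
        have hqp : q ≠ p := fun h => hne (by rw [h])
        have hpq : par q ≠ p := fun h => by rw [h] at h4; omega
        rcases hpe q h3 with ⟨h, h'⟩ | ⟨h, h'⟩ <;> simp [h, h', hqp, hpq]
    · intro v
      have h1 : ∑ p ∈ Finset.univ.filter (fun p => col p = v), ∑ e ∈ D ψ,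
          ((if s e = p then 1 else 0) + (if t e = p then 1 else 0)) = (0 : ZMod 2) :=
        Finset.sum_eq_zero (fun p _ => evenD ψ p)
      rw [Finset.sum_comm] at h1
      have h2 : ∀ e, ∑ p ∈ Finset.univ.filter (fun p => col p = v),
          ((if s e = p then 1 else 0) + (if t e = p then 1 else 0) : ZMod 2) =
          (if col (s e) = v then 1 else 0) + (if col (t e) = v then 1 else 0) := by
        intro e
        rw [Finset.sum_add_distrib, Finset.sum_ite_eq, Finset.sum_ite_eq]
        simp
      simp only [h2] at h1
      have h3 : D ψ = (D ψ).filter (fun e => e ∈ NS.image pe) ∪ (J ψ).image rep := by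
        ext e
        simp only [Finset.mem_union, Finset.mem_filter, Finset.mem_image, hJ, Finset.mem_univ,
          true_and]
        constructor
        · intro he
          have := hDK ψ he
          simp only [hK, Finset.mem_union, Finset.mem_image, Finset.mem_univ, true_and] at this
          rcases this with h | ⟨i, rfl⟩
          · exact Or.inl ⟨he, h⟩
          · exact Or.inr ⟨i, he, rfl⟩
        · rintro (h | ⟨i, h, rfl⟩)
          exacts [h.1, h]
      have h4 : Disjoint ((D ψ).filter (fun e => e ∈ NS.image pe)) ((J ψ).image rep) := by
        rw [Finset.disjoint_left]
        intro e he he'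
        simp only [Finset.mem_image, Finset.mem_filter] at he he'
        obtain ⟨-, p, hp, rfl⟩ := he
        obtain ⟨i, -, hi⟩ := he'
        have h1 := pe_col p hp
        have h2 := hrep i
        rw [hi, h1.1, h1.2] at h2
        rcases h2 with ⟨h, h'⟩ | ⟨h, h'⟩
        · exact hab i i (h.symm.trans h')
        · exact hab i i (h'.symm.trans h)
      rw [h3, Finset.sum_union h4, Finset.sum_image (fun i _ j _ h => rep_inj h)] at h1
      rw [Finset.sum_eq_zero, zero_add] at h1
      · have h5 : ∀ i, ((if col (s (rep i)) = v then 1 else 0) +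
            (if col (t (rep i)) = v then 1 else 0) : ZMod 2) =
            if (a i = v ∨ b i = v) then 1 else 0 := by
          intro i
          have hne := hab i i
          have : ¬ (a i = v ∧ b i = v) := fun h => hne (h.1.trans h.2.symm)
          by_cases ha : a i = v
          · have hb : b i ≠ v := fun hb => this ⟨ha, hb⟩
            rcases hrep i with ⟨h, h'⟩ | ⟨h, h'⟩ <;> rw [h, h'] <;> simp [ha, hb]
          · rcases hrep i with ⟨h, h'⟩ | ⟨h, h'⟩ <;> rw [h, h'] <;> simp [ha]
        simp only [h5] at h1
        rw [Finset.sum_boole] at h1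
        exact (ZMod.natCast_eq_zero_iff_even).1 h1
      · intro e he
        simp only [Finset.mem_image, Finset.mem_filter] at he
        obtain ⟨-, p, hp, rfl⟩ := he
        rw [(pe_col p hp).1, (pe_col p hp).2]
        split_ifs
        · decide
        · decide
  have hsum : ∑ ψ ∈ F, (J ψ).card ≤ 2 * Fintype.card I := by
    have h1 : ∀ ψ, (J ψ).card ≤ ∑ i, ((if g (l (rep i)) = ψ then 1 else 0) +
        (if g (r (rep i)) = ψ then 1 else 0)) := by
      intro ψ
      rw [Finset.card_eq_sum_ones, hJ, Finset.sum_filter]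
      apply Finset.sum_le_sum
      intro i _
      simp only [hD, Finset.mem_filter, Finset.mem_univ, true_and]
      by_cases h1 : g (l (rep i)) = ψ <;> by_cases h2 : g (r (rep i)) = ψ <;> simp [h1, h2]
    calc ∑ ψ ∈ F, (J ψ).card ≤ ∑ ψ ∈ F, ∑ i, ((if g (l (rep i)) = ψ then 1 else 0) +
        (if g (r (rep i)) = ψ then 1 else 0)) := Finset.sum_le_sum (fun ψ _ => h1 ψ)
      _ = ∑ i : I, ∑ ψ ∈ F, ((if g (l (rep i)) = ψ then 1 else 0) +
        (if g (r (rep i)) = ψ then 1 else 0)) := Finset.sum_comm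
      _ ≤ ∑ i : I, 2 := by
        apply Finset.sum_le_sum
        intro i _
        rw [Finset.sum_add_distrib, Finset.sum_ite_eq, Finset.sum_ite_eq]
        split_ifs <;> simp
      _ = 2 * Fintype.card I := by simp [mul_comm]
  have h4F : F.card * 4 ≤ ∑ ψ ∈ F, (J ψ).card := by
    have := Finset.card_nsmul_le_sum F (fun ψ => (J ψ).card) 4 hJ4
    simpa using this
  omega

/-! ### The grid graph -/

/-- Adjacency in the `(N+1) × (N+1)` grid graph. -/
def GAdj {N : ℕ} (p q : Fin (N + 1) × Fin (N + 1)) : Prop :=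
  (p.2 = q.2 ∧ (p.1.val + 1 = q.1.val ∨ q.1.val + 1 = p.1.val)) ∨
  (p.1 = q.1 ∧ (p.2.val + 1 = q.2.val ∨ q.2.val + 1 = p.2.val))

theorem GAdj.symm {N : ℕ} {p q : Fin (N + 1) × Fin (N + 1)} (h : GAdj p q) : GAdj q p := by
  unfold GAdj at *
  rcases h with ⟨h, hx | hx⟩ | ⟨h, hx | hx⟩ <;> simp [h, hx]

/-- The cell with upper right corner `(a, b)`; `none` is the unbounded face. -/
def gcell (N a b : ℕ) : Option (Fin N × Fin N) :=
  if h : (1 ≤ a ∧ a ≤ N) ∧ (1 ≤ b ∧ b ≤ N) then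
    some (⟨a - 1, by omega⟩, ⟨b - 1, by omega⟩) else none

theorem gcell_none {N a b : ℕ} (h : ¬ ((1 ≤ a ∧ a ≤ N) ∧ (1 ≤ b ∧ b ≤ N))) :
    gcell N a b = none := dif_neg h

theorem gcell_some {N : ℕ} (i j : Fin N) : gcell N (i + 1) (j + 1) = some (i, j) := by
  have h : (1 ≤ i.val + 1 ∧ i.val + 1 ≤ N) ∧ (1 ≤ j.val + 1 ∧ j.val + 1 ≤ N) := by omega
  rw [gcell, dif_pos h]
  simp

theorem sum_castSucc_ite {N : ℕ} {M : Type*} [AddCommMonoid M] (F : Fin (N + 1) → M)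
    (hF : F (Fin.last N) = 0) (x : Fin (N + 1)) :
    ∑ i : Fin N, (if i.castSucc = x then F i.castSucc else 0) = F x := by
  have h := Fin.sum_univ_castSucc (fun i => if i = x then F i else 0)
  rw [Finset.sum_ite_eq' Finset.univ x F] at h
  simp only [Finset.mem_univ, if_true] at h
  rw [h, hF]
  simp

theorem sum_succ_ite {N : ℕ} {M : Type*} [AddCommMonoid M] (F : Fin (N + 1) → M)
    (hF : F 0 = 0) (x : Fin (N + 1)) :
    ∑ i : Fin N, (if i.succ = x then F i.succ else 0) = F x := by
  have h := Fin.sum_univ_succ (fun i => if i = x then F i else 0)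
  rw [Finset.sum_ite_eq' Finset.univ x F] at h
  simp only [Finset.mem_univ, if_true] at h
  rw [h, hF]
  simp

theorem zmod2_add_self (x : ZMod 2) : x + x = 0 := CharTwo.add_self_eq_zero x

/-- The horizontal edges at the grid point `(x, y)` contribute to a boundary modulo `2` the sum of
the values of the four cells around the point. Cells outside the grid have the common value `o`. -/
theorem grid_even (N : ℕ) (X : ℕ → ℕ → ZMod 2) (o : ZMod 2)
    (hX : ∀ a b, (¬ ((1 ≤ a ∧ a ≤ N) ∧ (1 ≤ b ∧ b ≤ N))) → X a b = o)
    (x y : Fin (N + 1)) :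
    ∑ i : Fin N, ((if i.castSucc = x then 1 else 0) + (if i.succ = x then 1 else 0)) *
      (X (i.val + 1) (y.val + 1) + X (i.val + 1) y.val) =
    X (x.val + 1) (y.val + 1) + X (x.val + 1) y.val + (X x.val (y.val + 1) + X x.val y.val) := by
  have h1 := sum_castSucc_ite
    (fun i : Fin (N + 1) => X (i.val + 1) (y.val + 1) + X (i.val + 1) y.val) (by
      rw [hX _ _ (by simp), hX _ _ (by simp), zmod2_add_self]) x
  have h2 := sum_succ_ite
    (fun i : Fin (N + 1) => X i.val (y.val + 1) + X i.val y.val) (by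
      rw [hX _ _ (by simp), hX _ _ (by simp), zmod2_add_self]) x
  rw [← h1, ← h2, ← Finset.sum_add_distrib]
  refine Finset.sum_congr rfl (fun i _ => ?_)
  simp only [add_mul, ite_mul, one_mul, zero_mul, Fin.val_castSucc, Fin.val_succ]

/-- The bound `pg_bound` for the grid graph, with the cells and the unbounded face as faces. -/
theorem grid_bound {V I : Type*} [Fintype V] [Fintype I] (N : ℕ)
    (col : Fin (N + 1) × Fin (N + 1) → V) (rk : Fin (N + 1) × Fin (N + 1) → ℕ)
    (seed : V → Fin (N + 1) × Fin (N + 1)) (hseed : ∀ v, col (seed v) = v)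
    (hpar : ∀ p, p ≠ seed (col p) → ∃ q, GAdj p q ∧ col q = col p ∧ rk q < rk p)
    (a b : I → V) (hrep : ∀ i, ∃ p q, GAdj p q ∧ col p = a i ∧ col q = b i)
    (hab : ∀ i j, a i ≠ b j) (inj : ∀ i j, a i = a j → b i = b j → i = j)
    (hV : 3 ≤ Fintype.card V) : Fintype.card I + 4 ≤ 2 * Fintype.card V := by
  classical
  let s : (Fin N × Fin (N + 1)) ⊕ (Fin (N + 1) × Fin N) → Fin (N + 1) × Fin (N + 1) :=
    Sum.elim (fun x => (x.1.castSucc, x.2)) (fun x => (x.1, x.2.castSucc))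
  let t : (Fin N × Fin (N + 1)) ⊕ (Fin (N + 1) × Fin N) → Fin (N + 1) × Fin (N + 1) :=
    Sum.elim (fun x => (x.1.succ, x.2)) (fun x => (x.1, x.2.succ))
  let l : (Fin N × Fin (N + 1)) ⊕ (Fin (N + 1) × Fin N) → Option (Fin N × Fin N) :=
    Sum.elim (fun x => gcell N (x.1 + 1) (x.2 + 1)) (fun x => gcell N (x.1 + 1) (x.2 + 1))
  let r : (Fin N × Fin (N + 1)) ⊕ (Fin (N + 1) × Fin N) → Option (Fin N × Fin N) :=
    Sum.elim (fun x => gcell N (x.1 + 1) x.2) (fun x => gcell N x.1 (x.2 + 1))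
  have hadj : ∀ p q, GAdj p q → ∃ e, (s e = p ∧ t e = q) ∨ (s e = q ∧ t e = p) := by
    rintro ⟨p1, p2⟩ ⟨q1, q2⟩ h
    rcases h with ⟨h, h' | h'⟩ | ⟨h, h' | h'⟩ <;> simp only at h h'
    · exact ⟨Sum.inl (⟨p1.val, by omega⟩, p2), Or.inl ⟨by simp [s], by
        simp only [t, Sum.elim_inl, Prod.mk.injEq]; exact ⟨Fin.ext (by simpa using h'), h⟩⟩⟩
    · exact ⟨Sum.inl (⟨q1.val, by omega⟩, p2), Or.inr ⟨by simp [s, h], by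
        simp only [t, Sum.elim_inl, Prod.mk.injEq]; exact ⟨Fin.ext (by simpa using h'), trivial⟩⟩⟩
    · exact ⟨Sum.inr (p1, ⟨p2.val, by omega⟩), Or.inl ⟨by simp [s], by
        simp only [t, Sum.elim_inr, Prod.mk.injEq]; exact ⟨h, Fin.ext (by simpa using h')⟩⟩⟩
    · exact ⟨Sum.inr (p1, ⟨q2.val, by omega⟩), Or.inr ⟨by simp [s, h], by
        simp only [t, Sum.elim_inr, Prod.mk.injEq]; exact ⟨trivial, Fin.ext (by simpa using h')⟩⟩⟩
  have hrep' : ∀ i, ∃ e, (col (s e) = a i ∧ col (t e) = b i) ∨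
      (col (s e) = b i ∧ col (t e) = a i) := by
    intro i
    obtain ⟨p, q, h, hp, hq⟩ := hrep i
    obtain ⟨e, ⟨h1, h2⟩ | ⟨h1, h2⟩⟩ := hadj p q h
    · exact ⟨e, Or.inl ⟨by rw [h1, hp], by rw [h2, hq]⟩⟩
    · exact ⟨e, Or.inr ⟨by rw [h1, hq], by rw [h2, hp]⟩⟩
  choose rep hrep' using hrep'
  refine pg_bound s t l r ?_ ?_ ?_ col rk seed hseed ?_ a b rep hrep' hab inj hV
  · rintro χ ⟨x, y⟩
    rw [Fintype.sum_sum_type, Fintype.sum_prod_type, Fintype.sum_prod_type_right]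
    have e1 := grid_even N (fun a b => χ (gcell N a b)) (χ none)
      (fun a b h => by rw [gcell_none h]) x y
    have e2 := grid_even N (fun a b => χ (gcell N b a)) (χ none)
      (fun a b h => by rw [gcell_none (fun h' => h ⟨h'.2, h'.1⟩)]) y x
    have hH : ∀ i : Fin N, ∑ j : Fin (N + 1),
        ((if s (Sum.inl (i, j)) = (x, y) then 1 else 0) +
          (if t (Sum.inl (i, j)) = (x, y) then 1 else 0)) *
          (χ (l (Sum.inl (i, j))) + χ (r (Sum.inl (i, j)))) =
        ((if i.castSucc = x then 1 else 0) + (if i.succ = x then 1 else 0)) *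
          (χ (gcell N (i + 1) (y + 1)) + χ (gcell N (i + 1) y)) := by
      intro i
      rw [Finset.sum_eq_single_of_mem y (Finset.mem_univ _)]
      · simp [s, t, l, r]
      · intro j _ hj
        simp [s, t, hj]
    have hW : ∀ j : Fin N, ∑ i : Fin (N + 1),
        ((if s (Sum.inr (i, j)) = (x, y) then 1 else 0) +
          (if t (Sum.inr (i, j)) = (x, y) then 1 else 0)) *
          (χ (l (Sum.inr (i, j))) + χ (r (Sum.inr (i, j)))) =
        ((if j.castSucc = y then 1 else 0) + (if j.succ = y then 1 else 0)) *
          (χ (gcell N (x + 1) (j + 1)) + χ (gcell N x (j + 1))) := by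
      intro j
      rw [Finset.sum_eq_single_of_mem x (Finset.mem_univ _)]
      · simp [s, t, l, r]
      · intro i _ hi
        simp [s, t, hi]
    simp only [hH, hW]
    rw [e1, e2]
    have : ∀ p q u v : ZMod 2, p + q + (u + v) + (p + u + (q + v)) = 0 := by decide
    exact this _ _ _ _
  · simp only [Fintype.card_sum, Fintype.card_prod, Fintype.card_fin, Fintype.card_option]
    nlinarith
  · intro χ hχ
    have key : ∀ b, ∀ a, a ≤ N + 1 → (χ (gcell N a b) ↔ χ none) := by
      intro b a
      induction a with
      | zero => intro _; rw [gcell_none (by omega)]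
      | succ a ih =>
        intro ha
        by_cases hb : 1 ≤ b ∧ b ≤ N
        · have := hχ (Sum.inr (⟨a, by omega⟩, ⟨b - 1, by omega⟩))
          simp only [l, r, Sum.elim_inr] at this
          rw [Nat.sub_add_cancel hb.1] at this
          rw [this, ih (by omega)]
        · rw [gcell_none (by tauto)]
    have key' : ∀ φ, χ φ ↔ χ none := by
      rintro (_ | ⟨i, j⟩)
      · rfl
      · rw [← gcell_some, key _ _ (by omega)]
    intro φ φ' h
    rw [key'] at h ⊢
    exact h
  · intro p hp
    obtain ⟨q, h, hq⟩ := hpar p hp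
    obtain ⟨e, he⟩ := hadj p q h
    exact ⟨e, q, he, hq⟩

/-! ### Minors of the grid graph -/

/-- Connectedness in the grid graph, in terms of cuts. -/
def GConn {N : ℕ} (C : Set (Fin (N + 1) × Fin (N + 1))) : Prop :=
  ∀ S : Set (Fin (N + 1) × Fin (N + 1)), (C ∩ S).Nonempty → (C \ S).Nonempty →
    ∃ p ∈ C ∩ S, ∃ q ∈ C \ S, GAdj p q

theorem iff_of_steps (f : ℕ → Prop) {x y : ℕ}
    (h : ∀ k, min x y ≤ k → k + 1 ≤ max x y → (f k ↔ f (k + 1))) : f x ↔ f y := by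
  have key : ∀ m n, m ≤ n → (∀ k, m ≤ k → k + 1 ≤ n → (f k ↔ f (k + 1))) → (f m ↔ f n) := by
    intro m n hmn
    induction n, hmn using Nat.le_induction with
    | base => intro _; rfl
    | succ n hn ih =>
      intro h
      rw [ih (fun k h1 h2 => h k h1 (by omega))]
      exact h n hn le_rfl
  rcases le_total x y with hxy | hxy
  · exact key x y hxy (fun k h1 h2 => h k (by omega) (by omega))
  · exact (key y x hxy (fun k h1 h2 => h k (by omega) (by omega))).symm

/-- A predicate that is constant across grid edges of a box is constant on the box. -/
theorem box_const {N : ℕ} (B T : Fin (N + 1) × Fin (N + 1) → Prop)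
    (p q : Fin (N + 1) × Fin (N + 1))
    (hB : ∀ r : Fin (N + 1) × Fin (N + 1), min p.1.val q.1.val ≤ r.1.val →
      r.1.val ≤ max p.1.val q.1.val →
      min p.2.val q.2.val ≤ r.2.val → r.2.val ≤ max p.2.val q.2.val → B r)
    (hT : ∀ r r', B r → B r' → GAdj r r' → (T r ↔ T r')) : T p ↔ T q := by
  obtain ⟨p1, p2⟩ := p
  obtain ⟨q1, q2⟩ := q
  simp only at hB
  have h1 : T (p1, p2) ↔ T (q1, p2) := by
    have := iff_of_steps (fun k => ∃ h : k < N + 1, T (⟨k, h⟩, p2)) (x := p1.val) (y := q1.val) (by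
      intro k hk hk'
      have hkN : k + 1 < N + 1 := by omega
      have e := hT (⟨k, by omega⟩, p2) (⟨k + 1, hkN⟩, p2)
        (hB _ hk (by simp only; omega) (by simp) (by simp))
        (hB _ (by simp only; omega) hk' (by simp) (by simp)) (Or.inl ⟨rfl, Or.inl rfl⟩)
      exact ⟨fun ⟨_, h⟩ => ⟨hkN, e.1 h⟩, fun ⟨_, h⟩ => ⟨by omega, e.2 h⟩⟩)
    exact ⟨fun h => (this.1 ⟨p1.2, h⟩).elim fun _ h => h,
      fun h => (this.2 ⟨q1.2, h⟩).elim fun _ h => h⟩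
  have h2 : T (q1, p2) ↔ T (q1, q2) := by
    have := iff_of_steps (fun k => ∃ h : k < N + 1, T (q1, ⟨k, h⟩)) (x := p2.val) (y := q2.val) (by
      intro k hk hk'
      have hkN : k + 1 < N + 1 := by omega
      have e := hT (q1, ⟨k, by omega⟩) (q1, ⟨k + 1, hkN⟩)
        (hB _ (by simp) (by simp) hk (by simp only; omega))
        (hB _ (by simp) (by simp) (by simp only; omega) hk') (Or.inr ⟨rfl, Or.inl rfl⟩)
      exact ⟨fun ⟨_, h⟩ => ⟨hkN, e.1 h⟩, fun ⟨_, h⟩ => ⟨by omega, e.2 h⟩⟩)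
    exact ⟨fun h => (this.1 ⟨p2.2, h⟩).elim fun _ h => h,
      fun h => (this.2 ⟨q2.2, h⟩).elim fun _ h => h⟩
  exact h1.trans h2

theorem GConn_univ {N : ℕ} : GConn (univ : Set (Fin (N + 1) × Fin (N + 1))) := by
  rintro S ⟨p, -, hp⟩ ⟨q, -, hq⟩
  by_contra hcon
  push Not at hcon
  refine hq ((box_const (fun _ => True) (fun r => r ∈ S) p q (fun _ _ _ _ _ => trivial) ?_).1 hp)
  intro r r' _ _ h
  by_contra h'
  by_cases hr : r ∈ S
  · have hr' : r' ∉ S := fun x => h' ⟨fun _ => x, fun _ => hr⟩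
    exact hcon r ⟨trivial, hr⟩ r' ⟨trivial, hr'⟩ h
  · have hr' : r' ∈ S := by
      by_contra x
      exact h' ⟨fun y => absurd y hr, fun y => absurd y x⟩
    exact hcon r' ⟨trivial, hr'⟩ r ⟨trivial, hr⟩ h.symm

/-- A bipartite graph represented in the grid graph by disjoint connected sets `C v` for the vertices
and disjoint connected links `L i` for the edges satisfies the edge bound. The colour classes needed
for `grid_bound` are grown from one seed in each `C v`, a point of `C v` getting only the colour `v`
and a point of `L i` only one of the colours `a i` and `b i`; a maximal colouring covers the grid. -/
theorem minor_bound {V I : Type*} [Fintype V] [Fintype I] {N : ℕ}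
    (C : V → Set (Fin (N + 1) × Fin (N + 1))) (L : I → Set (Fin (N + 1) × Fin (N + 1)))
    (a b : I → V)
    (hC : ∀ v, GConn (C v)) (hCne : ∀ v, (C v).Nonempty) (hL : ∀ i, GConn (L i))
    (hCd : ∀ u v, u ≠ v → Disjoint (C u) (C v)) (hLd : ∀ i j, i ≠ j → Disjoint (L i) (L j))
    (hLC : ∀ i v, v ≠ a i → v ≠ b i → Disjoint (L i) (C v))
    (hLa : ∀ i, (L i ∩ C (a i)).Nonempty) (hLb : ∀ i, (L i ∩ C (b i)).Nonempty)
    (hab : ∀ i j, a i ≠ b j) (inj : ∀ i j, a i = a j → b i = b j → i = j)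
    (hV : 3 ≤ Fintype.card V) : Fintype.card I + 4 ≤ 2 * Fintype.card V := by
  classical
  choose seed hsC using hCne
  have seed_inj : Function.Injective seed := by
    intro u v h
    by_contra hne
    exact Set.disjoint_left.1 (hCd u v hne) (hsC u) (h ▸ hsC v)
  have : Nonempty V := Fintype.card_pos_iff.1 (by omega)
  let Ok : Finset (Fin (N + 1) × Fin (N + 1)) → (Fin (N + 1) × Fin (N + 1) → V) →
      (Fin (N + 1) × Fin (N + 1) → ℕ) → Prop := fun D col rk =>
    (∀ v, seed v ∈ D ∧ col (seed v) = v) ∧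
    (∀ p ∈ D, p ≠ seed (col p) → ∃ q ∈ D, GAdj p q ∧ col q = col p ∧ rk q < rk p) ∧
    (∀ p ∈ D, ∀ v, p ∈ C v → col p = v) ∧
    (∀ p ∈ D, ∀ i, p ∈ L i → col p = a i ∨ col p = b i)
  have step : ∀ D col rk, Ok D col rk → ∀ p q, p ∉ D → q ∈ D → GAdj q p →
      (∀ v, p ∈ C v → col q = v) → (∀ i, p ∈ L i → col q = a i ∨ col q = b i) →
      ∃ col rk, Ok (insert p D) col rk := by
    rintro D col rk ⟨h1, h2, h3, h4⟩ p q hp hq hadj hv hi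
    have hne : ∀ x ∈ D, x ≠ p := fun x hx h => hp (h ▸ hx)
    refine ⟨Function.update col p (col q), Function.update rk p (rk q + 1), ?_, ?_, ?_, ?_⟩
    · intro v
      refine ⟨Finset.mem_insert_of_mem (h1 v).1, ?_⟩
      rw [Function.update_of_ne (hne _ (h1 v).1), (h1 v).2]
    · intro x hx hxs
      rcases Finset.mem_insert.1 hx with rfl | hx
      · refine ⟨q, Finset.mem_insert_of_mem hq, hadj.symm, ?_, ?_⟩
        · rw [Function.update_of_ne (hne _ hq), Function.update_self]
        · rw [Function.update_of_ne (hne _ hq), Function.update_self]; omega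
      · rw [Function.update_of_ne (hne _ hx)] at hxs ⊢
        obtain ⟨y, hy, h5, h6, h7⟩ := h2 x hx hxs
        refine ⟨y, Finset.mem_insert_of_mem hy, h5, ?_, ?_⟩
        · rw [Function.update_of_ne (hne _ hy), h6]
        · rw [Function.update_of_ne (hne _ hy), Function.update_of_ne (hne _ hx)]; exact h7
    · intro x hx v hxv
      rcases Finset.mem_insert.1 hx with rfl | hx
      · rw [Function.update_self]; exact hv v hxv
      · rw [Function.update_of_ne (hne _ hx)]; exact h3 x hx v hxv
    · intro x hx i hxi
      rcases Finset.mem_insert.1 hx with rfl | hx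
      · rw [Function.update_self]; exact hi i hxi
      · rw [Function.update_of_ne (hne _ hx)]; exact h4 x hx i hxi
  obtain ⟨D, hD, hmax⟩ := Finset.exists_max_image
    (Finset.univ.filter (fun D => ∃ col rk, Ok D col rk)) Finset.card (by
      refine ⟨Finset.univ.image seed, ?_⟩
      simp only [Finset.mem_filter, Finset.mem_univ, true_and]
      refine ⟨Function.invFun seed, fun _ => 0, ?_, ?_, ?_, ?_⟩
      · exact fun v => ⟨by simp, Function.leftInverse_invFun seed_inj v⟩
      · intro p hp hne
        simp only [Finset.mem_image, Finset.mem_univ, true_and] at hp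
        obtain ⟨v, rfl⟩ := hp
        rw [Function.leftInverse_invFun seed_inj v] at hne
        exact absurd rfl hne
      · intro p hp v hv
        simp only [Finset.mem_image, Finset.mem_univ, true_and] at hp
        obtain ⟨u, rfl⟩ := hp
        rw [Function.leftInverse_invFun seed_inj u]
        by_contra hne
        exact Set.disjoint_left.1 (hCd u v hne) (hsC u) hv
      · intro p hp i hi
        simp only [Finset.mem_image, Finset.mem_univ, true_and] at hp
        obtain ⟨u, rfl⟩ := hp
        rw [Function.leftInverse_invFun seed_inj u]
        by_contra hne
        push Not at hne
        exact Set.disjoint_left.1 (hLC i u hne.1 hne.2) hi (hsC u))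
  simp only [Finset.mem_filter, Finset.mem_univ, true_and] at hD hmax
  obtain ⟨col, rk, hOk⟩ := hD
  have noext : ∀ p q, p ∉ D → q ∈ D → GAdj q p →
      (∀ v, p ∈ C v → col q = v) → (∀ i, p ∈ L i → col q = a i ∨ col q = b i) → False := by
    intro p q hp hq hadj hv hi
    have := hmax _ (step D col rk hOk p q hp hq hadj hv hi)
    rw [Finset.card_insert_of_notMem hp] at this
    omega
  obtain ⟨h1, h2, h3, h4⟩ := hOk
  have hCD : ∀ v, ∀ p ∈ C v, p ∈ D := by
    intro v p hp
    by_contra hpD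
    obtain ⟨q, hq, p', hp', hadj⟩ := hC v (D : Set _) ⟨seed v, hsC v, (h1 v).1⟩ ⟨p, hp, hpD⟩
    refine noext p' q hp'.2 hq.2 hadj ?_ ?_
    · intro u hu
      rw [h3 q hq.2 v hq.1]
      by_contra hne
      exact Set.disjoint_left.1 (hCd v u hne) hp'.1 hu
    · intro i hi
      rw [h3 q hq.2 v hq.1]
      by_contra hne
      push Not at hne
      exact Set.disjoint_left.1 (hLC i v hne.1 hne.2) hi hp'.1
  have hLD : ∀ i, ∀ p ∈ L i, p ∈ D := by
    intro i p hp
    by_contra hpD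
    obtain ⟨q, hq, p', hp', hadj⟩ := hL i (D : Set _)
      ((hLa i).mono fun x hx => ⟨hx.1, hCD _ x hx.2⟩) ⟨p, hp, hpD⟩
    refine noext p' q hp'.2 hq.2 hadj (fun u hu => absurd (hCD u p' hu) hp'.2) ?_
    intro j hj
    have : i = j := by
      by_contra hne
      exact Set.disjoint_left.1 (hLd i j hne) hp'.1 hj
    rw [← this]
    exact h4 q hq.2 i hq.1
  have hall : ∀ p, p ∈ D := by
    intro p
    by_contra hpD
    obtain ⟨q, hq, p', hp', hadj⟩ := GConn_univ (D : Set _)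
      ⟨seed (Classical.arbitrary V), trivial, (h1 _).1⟩ ⟨p, trivial, hpD⟩
    exact noext p' q hp'.2 hq.2 hadj (fun u hu => absurd (hCD u p' hu) hp'.2)
      (fun i hi => absurd (hLD i p' hi) hp'.2)
  refine grid_bound N col rk seed (fun v => (h1 v).2) ?_ a b ?_ hab inj hV
  · intro p hp
    obtain ⟨q, -, h⟩ := h2 p (hall p) hp
    exact ⟨q, h⟩
  · intro i
    obtain ⟨x, hx, hx'⟩ := hLa i
    obtain ⟨y, hy, hy'⟩ := hLb i
    obtain ⟨p, hp, q, hq, hadj⟩ := hL i {p | col p = a i} ⟨x, hx, h3 x (hall x) _ hx'⟩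
      ⟨y, hy, fun h => hab i i (h.symm.trans (h3 y (hall y) _ hy'))⟩
    exact ⟨p, q, hadj, hp.2, (h4 q (hall q) i hq.1).resolve_left hq.2⟩

/-! ### Disjoint connected sets in the plane -/

/-- The points of the grid of mesh `2 * R / N` in the square `[-R, R]²`. -/
noncomputable def gpt (N : ℕ) (R : ℝ) (p : Fin (N + 1) × Fin (N + 1)) : ℝ × ℝ :=
  (-R + p.1.val * (2 * R / N), -R + p.2.val * (2 * R / N))

theorem near1 {N : ℕ} (hN : 1 ≤ N) {R : ℝ} (hR : 0 < R) {x : ℝ} (hx : |x| ≤ R) :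
    ∃ i : Fin (N + 1), |-R + i.val * (2 * R / N) - x| ≤ (2 * R / N) / 2 := by
  have hNp : (0 : ℝ) < N := by exact_mod_cast hN
  have hh : 0 < 2 * R / N := by positivity
  set h := 2 * R / N with hhdef
  have hhN : h * N = 2 * R := by rw [hhdef]; field_simp
  rw [abs_le] at hx
  have hy0 : 0 ≤ (x + R) / h := by apply div_nonneg <;> linarith
  have hyN : (x + R) / h ≤ N := by rw [div_le_iff₀ hh]; linarith
  set y := (x + R) / h with hy
  have hyh : y * h = x + R := by rw [hy]; field_simp
  have f1 := Nat.floor_le (show 0 ≤ y + 1 / 2 by linarith)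
  have f2 := Nat.lt_floor_add_one (y + 1 / 2)
  refine ⟨⟨⌊y + 1 / 2⌋₊, ?_⟩, ?_⟩
  · have : (⌊y + 1 / 2⌋₊ : ℝ) < (N + 1 : ℕ) := by push_cast; linarith
    exact_mod_cast this
  · simp only
    have e : -R + ⌊y + 1 / 2⌋₊ * h - x = (⌊y + 1 / 2⌋₊ - y) * h := by linarith [sub_mul (⌊y + 1 / 2⌋₊ : ℝ) y h]
    rw [e, abs_mul, abs_of_pos hh]
    have : |(⌊y + 1 / 2⌋₊ : ℝ) - y| ≤ 1 / 2 := by rw [abs_le]; constructor <;> linarith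
    nlinarith

theorem near2 {N : ℕ} (hN : 1 ≤ N) {R : ℝ} (hR : 0 < R) {x : ℝ × ℝ} (hx : |x.1| ≤ R ∧ |x.2| ≤ R) :
    ∃ p, dist (gpt N R p) x ≤ (2 * R / N) / 2 := by
  obtain ⟨i, hi⟩ := near1 hN hR hx.1
  obtain ⟨j, hj⟩ := near1 hN hR hx.2
  exact ⟨(i, j), by rw [Prod.dist_eq]; exact max_le hi hj⟩

/-- The discretization of a plane set: the grid points at distance at most the mesh. -/
def disc (N : ℕ) (R : ℝ) (C : Set (ℝ × ℝ)) : Set (Fin (N + 1) × Fin (N + 1)) :=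
  {p | ∃ c ∈ C, dist (gpt N R p) c ≤ 2 * R / N}

theorem between_aux {R h c : ℝ} (hh : 0 < h) {i j k : ℕ} (h1 : min i j ≤ k) (h2 : k ≤ max i j)
    (hi : |-R + i * h - c| ≤ h) (hj : |-R + j * h - c| ≤ h) : |-R + k * h - c| ≤ h := by
  rw [abs_le] at *
  rcases le_total i j with hij | hij
  · have a1 : (i : ℝ) ≤ k := by exact_mod_cast (by omega : i ≤ k)
    have a2 : (k : ℝ) ≤ j := by exact_mod_cast (by omega : k ≤ j)
    constructor <;> nlinarith
  · have a1 : (j : ℝ) ≤ k := by exact_mod_cast (by omega : j ≤ k)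
    have a2 : (k : ℝ) ≤ i := by exact_mod_cast (by omega : k ≤ i)
    constructor <;> nlinarith

/-- Discretizations of connected sets are connected: the grid points close to one point of `C` form
a box, and nearby points of `C` have boxes in common. -/
theorem GConn_disc {N : ℕ} (hN : 1 ≤ N) {R : ℝ} (hR : 0 < R) {C : Set (ℝ × ℝ)}
    (hC : IsPreconnected C) (hCR : ∀ x ∈ C, |x.1| ≤ R ∧ |x.2| ≤ R) : GConn (disc N R C) := by
  have hNp : (0 : ℝ) < N := by exact_mod_cast hN
  have hh : 0 < 2 * R / N := by positivity
  intro S hS hS'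
  by_contra hcon
  push Not at hcon
  have hstep : ∀ r r', r ∈ disc N R C → r' ∈ disc N R C → GAdj r r' → (r ∈ S ↔ r' ∈ S) := by
    intro r r' hr hr' h
    by_contra h'
    by_cases hrS : r ∈ S
    · exact hcon r ⟨hr, hrS⟩ r' ⟨hr', fun x => h' ⟨fun _ => x, fun _ => hrS⟩⟩ h
    · by_cases hrS' : r' ∈ S
      · exact hcon r' ⟨hr', hrS'⟩ r ⟨hr, hrS⟩ h.symm
      · exact h' ⟨fun y => absurd y hrS, fun y => absurd y hrS'⟩
  have hblock : ∀ c ∈ C, ∀ p q, dist (gpt N R p) c ≤ 2 * R / N → dist (gpt N R q) c ≤ 2 * R / N →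
      (p ∈ S ↔ q ∈ S) := by
    intro c hc p q hp hq
    refine box_const (fun r => dist (gpt N R r) c ≤ 2 * R / N) (fun r => r ∈ S) p q ?_ ?_
    · intro r h1 h2 h3 h4
      rw [Prod.dist_eq, max_le_iff] at hp hq ⊢
      exact ⟨between_aux hh h1 h2 hp.1 hq.1, between_aux hh h3 h4 hp.2 hq.2⟩
    · intro r r' hr hr' h
      exact hstep r r' ⟨c, hc, hr⟩ ⟨c, hc, hr'⟩ h
  let U : (Fin (N + 1) × Fin (N + 1) → Prop) → Set (ℝ × ℝ) := fun Q =>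
    ⋃ c ∈ {c ∈ C | ∃ p, dist (gpt N R p) c ≤ 2 * R / N ∧ Q p}, Metric.ball c ((2 * R / N) / 2)
  have hUo : ∀ Q, IsOpen (U Q) := fun Q =>
    isOpen_biUnion fun c _ => Metric.isOpen_ball
  have hmem : ∀ Q c, c ∈ C → (∃ p, dist (gpt N R p) c ≤ 2 * R / N ∧ Q p) → c ∈ U Q := by
    intro Q c hc hp
    exact mem_biUnion (show c ∈ {c ∈ C | ∃ p, dist (gpt N R p) c ≤ 2 * R / N ∧ Q p} from ⟨hc, hp⟩)
      (Metric.mem_ball_self (by positivity))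
  obtain ⟨p, ⟨c, hc, hpc⟩, hpS⟩ := hS
  obtain ⟨q, ⟨d, hd, hqd⟩, hqS⟩ := hS'
  obtain ⟨x, hx, hx1, hx2⟩ := hC (U (· ∈ S)) (U (· ∉ S)) (hUo _) (hUo _) (by
      intro x hx
      obtain ⟨r, hr⟩ := near2 hN hR (hCR x hx)
      by_cases hrS : r ∈ S
      · exact Or.inl (hmem _ x hx ⟨r, by linarith, hrS⟩)
      · exact Or.inr (hmem _ x hx ⟨r, by linarith, hrS⟩))
    ⟨c, hc, hmem _ c hc ⟨p, hpc, hpS⟩⟩ ⟨d, hd, hmem _ d hd ⟨q, hqd, hqS⟩⟩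
  obtain ⟨r, hr⟩ := near2 hN hR (hCR x hx)
  simp only [U, mem_iUnion, exists_prop, Metric.mem_ball, mem_ofPred_eq] at hx1 hx2
  obtain ⟨c1, ⟨hc1, p1, hp1, hp1S⟩, hxc1⟩ := hx1
  obtain ⟨c2, ⟨hc2, p2, hp2, hp2S⟩, hxc2⟩ := hx2
  have t1 := dist_triangle (gpt N R r) x c1
  have t2 := dist_triangle (gpt N R r) x c2
  have e1 := hblock c1 hc1 p1 r hp1 (by linarith)
  have e2 := hblock c2 hc2 p2 r hp2 (by linarith)
  exact hp2S (e2.2 (e1.1 hp1S))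

/-- Disjoint compact sets have disjoint discretizations once the mesh `h` is small enough. -/
theorem eventually_sep {A B : Set (ℝ × ℝ)} (hA : IsCompact A) (hB : IsCompact B)
    (hAB : Disjoint A B) :
    ∀ᶠ h : ℝ in nhdsWithin 0 (Ioi 0), ∀ x ∈ A, ∀ y ∈ B, 2 * h < dist x y := by
  rcases (A ×ˢ B).eq_empty_or_nonempty with he | hne
  · refine Filter.Eventually.of_forall fun h x hx y hy => ?_
    have : (x, y) ∈ A ×ˢ B := ⟨hx, hy⟩
    rw [he] at this
    exact absurd this (notMem_empty _)
  · obtain ⟨⟨x0, y0⟩, h0, hmin⟩ := (hA.prod hB).exists_isMinOn hne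
      (f := fun z : (ℝ × ℝ) × (ℝ × ℝ) => dist z.1 z.2) (by fun_prop)
    have hpos : 0 < dist x0 y0 := dist_pos.2 fun h =>
      disjoint_left.1 hAB h0.1 (h ▸ h0.2)
    have : ∀ᶠ h : ℝ in nhdsWithin 0 (Ioi 0), h < dist x0 y0 / 2 :=
      (eventually_lt_nhds (by linarith)).filter_mono nhdsWithin_le_nhds
    filter_upwards [this] with h hlt x hx y hy
    have := hmin (show (x, y) ∈ A ×ˢ B from ⟨hx, hy⟩)
    simp only [mem_ofPred_eq] at this
    linarith

/-- A simple bipartite graph whose vertices are represented by disjoint connected compact sets in the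
plane, and whose edges by disjoint connected compact sets meeting only the sets of their two ends,
has at most `2 |V| - 4` edges. -/
theorem planar_bound {V I : Type*} [Fintype V] [Fintype I]
    (C : V → Set (ℝ × ℝ)) (L : I → Set (ℝ × ℝ)) (a b : I → V)
    (hCc : ∀ v, IsCompact (C v)) (hC : ∀ v, IsConnected (C v))
    (hLc : ∀ i, IsCompact (L i)) (hL : ∀ i, IsPreconnected (L i))
    (hCd : ∀ u v, u ≠ v → Disjoint (C u) (C v)) (hLd : ∀ i j, i ≠ j → Disjoint (L i) (L j))
    (hLC : ∀ i v, v ≠ a i → v ≠ b i → Disjoint (L i) (C v))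
    (hLa : ∀ i, (L i ∩ C (a i)).Nonempty) (hLb : ∀ i, (L i ∩ C (b i)).Nonempty)
    (hab : ∀ i j, a i ≠ b j) (inj : ∀ i j, a i = a j → b i = b j → i = j)
    (hV : 3 ≤ Fintype.card V) : Fintype.card I + 4 ≤ 2 * Fintype.card V := by
  classical
  -- a square containing all the sets
  obtain ⟨R0, hR0⟩ : ∃ R0, ((⋃ v, C v) ∪ ⋃ i, L i) ⊆ Metric.closedBall 0 R0 :=
    ((isCompact_iUnion hCc).union (isCompact_iUnion hLc)).isBounded.subset_closedBall 0
  set R : ℝ := max R0 1 with hRdef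
  have hR : 0 < R := lt_of_lt_of_le one_pos (le_max_right _ _)
  have hbox : ∀ x ∈ ((⋃ v, C v) ∪ ⋃ i, L i), |x.1| ≤ R ∧ |x.2| ≤ R := by
    intro x hx
    have h1 := hR0 hx
    rw [Metric.mem_closedBall, dist_zero_right, Prod.norm_def, max_le_iff] at h1
    exact ⟨h1.1.trans (le_max_left _ _), h1.2.trans (le_max_left _ _)⟩
  have hCR : ∀ v, ∀ x ∈ C v, |x.1| ≤ R ∧ |x.2| ≤ R := fun v x hx =>
    hbox x (Or.inl (mem_iUnion.2 ⟨v, hx⟩))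
  have hLR : ∀ i, ∀ x ∈ L i, |x.1| ≤ R ∧ |x.2| ≤ R := fun i x hx =>
    hbox x (Or.inr (mem_iUnion.2 ⟨i, hx⟩))
  -- a mesh that separates disjoint sets
  have e1 : ∀ᶠ h : ℝ in nhdsWithin 0 (Ioi 0), ∀ u v, u ≠ v →
      ∀ x ∈ C u, ∀ y ∈ C v, 2 * h < dist x y := by
    refine Filter.eventually_all.2 fun u => Filter.eventually_all.2 fun v => ?_
    by_cases huv : u = v
    · exact Filter.Eventually.of_forall fun h hne => absurd huv hne
    · filter_upwards [eventually_sep (hCc u) (hCc v) (hCd u v huv)] with h hh _ using hh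
  have e2 : ∀ᶠ h : ℝ in nhdsWithin 0 (Ioi 0), ∀ i j, i ≠ j →
      ∀ x ∈ L i, ∀ y ∈ L j, 2 * h < dist x y := by
    refine Filter.eventually_all.2 fun u => Filter.eventually_all.2 fun v => ?_
    by_cases huv : u = v
    · exact Filter.Eventually.of_forall fun h hne => absurd huv hne
    · filter_upwards [eventually_sep (hLc u) (hLc v) (hLd u v huv)] with h hh _ using hh
  have e3 : ∀ᶠ h : ℝ in nhdsWithin 0 (Ioi 0), ∀ i v, v ≠ a i → v ≠ b i →
      ∀ x ∈ L i, ∀ y ∈ C v, 2 * h < dist x y := by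
    refine Filter.eventually_all.2 fun i => Filter.eventually_all.2 fun v => ?_
    by_cases h1 : v = a i
    · exact Filter.Eventually.of_forall fun h hne => absurd h1 hne
    by_cases h2 : v = b i
    · exact Filter.Eventually.of_forall fun h _ hne => absurd h2 hne
    · filter_upwards [eventually_sep (hLc i) (hCc v) (hLC i v h1 h2)] with h hh _ _ using hh
  have hlim : Filter.Tendsto (fun n : ℕ => 2 * R / n) Filter.atTop (nhdsWithin 0 (Ioi 0)) := by
    refine tendsto_nhdsWithin_iff.2 ⟨tendsto_const_div_atTop_nhds_zero_nat (2 * R), ?_⟩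
    filter_upwards [Filter.eventually_ge_atTop 1] with n hn
    have : (0 : ℝ) < n := by exact_mod_cast hn
    exact mem_Ioi.2 (by positivity)
  obtain ⟨N, hN, f1, f2, f3⟩ := ((Filter.eventually_ge_atTop 1).and
    ((hlim.eventually e1).and ((hlim.eventually e2).and (hlim.eventually e3)))).exists
  have hsep : ∀ A B : Set (ℝ × ℝ), (∀ x ∈ A, ∀ y ∈ B, 2 * (2 * R / N) < dist x y) →
      Disjoint (disc N R A) (disc N R B) := by
    intro A B h
    rw [disjoint_left]
    rintro p ⟨x, hx, hpx⟩ ⟨y, hy, hpy⟩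
    have := h x hx y hy
    have t := dist_triangle_left x y (gpt N R p)
    linarith
  have hnear : ∀ x : ℝ × ℝ, (|x.1| ≤ R ∧ |x.2| ≤ R) → ∃ p, dist (gpt N R p) x ≤ 2 * R / N := by
    intro x hx
    obtain ⟨p, hp⟩ := near2 hN hR hx
    have : (0 : ℝ) ≤ 2 * R / N := by positivity
    exact ⟨p, by linarith⟩
  refine minor_bound (N := N) (fun v => disc N R (C v)) (fun i => disc N R (L i)) a b
    (fun v => GConn_disc hN hR (hC v).isPreconnected (hCR v)) ?_
    (fun i => GConn_disc hN hR (hL i) (hLR i))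
    (fun u v h => hsep _ _ (f1 u v h)) (fun u v h => hsep _ _ (f2 u v h))
    (fun i v h h' => hsep _ _ (f3 i v h h')) ?_ ?_ hab inj hV
  · intro v
    obtain ⟨x, hx⟩ := (hC v).nonempty
    obtain ⟨p, hp⟩ := hnear x (hCR v x hx)
    exact ⟨p, x, hx, hp⟩
  · intro i
    obtain ⟨x, hx, hx'⟩ := hLa i
    obtain ⟨p, hp⟩ := hnear x (hLR i x hx)
    exact ⟨p, ⟨x, hx, hp⟩, ⟨x, hx', hp⟩⟩
  · intro i
    obtain ⟨x, hx, hx'⟩ := hLb i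
    obtain ⟨p, hp⟩ := hnear x (hLR i x hx)
    exact ⟨p, ⟨x, hx, hp⟩, ⟨x, hx', hp⟩⟩

/-! ### Drawings of bipartite graphs -/

/-- A drawing of a bipartite graph with edge set `E`, whose edge curves are continuous on the whole
line and run from the endpoint `α e` in the first class to the endpoint `β e` in the second one. -/
structure BDrawing (V E : Type*) where
  pos : V → ℝ × ℝ
  γ : E → ℝ → ℝ × ℝ
  α : E → V
  β : E → V
  pos_inj : Function.Injective pos
  cont : ∀ e, Continuous (γ e)
  inj : ∀ e, InjOn (γ e) (Icc 0 1)
  zero : ∀ e, γ e 0 = pos (α e)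
  one : ∀ e, γ e 1 = pos (β e)
  interior : ∀ e, ∀ t ∈ Ioo (0 : ℝ) 1, ∀ v, γ e t ≠ pos v
  finite_meet : ∀ e f, e ≠ f → (γ e '' Icc 0 1 ∩ γ f '' Icc 0 1).Finite
  no_triple : ∀ p : ℝ × ℝ, ∀ e f g, e ≠ f → e ≠ g → f ≠ g →
      p ∈ γ e '' Ioo 0 1 → p ∈ γ f '' Ioo 0 1 → p ∈ γ g '' Ioo 0 1 → False
  ab : ∀ e f, α e ≠ β f
  ab_inj : ∀ e f, α e = α f → β e = β f → e = f
  one_cross : ∀ e f g, (e ≠ f ∧ ∃ p : ℝ × ℝ, p ∈ γ e '' Ioo 0 1 ∧ p ∈ γ f '' Ioo 0 1) →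
    (e ≠ g ∧ ∃ p : ℝ × ℝ, p ∈ γ e '' Ioo 0 1 ∧ p ∈ γ g '' Ioo 0 1) → f = g

namespace BDrawing

variable {V E : Type*} (D : BDrawing V E)

/-- The crossing relation. -/
def X (e f : E) : Prop := e ≠ f ∧ ∃ p : ℝ × ℝ, p ∈ D.γ e '' Ioo 0 1 ∧ p ∈ D.γ f '' Ioo 0 1

theorem X_symm {e f : E} (h : D.X e f) : D.X f e := ⟨h.1.symm, h.2.imp fun _ h => ⟨h.2, h.1⟩⟩

theorem X_unique {e f g : E} (h : D.X e f) (hg : D.X e g) : f = g := D.one_cross e f g h hg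

/-- The passages of edges through crossings: pairs of an edge and a time at which it meets the
interior of another edge. -/
def pass : Set (E × ℝ) :=
  {k | k.2 ∈ Ioo (0 : ℝ) 1 ∧ ∃ f, f ≠ k.1 ∧ D.γ k.1 k.2 ∈ D.γ f '' Ioo 0 1}

theorem pass_finite [Finite E] : D.pass.Finite := by
  have h1 : ∀ e f, e ≠ f → {t ∈ Icc (0 : ℝ) 1 | D.γ e t ∈ D.γ f '' Icc 0 1}.Finite := by
    intro e f h
    refine Set.Finite.of_finite_image ((D.finite_meet e f h).subset ?_)
      ((D.inj e).mono fun t ht => ht.1)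
    rintro _ ⟨t, ht, rfl⟩
    exact ⟨⟨t, ht.1, rfl⟩, ht.2⟩
  refine (Set.finite_iUnion fun e => Set.finite_iUnion fun f => Set.finite_iUnion fun h : e ≠ f =>
    (h1 e f h).image fun t => (e, t)).subset ?_
  rintro ⟨e, t⟩ ⟨ht, f, hf, s, hs, h⟩
  exact mem_iUnion.2 ⟨e, mem_iUnion.2 ⟨f, mem_iUnion.2 ⟨hf.symm, t,
    ⟨⟨ht.1.le, ht.2.le⟩, s, ⟨hs.1.le, hs.2.le⟩, h⟩, rfl⟩⟩⟩

/-- The point of the plane where a passage takes place. -/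
def pt (k : D.pass) : ℝ × ℝ := D.γ k.1.1 k.1.2

theorem vert_of_end {e : E} {t : ℝ} (ht : t ∈ Icc (0 : ℝ) 1) (h : t ∉ Ioo (0 : ℝ) 1) :
    (t = 0 ∧ D.γ e t = D.pos (D.α e)) ∨ (t = 1 ∧ D.γ e t = D.pos (D.β e)) := by
  rcases eq_or_lt_of_le ht.1 with h0 | h0
  · left; subst h0; exact ⟨rfl, D.zero e⟩
  · rcases eq_or_lt_of_le ht.2 with h1 | h1
    · right; subst h1; exact ⟨rfl, D.one e⟩
    · exact absurd ⟨h0, h1⟩ h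

/-- Two different edges meet only in crossings and in common ends. -/
theorem meet {e f : E} {t s : ℝ} (ht : t ∈ Icc (0 : ℝ) 1) (hs : s ∈ Icc (0 : ℝ) 1)
    (h : D.γ e t = D.γ f s) :
    (t ∈ Ioo (0 : ℝ) 1 ∧ s ∈ Ioo (0 : ℝ) 1) ∨
      (t = 0 ∧ s = 0 ∧ D.α e = D.α f) ∨ (t = 1 ∧ s = 1 ∧ D.β e = D.β f) := by
  by_cases h1 : t ∈ Ioo (0 : ℝ) 1
  · by_cases h2 : s ∈ Ioo (0 : ℝ) 1
    · exact Or.inl ⟨h1, h2⟩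
    · rcases D.vert_of_end (e := f) hs h2 with ⟨-, h3⟩ | ⟨-, h3⟩
      · exact absurd (h.trans h3) (D.interior e t h1 _)
      · exact absurd (h.trans h3) (D.interior e t h1 _)
  · right
    rcases D.vert_of_end (e := e) ht h1 with ⟨h0, h3⟩ | ⟨h0, h3⟩
    · by_cases h2 : s ∈ Ioo (0 : ℝ) 1
      · exact absurd (h.symm.trans h3) (D.interior f s h2 _)
      · rcases D.vert_of_end (e := f) hs h2 with ⟨h4, h5⟩ | ⟨h4, h5⟩
        · exact Or.inl ⟨h0, h4, D.pos_inj (h3.symm.trans (h.trans h5))⟩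
        · exact absurd (D.pos_inj (h3.symm.trans (h.trans h5))) (D.ab e f)
    · by_cases h2 : s ∈ Ioo (0 : ℝ) 1
      · exact absurd (h.symm.trans h3) (D.interior f s h2 _)
      · rcases D.vert_of_end (e := f) hs h2 with ⟨h4, h5⟩ | ⟨h4, h5⟩
        · exact absurd (D.pos_inj (h3.symm.trans (h.trans h5))).symm (D.ab f e)
        · exact Or.inr ⟨h0, h4, D.pos_inj (h3.symm.trans (h.trans h5))⟩

theorem Ioo_Icc {t : ℝ} (h : t ∈ Ioo (0 : ℝ) 1) : t ∈ Icc (0 : ℝ) 1 := ⟨h.1.le, h.2.le⟩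

/-- A point of an edge lying on the interior of another edge is a passage. -/
theorem pass_of_meet {e f : E} (hef : e ≠ f) {t s : ℝ} (ht : t ∈ Ioo (0 : ℝ) 1)
    (hs : s ∈ Ioo (0 : ℝ) 1) (h : D.γ e t = D.γ f s) : (e, t) ∈ D.pass :=
  ⟨ht, f, hef.symm, s, hs, h.symm⟩

theorem X_of_meet {e f : E} (hef : e ≠ f) {t s : ℝ} (ht : t ∈ Ioo (0 : ℝ) 1)
    (hs : s ∈ Ioo (0 : ℝ) 1) (h : D.γ e t = D.γ f s) : D.X e f :=
  ⟨hef, _, ⟨t, ht, rfl⟩, ⟨s, hs, h.symm⟩⟩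

theorem pass_Icc (k : D.pass) : k.1.2 ∈ Icc (0 : ℝ) 1 := Ioo_Icc k.2.1

/-- Passages of the same edge through the same point agree. -/
theorem pass_ext {k k' : D.pass} (h : k.1.1 = k'.1.1) (hp : D.pt k = D.pt k') : k = k' := by
  obtain ⟨⟨e, t⟩, hk⟩ := k
  obtain ⟨⟨e', t'⟩, hk'⟩ := k'
  simp only at h
  subst h
  have := D.inj e (Ioo_Icc hk.1) (Ioo_Icc hk'.1) hp
  simp only at this
  subst this
  rfl

/-- A point of an edge which is the point of a passage is itself a passage. -/
theorem pass_of_eq_pt {e : E} {t : ℝ} (ht : t ∈ Icc (0 : ℝ) 1) (k : D.pass)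
    (h : D.γ e t = D.pt k) : ∃ k' : D.pass, k'.1 = (e, t) := by
  by_cases hek : e = k.1.1
  · subst hek
    have := D.inj _ ht (D.pass_Icc k) h
    exact ⟨k, by rw [this]⟩
  · rcases D.meet ht (D.pass_Icc k) h with h1 | h1 | h1
    · exact ⟨⟨(e, t), D.pass_of_meet hek h1.1 h1.2 h⟩, rfl⟩
    · exact absurd h1.2.1 k.2.1.1.ne'
    · exact absurd h1.2.1 k.2.1.2.ne

theorem exists_mate (k : D.pass) : ∃ k' : D.pass, k'.1.1 ≠ k.1.1 ∧ D.pt k' = D.pt k := by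
  obtain ⟨ht, f, hf, s, hs, h⟩ := k.2
  exact ⟨⟨(f, s), D.pass_of_meet hf hs ht h⟩, hf, h⟩

/-- The passage of the other edge through the same crossing. -/
noncomputable def mate (k : D.pass) : D.pass := (D.exists_mate k).choose

theorem mate_ne (k : D.pass) : (D.mate k).1.1 ≠ k.1.1 := (D.exists_mate k).choose_spec.1

theorem pt_mate (k : D.pass) : D.pt (D.mate k) = D.pt k := (D.exists_mate k).choose_spec.2

theorem eq_or_mate {k k' : D.pass} (h : D.pt k' = D.pt k) : k' = k ∨ k' = D.mate k := by
  by_cases h1 : k'.1.1 = k.1.1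
  · exact Or.inl (D.pass_ext h1 h)
  · by_cases h2 : k'.1.1 = (D.mate k).1.1
    · exact Or.inr (D.pass_ext h2 (h.trans (D.pt_mate k).symm))
    · exact (D.no_triple (D.pt k) k'.1.1 k.1.1 (D.mate k).1.1 h1 h2 (D.mate_ne k).symm
        ⟨_, k'.2.1, h⟩ ⟨_, k.2.1, rfl⟩ ⟨_, (D.mate k).2.1, D.pt_mate k⟩).elim

theorem mate_mate (k : D.pass) : D.mate (D.mate k) = k := by
  rcases D.eq_or_mate (k' := k) (k := D.mate k) (D.pt_mate k).symm with h | h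
  · exact absurd (congrArg (fun x => x.1.1) h).symm (D.mate_ne k)
  · exact h.symm

theorem X_mate (k : D.pass) : D.X k.1.1 (D.mate k).1.1 :=
  D.X_of_meet (D.mate_ne k).symm k.2.1 (D.mate k).2.1 (D.pt_mate k).symm

/-- All crossings take place away from the ends of the edges. -/
theorem exists_eta [Finite E] : ∃ η : ℝ, 0 < η ∧ 12 * η < 1 ∧
    ∀ k : D.pass, 5 * η < k.1.2 ∧ k.1.2 < 1 - 5 * η := by
  have := D.pass_finite.to_subtype
  have h1 : ∀ᶠ η : ℝ in nhdsWithin 0 (Ioi 0), ∀ k : D.pass, η < k.1.2 / 5 ∧ η < (1 - k.1.2) / 5 := by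
    refine Filter.eventually_all.2 fun k => ?_
    have hk := k.2.1
    refine ((eventually_lt_nhds ?_).and (eventually_lt_nhds ?_)).filter_mono nhdsWithin_le_nhds
    · linarith [hk.1]
    · linarith [hk.2]
  have h2 : ∀ᶠ η : ℝ in nhdsWithin 0 (Ioi 0), η < 1 / 12 :=
    (eventually_lt_nhds (by norm_num)).filter_mono nhdsWithin_le_nhds
  obtain ⟨η, h1, h2, h3⟩ := (h1.and (h2.and self_mem_nhdsWithin)).exists
  refine ⟨η, h3, by linarith, fun k => ?_⟩
  have := h1 k
  constructor <;> linarith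

end BDrawing

/-! ### Chords of a circle -/

/-- Squared Euclidean distance in `ℝ × ℝ`. -/
def eq2 (m x : ℝ × ℝ) : ℝ := (x.1 - m.1) ^ 2 + (x.2 - m.2) ^ 2

theorem eq2_nonneg (m x : ℝ × ℝ) : 0 ≤ eq2 m x := by unfold eq2; positivity

theorem eq2_self (m : ℝ × ℝ) : eq2 m m = 0 := by simp [eq2]

theorem eq2_pos {m x : ℝ × ℝ} (h : x ≠ m) : 0 < eq2 m x := by
  refine lt_of_le_of_ne (eq2_nonneg m x) fun h0 => h ?_
  unfold eq2 at h0
  have h1 : x.1 - m.1 = 0 := by nlinarith [sq_nonneg (x.1 - m.1), sq_nonneg (x.2 - m.2)]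
  have h2 : x.2 - m.2 = 0 := by nlinarith [sq_nonneg (x.1 - m.1), sq_nonneg (x.2 - m.2)]
  exact Prod.ext (by linarith) (by linarith)

theorem eq2_comm (m x : ℝ × ℝ) : eq2 m x = eq2 x m := by unfold eq2; ring

theorem continuous_eq2 (m : ℝ × ℝ) : Continuous (eq2 m) := by unfold eq2; fun_prop

theorem eq2_triangle {m m' x : ℝ × ℝ} {r : ℝ} (h : eq2 m x ≤ r) (h' : eq2 m' x ≤ r) :
    eq2 m m' ≤ 4 * r := by
  unfold eq2 at *
  nlinarith [sq_nonneg ((x.1 - m.1) + (x.1 - m'.1)), sq_nonneg ((x.2 - m.2) + (x.2 - m'.2))]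

theorem eq2_convex (m p q : ℝ × ℝ) (s : ℝ) :
    eq2 m (p + s • (q - p)) = (1 - s) * eq2 m p + s * eq2 m q - s * (1 - s) * eq2 p q := by
  simp only [eq2, Prod.fst_add, Prod.snd_add, Prod.smul_fst, Prod.smul_snd, Prod.fst_sub,
    Prod.snd_sub, smul_eq_mul]
  ring

theorem mem_segment' {p q x : ℝ × ℝ} (h : x ∈ segment ℝ p q) :
    ∃ s ∈ Icc (0 : ℝ) 1, x = p + s • (q - p) := by
  rw [segment_eq_image'] at h
  obtain ⟨s, hs, h⟩ := h
  exact ⟨s, hs, h.symm⟩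

theorem chord_le {m p q x : ℝ × ℝ} {r : ℝ} (hp : eq2 m p = r) (hq : eq2 m q = r)
    (hx : x ∈ segment ℝ p q) : eq2 m x ≤ r := by
  obtain ⟨s, hs, rfl⟩ := mem_segment' hx
  rw [eq2_convex, hp, hq]
  have := mul_nonneg (mul_nonneg hs.1 (sub_nonneg.2 hs.2)) (eq2_nonneg p q)
  linarith

theorem chord_end {m p q x : ℝ × ℝ} {r : ℝ} (hp : eq2 m p = r) (hq : eq2 m q = r)
    (hx : x ∈ segment ℝ p q) (h : eq2 m x = r) : x = p ∨ x = q := by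
  obtain ⟨s, hs, rfl⟩ := mem_segment' hx
  rw [eq2_convex, hp, hq] at h
  by_cases hpq : q = p
  · left; simp [hpq]
  have h1 := eq2_pos hpq
  have h2 : s * (1 - s) = 0 := by
    have : s * (1 - s) * eq2 p q = 0 := by linarith
    exact (mul_eq_zero.1 this).resolve_right h1.ne'
  rcases mul_eq_zero.1 h2 with h3 | h3
  · left; simp [h3]
  · right
    have : s = 1 := by linarith
    simp [this]

/-- The side of the line `p1 p2` on which a point lies. -/
def sidef (p1 p2 x : ℝ × ℝ) : ℝ := (p2.1 - p1.1) * (x.2 - p1.2) - (p2.2 - p1.2) * (x.1 - p1.1)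

theorem sidef_comb (p1 p2 p q : ℝ × ℝ) (s : ℝ) :
    sidef p1 p2 (p + s • (q - p)) = (1 - s) * sidef p1 p2 p + s * sidef p1 p2 q := by
  simp only [sidef, Prod.fst_add, Prod.snd_add, Prod.smul_fst, Prod.smul_snd, Prod.fst_sub,
    Prod.snd_sub, smul_eq_mul]
  ring

theorem sidef_ne {m p1 p2 q : ℝ × ℝ} {r : ℝ} (h1 : eq2 m p1 = r) (h2 : eq2 m p2 = r)
    (hq : eq2 m q = r) (hp : p1 ≠ p2) (hq1 : q ≠ p1) (hq2 : q ≠ p2) : sidef p1 p2 q ≠ 0 := by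
  intro h
  -- `q` is a point `p1 + s • (p2 - p1)` of the line
  have hd := eq2_pos hp.symm
  set s : ℝ := ((p2.1 - p1.1) * (q.1 - p1.1) + (p2.2 - p1.2) * (q.2 - p1.2)) / eq2 p1 p2 with hs
  have hsd : s * eq2 p1 p2 = (p2.1 - p1.1) * (q.1 - p1.1) + (p2.2 - p1.2) * (q.2 - p1.2) := by
    rw [hs]; field_simp
  have hqs : q = p1 + s • (p2 - p1) := by
    unfold sidef at h
    apply Prod.ext
    · simp only [Prod.fst_add, Prod.smul_fst, Prod.fst_sub, smul_eq_mul]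
      apply mul_right_cancel₀ hd.ne'
      have : (p1.1 + s * (p2.1 - p1.1)) * eq2 p1 p2 =
        p1.1 * eq2 p1 p2 + (s * eq2 p1 p2) * (p2.1 - p1.1) := by ring
      rw [this, hsd]
      unfold eq2
      linear_combination (p2.2 - p1.2) * (-h)
    · simp only [Prod.snd_add, Prod.smul_snd, Prod.snd_sub, smul_eq_mul]
      apply mul_right_cancel₀ hd.ne'
      have : (p1.2 + s * (p2.2 - p1.2)) * eq2 p1 p2 =
        p1.2 * eq2 p1 p2 + (s * eq2 p1 p2) * (p2.2 - p1.2) := by ring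
      rw [this, hsd]
      unfold eq2
      linear_combination (p2.1 - p1.1) * h
  rw [hqs, eq2_convex, h1, h2] at hq
  have h3 : s * (1 - s) = 0 := by
    have : s * (1 - s) * eq2 p1 p2 = 0 := by linarith
    exact (mul_eq_zero.1 this).resolve_right hd.ne'
  rcases mul_eq_zero.1 h3 with h4 | h4
  · exact hq1 (by rw [hqs, h4]; simp)
  · have : s = 1 := by linarith
    exact hq2 (by rw [hqs, this]; simp)

/-- Two pairs of points of a circle can be joined by disjoint chords, possibly after exchanging
the targets. -/
theorem chords_disjoint {m p1 p2 q1 q2 : ℝ × ℝ} {r : ℝ} (h1 : eq2 m p1 = r) (h2 : eq2 m p2 = r)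
    (h3 : eq2 m q1 = r) (h4 : eq2 m q2 = r) (hp : p1 ≠ p2) (h11 : q1 ≠ p1) (h12 : q1 ≠ p2)
    (h21 : q2 ≠ p1) (h22 : q2 ≠ p2) (hno : ¬ Disjoint (segment ℝ p1 p2) (segment ℝ q1 q2)) :
    Disjoint (segment ℝ p1 q2) (segment ℝ q1 p2) := by
  have s1 := sidef_ne h1 h2 h3 hp h11 h12
  have s2 := sidef_ne h1 h2 h4 hp h21 h22
  have e1 : sidef p1 p2 p1 = 0 := by simp [sidef]
  have e2 : sidef p1 p2 p2 = 0 := by simp [sidef]; ring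
  rw [Set.not_disjoint_iff] at hno
  obtain ⟨x, hx, hx'⟩ := hno
  obtain ⟨s, hs, rfl⟩ := mem_segment' hx
  obtain ⟨t, ht, hst⟩ := mem_segment' hx'
  have e3 : (1 - t) * sidef p1 p2 q1 + t * sidef p1 p2 q2 = 0 := by
    rw [← sidef_comb, ← hst, sidef_comb, e1, e2]; ring
  rw [Set.disjoint_left]
  intro y hy hy'
  obtain ⟨u, hu, hyu⟩ := mem_segment' hy
  obtain ⟨v, hv, hyv⟩ := mem_segment' hy'
  have e4 : u * sidef p1 p2 q2 = (1 - v) * sidef p1 p2 q1 := by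
    have a1 : sidef p1 p2 y = u * sidef p1 p2 q2 := by rw [hyu, sidef_comb, e1]; ring
    have a2 : sidef p1 p2 y = (1 - v) * sidef p1 p2 q1 := by rw [hyv, sidef_comb, e2]; ring
    rw [← a1, a2]
  have hprod : sidef p1 p2 q1 * sidef p1 p2 q2 < 0 := by
    have sq1 : 0 < sidef p1 p2 q1 ^ 2 := by positivity
    have sq2 : 0 < sidef p1 p2 q2 ^ 2 := by positivity
    have b1 : (1 - t) * sidef p1 p2 q1 ^ 2 + t * (sidef p1 p2 q1 * sidef p1 p2 q2) = 0 := by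
      linear_combination sidef p1 p2 q1 * e3
    have b2 : (1 - t) * (sidef p1 p2 q1 * sidef p1 p2 q2) + t * sidef p1 p2 q2 ^ 2 = 0 := by
      linear_combination sidef p1 p2 q2 * e3
    by_contra hge
    push Not at hge
    have c1 : 0 ≤ t * (sidef p1 p2 q1 * sidef p1 p2 q2) := mul_nonneg ht.1 hge
    have c2 : 0 ≤ (1 - t) * (sidef p1 p2 q1 * sidef p1 p2 q2) :=
      mul_nonneg (sub_nonneg.2 ht.2) hge
    have c3 : 0 ≤ (1 - t) * sidef p1 p2 q1 ^ 2 := mul_nonneg (sub_nonneg.2 ht.2) sq1.le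
    have c4 : 0 ≤ t * sidef p1 p2 q2 ^ 2 := mul_nonneg ht.1 sq2.le
    have d1 : (1 - t) * sidef p1 p2 q1 ^ 2 = 0 := by linarith
    have d2 : t * sidef p1 p2 q2 ^ 2 = 0 := by linarith
    have d3 := (mul_eq_zero.1 d1).resolve_right sq1.ne'
    have d4 := (mul_eq_zero.1 d2).resolve_right sq2.ne'
    linarith
  have sq2 : 0 < sidef p1 p2 q2 ^ 2 := by positivity
  have f1 : u * sidef p1 p2 q2 ^ 2 = (1 - v) * (sidef p1 p2 q1 * sidef p1 p2 q2) := by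
    linear_combination sidef p1 p2 q2 * e4
  have f2 : 0 ≤ u * sidef p1 p2 q2 ^ 2 := mul_nonneg hu.1 sq2.le
  have f3 : (1 - v) * (sidef p1 p2 q1 * sidef p1 p2 q2) ≤ 0 :=
    mul_nonpos_of_nonneg_of_nonpos (sub_nonneg.2 hv.2) hprod.le
  have g1 : u = 0 := (mul_eq_zero.1 (le_antisymm (by linarith) f2)).resolve_right sq2.ne'
  have g2 : 1 - v = 0 :=
    (mul_eq_zero.1 (le_antisymm f3 (by linarith))).resolve_right hprod.ne
  have g3 : v = 1 := by linarith
  apply hp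
  have i1 : y = p1 := by rw [hyu, g1]; simp
  have i2 : y = p2 := by rw [hyv, g3]; simp
  rw [← i1, i2]

theorem eventually_lt_of_pos {S : Set ℝ} (hS : IsCompact S) {f : ℝ → ℝ} (hf : Continuous f)
    (hpos : ∀ t ∈ S, 0 < f t) : ∀ᶠ r : ℝ in nhdsWithin 0 (Ioi 0), ∀ t ∈ S, r < f t := by
  rcases S.eq_empty_or_nonempty with he | hne
  · exact Filter.Eventually.of_forall fun r t ht => absurd ht (by simp [he])
  · obtain ⟨t0, h0, hmin⟩ := hS.exists_isMinOn hne hf.continuousOn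
    have : ∀ᶠ r : ℝ in nhdsWithin 0 (Ioi 0), r < f t0 :=
      (eventually_lt_nhds (hpos t0 h0)).filter_mono nhdsWithin_le_nhds
    filter_upwards [this] with r hr t ht
    exact lt_of_lt_of_le hr (hmin ht)

/-! ### Resolving the crossings -/

namespace BDrawing

variable {V E : Type*}

/-- A way of resolving all crossings of a drawing: every passage `k` of an edge through a crossing
is cut out of the edge on a time window `[a k, b k]`, and the entry point of `k` is joined by a set
`Ch k` close to the crossing to the exit point of the passage `out k`, which takes place at the same
crossing. -/
structure Resolution (D : BDrawing V E) (η : ℝ) where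
  a : D.pass → ℝ
  b : D.pass → ℝ
  out : D.pass → D.pass
  Ch : D.pass → Set (ℝ × ℝ)
  lt_a : ∀ k, 5 * η < a k
  a_lt : ∀ k, a k < k.1.2
  lt_b : ∀ k, k.1.2 < b k
  b_lt : ∀ k, b k < 1 - 5 * η
  windows : ∀ k k', k ≠ k' → k.1.1 = k'.1.1 → b k < a k' ∨ b k' < a k
  out_inj : Function.Injective out
  out_edge : ∀ k, (out k).1.1 = k.1.1 ∨ D.X k.1.1 (out k).1.1
  Ch_compact : ∀ k, IsCompact (Ch k)
  Ch_conn : ∀ k, IsConnected (Ch k)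
  start_mem : ∀ k, D.γ k.1.1 (a k) ∈ Ch k
  end_mem : ∀ k, D.γ (out k).1.1 (b (out k)) ∈ Ch k
  Ch_disj : ∀ k k', k ≠ k' → Disjoint (Ch k) (Ch k')
  Ch_meet : ∀ k g t, t ∈ Icc (0 : ℝ) 1 → D.γ g t ∈ Ch k → (g = k.1.1 ∨ D.X k.1.1 g) ∧
    ∃ k', k'.1.1 = g ∧ t ∈ Icc (a k') (b k') ∧ (t = a k' → k' = k) ∧ (t = b k' → k' = out k)

/-- Around every crossing there is a small disc that meets only the two crossing edges. Near the
crossing, each of them enters the disc for the first time and leaves it for the last time at a point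
of the boundary circle, and these four points are joined by chords as in `chords_disjoint`. -/
theorem exists_resolution [Finite E] (D : BDrawing V E) {η : ℝ} (hη : 0 < η)
    (hk : ∀ k : D.pass, 5 * η < k.1.2 ∧ k.1.2 < 1 - 5 * η) : Nonempty (D.Resolution η) := by
  classical
  have := D.pass_finite.to_subtype
  -- time windows around the passages
  obtain ⟨ε, hε, hε1, hε2⟩ : ∃ ε : ℝ, 0 < ε ∧
      (∀ k : D.pass, ε < k.1.2 - 5 * η ∧ ε < 1 - 5 * η - k.1.2) ∧
      (∀ k k' : D.pass, k ≠ k' → k.1.1 = k'.1.1 → ε < |k.1.2 - k'.1.2| / 2) := by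
    have h1 : ∀ᶠ ε : ℝ in nhdsWithin 0 (Ioi 0),
        ∀ k : D.pass, ε < k.1.2 - 5 * η ∧ ε < 1 - 5 * η - k.1.2 := by
      refine Filter.eventually_all.2 fun k => ?_
      refine ((eventually_lt_nhds ?_).and (eventually_lt_nhds ?_)).filter_mono nhdsWithin_le_nhds
      · linarith [(hk k).1]
      · linarith [(hk k).2]
    have h2 : ∀ᶠ ε : ℝ in nhdsWithin 0 (Ioi 0),
        ∀ k k' : D.pass, k ≠ k' → k.1.1 = k'.1.1 → ε < |k.1.2 - k'.1.2| / 2 := by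
      refine Filter.eventually_all.2 fun k => Filter.eventually_all.2 fun k' => ?_
      by_cases hkk : k ≠ k' ∧ k.1.1 = k'.1.1
      · have hpos : 0 < |k.1.2 - k'.1.2| / 2 := by
          have : k.1.2 - k'.1.2 ≠ 0 := fun h =>
            hkk.1 (Subtype.ext (Prod.ext hkk.2 (by linarith)))
          positivity
        filter_upwards [(eventually_lt_nhds hpos).filter_mono nhdsWithin_le_nhds] with r hr _ _
          using hr
      · exact Filter.Eventually.of_forall fun r h h' => absurd ⟨h, h'⟩ hkk
    obtain ⟨ε, h1, h2, h3⟩ := (h1.and (h2.and self_mem_nhdsWithin)).exists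
    exact ⟨ε, h3, h1, h2⟩
  -- small discs around the crossings
  obtain ⟨r, hr, hr1, hr2⟩ : ∃ r : ℝ, 0 < r ∧
      (∀ k : D.pass, ∀ g, ∀ t ∈ Icc (0 : ℝ) 1, eq2 (D.pt k) (D.γ g t) ≤ r →
        ∃ k' : D.pass, k'.1.1 = g ∧ D.pt k' = D.pt k ∧ |t - k'.1.2| < ε) ∧
      (∀ k k' : D.pass, D.pt k ≠ D.pt k' → ∀ x, eq2 (D.pt k) x ≤ r → eq2 (D.pt k') x ≤ r →
        False) := by
    have h1 : ∀ᶠ r : ℝ in nhdsWithin 0 (Ioi 0), ∀ k : D.pass, ∀ g,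
        ∀ t ∈ Icc (0 : ℝ) 1 ∩ {t | ∀ k' : D.pass, k'.1.1 = g → D.pt k' = D.pt k →
          ε ≤ |t - k'.1.2|}, r < eq2 (D.pt k) (D.γ g t) := by
      refine Filter.eventually_all.2 fun k => Filter.eventually_all.2 fun g => ?_
      refine eventually_lt_of_pos (isCompact_Icc.inter_right ?_)
        ((continuous_eq2 _).comp (D.cont g)) ?_
      · simp only [ofPred_forall]
        refine isClosed_iInter fun k' => isClosed_iInter fun _ => isClosed_iInter fun _ => ?_
        exact isClosed_le continuous_const (by fun_prop)
      · rintro t ⟨ht, ht'⟩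
        refine eq2_pos fun h => ?_
        obtain ⟨k', hk'⟩ := D.pass_of_eq_pt ht k h
        have h3 := ht' k' (by rw [hk']) (by rw [← h]; unfold pt; rw [hk'])
        rw [hk'] at h3
        simp at h3
        linarith
    have h2 : ∀ᶠ r : ℝ in nhdsWithin 0 (Ioi 0), ∀ k k' : D.pass, D.pt k ≠ D.pt k' →
        r < eq2 (D.pt k) (D.pt k') / 4 := by
      refine Filter.eventually_all.2 fun k => Filter.eventually_all.2 fun k' => ?_
      by_cases hkk : D.pt k = D.pt k'
      · exact Filter.Eventually.of_forall fun r h => absurd hkk h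
      · have := eq2_pos (Ne.symm hkk)
        filter_upwards [(eventually_lt_nhds (show 0 < eq2 (D.pt k) (D.pt k') / 4 by
          linarith)).filter_mono nhdsWithin_le_nhds] with r hr _ using hr
    obtain ⟨r, h1, h2, h3⟩ := (h1.and (h2.and self_mem_nhdsWithin)).exists
    refine ⟨r, h3, ?_, ?_⟩
    · intro k g t ht hle
      by_contra hcon
      push Not at hcon
      exact absurd (h1 k g t ⟨ht, hcon⟩) (not_lt.2 hle)
    · intro k k' hne x hx hx'
      have := h2 k k' hne
      have := eq2_triangle hx hx'
      linarith
  have hwin : ∀ k : D.pass, Icc (k.1.2 - ε) (k.1.2 + ε) ⊆ Icc (0 : ℝ) 1 := by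
    intro k t ht
    have := hε1 k
    exact ⟨by linarith [ht.1], by linarith [ht.2]⟩
  -- inside a window, the times in the disc are interior to the window
  have hstrict : ∀ k : D.pass, ∀ t ∈ Icc (0 : ℝ) 1, eq2 (D.pt k) (D.γ k.1.1 t) ≤ r →
      |t - k.1.2| < ε := by
    intro k t ht h
    obtain ⟨k', h1, h2, h3⟩ := hr1 k k.1.1 t ht h
    rwa [D.pass_ext h1 h2] at h3
  have hself : ∀ k : D.pass, eq2 (D.pt k) (D.γ k.1.1 k.1.2) = 0 := fun k => eq2_self _
  have hcomp : ∀ k : D.pass,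
      IsCompact (Icc (k.1.2 - ε) (k.1.2 + ε) ∩ {t | eq2 (D.pt k) (D.γ k.1.1 t) ≤ r}) := fun k =>
    isCompact_Icc.inter_right (isClosed_le ((continuous_eq2 _).comp (D.cont _)) continuous_const)
  have hne : ∀ k : D.pass,
      (Icc (k.1.2 - ε) (k.1.2 + ε) ∩ {t | eq2 (D.pt k) (D.γ k.1.1 t) ≤ r}).Nonempty := fun k =>
    ⟨k.1.2, ⟨by linarith, by linarith⟩, (hself k).le.trans hr.le⟩
  have hA : ∀ k : D.pass, ∃ s, IsLeast (Icc (k.1.2 - ε) (k.1.2 + ε) ∩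
      {t | eq2 (D.pt k) (D.γ k.1.1 t) ≤ r}) s := fun k => (hcomp k).exists_isLeast (hne k)
  have hB : ∀ k : D.pass, ∃ s, IsGreatest (Icc (k.1.2 - ε) (k.1.2 + ε) ∩
      {t | eq2 (D.pt k) (D.γ k.1.1 t) ≤ r}) s := fun k => (hcomp k).exists_isGreatest (hne k)
  choose a ha using hA
  choose b hb using hB
  have hcont : ∀ k : D.pass, Continuous fun t => eq2 (D.pt k) (D.γ k.1.1 t) := fun k =>
    (continuous_eq2 _).comp (D.cont _)
  have hamem : ∀ k, a k ∈ Icc (0 : ℝ) 1 := fun k => hwin k (ha k).1.1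
  have hbmem : ∀ k, b k ∈ Icc (0 : ℝ) 1 := fun k => hwin k (hb k).1.1
  have hout : ∀ k : D.pass, ∀ t ∈ Icc (0 : ℝ) 1, |t - k.1.2| = ε →
      r < eq2 (D.pt k) (D.γ k.1.1 t) := by
    intro k t ht h
    by_contra hcon
    push Not at hcon
    have := hstrict k t ht hcon
    linarith
  have har : ∀ k, eq2 (D.pt k) (D.γ k.1.1 (a k)) = r := by
    intro k
    have h1 := hout k (k.1.2 - ε) (hwin k ⟨le_rfl, by linarith⟩) (by
      rw [show k.1.2 - ε - k.1.2 = -ε by ring, abs_neg, abs_of_pos hε])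
    obtain ⟨t, ht, htr⟩ := intermediate_value_Icc' (ha k).1.1.1 (hcont k).continuousOn
      (show r ∈ Icc _ _ from ⟨(ha k).1.2, h1.le⟩)
    have h2 := (ha k).2 (show t ∈ Icc (k.1.2 - ε) (k.1.2 + ε) ∩ {t | eq2 (D.pt k) (D.γ k.1.1 t) ≤ r} from
      ⟨⟨ht.1, ht.2.trans (ha k).1.1.2⟩, le_of_eq htr⟩)
    rwa [le_antisymm ht.2 h2] at htr
  have hbr : ∀ k, eq2 (D.pt k) (D.γ k.1.1 (b k)) = r := by
    intro k
    have h1 := hout k (k.1.2 + ε) (hwin k ⟨by linarith, le_rfl⟩) (by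
      rw [show k.1.2 + ε - k.1.2 = ε by ring, abs_of_pos hε])
    obtain ⟨t, ht, htr⟩ := intermediate_value_Icc (hb k).1.1.2 (hcont k).continuousOn
      (show r ∈ Icc _ _ from ⟨(hb k).1.2, h1.le⟩)
    have h2 := (hb k).2 (show t ∈ Icc (k.1.2 - ε) (k.1.2 + ε) ∩ {t | eq2 (D.pt k) (D.γ k.1.1 t) ≤ r} from
      ⟨⟨(hb k).1.1.1.trans ht.1, ht.2⟩, le_of_eq htr⟩)
    rwa [le_antisymm h2 ht.1] at htr
  have hak : ∀ k, a k < k.1.2 := by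
    intro k
    refine lt_of_le_of_ne ((ha k).2 ⟨⟨by linarith, by linarith⟩, (hself k).le.trans hr.le⟩) ?_
    intro h
    have := har k
    rw [h, hself k] at this
    linarith
  have hbk : ∀ k, k.1.2 < b k := by
    intro k
    refine lt_of_le_of_ne ((hb k).2 ⟨⟨by linarith, by linarith⟩, (hself k).le.trans hr.le⟩) ?_
    intro h
    have := hbr k
    rw [← h, hself k] at this
    linarith
  -- the entry and exit points at a crossing are different
  have hdist : ∀ k k' : D.pass, D.pt k = D.pt k' → ∀ t ∈ Icc (0 : ℝ) 1, ∀ s ∈ Icc (0 : ℝ) 1,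
      eq2 (D.pt k) (D.γ k.1.1 t) = r → D.γ k.1.1 t = D.γ k'.1.1 s → k = k' ∧ t = s := by
    intro k k' hkk t ht s hs htr h
    by_cases hee : k.1.1 = k'.1.1
    · have := D.pass_ext hee hkk
      subst this
      exact ⟨rfl, D.inj _ ht hs h⟩
    · exfalso
      rcases D.meet ht hs h with h1 | h1 | h1
      · let k2 : D.pass := ⟨(k.1.1, t), D.pass_of_meet hee h1.1 h1.2 h⟩
        have hp2 : D.pt k2 = D.γ k.1.1 t := rfl
        refine hr2 k k2 ?_ (D.pt k2) htr.le ((eq2_self _).le.trans hr.le)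
        intro heq
        rw [← hp2, ← heq, eq2_self] at htr
        linarith
      all_goals
        have h4 := hstrict k t ht htr.le
        have h5 := hε1 k
        rw [abs_lt] at h4
        linarith [h1.1]
  let p : D.pass → ℝ × ℝ := fun k => D.γ k.1.1 (a k)
  let q : D.pass → ℝ × ℝ := fun k => D.γ k.1.1 (b k)
  have hab : ∀ k, a k < b k := fun k => (hak k).trans (hbk k)
  have hmne : ∀ k, D.mate k ≠ k := fun k h => D.mate_ne k (by rw [h])
  let out : D.pass → D.pass := fun k =>
    if Disjoint (segment ℝ (p k) (q k)) (segment ℝ (p (D.mate k)) (q (D.mate k))) then k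
    else D.mate k
  have out_pt : ∀ k, D.pt (out k) = D.pt k := by
    intro k
    by_cases h : Disjoint (segment ℝ (p k) (q k)) (segment ℝ (p (D.mate k)) (q (D.mate k)))
    · simp only [out, if_pos h]
    · simp only [out, if_neg h]; exact D.pt_mate k
  have out_mate : ∀ k, out (D.mate k) = D.mate (out k) := by
    intro k
    by_cases h : Disjoint (segment ℝ (p k) (q k)) (segment ℝ (p (D.mate k)) (q (D.mate k)))
    · simp only [out, D.mate_mate, if_pos h, if_pos h.symm]
    · simp only [out, D.mate_mate, if_neg h, if_neg (fun h' => h (Disjoint.symm h'))]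
  have out_inj : Function.Injective out := by
    intro k k' h
    have h1 : D.pt k = D.pt k' := by rw [← out_pt k, h, out_pt]
    rcases D.eq_or_mate h1 with h2 | h2
    · exact h2
    · rw [h2, out_mate] at h
      exact absurd h (hmne _)
  have hpr : ∀ k k', D.pt k = D.pt k' → eq2 (D.pt k) (p k') = r := fun k k' h => by
    rw [h]; exact har k'
  have hqr : ∀ k k', D.pt k = D.pt k' → eq2 (D.pt k) (q k') = r := fun k k' h => by
    rw [h]; exact hbr k'
  let Ch : D.pass → Set (ℝ × ℝ) := fun k => segment ℝ (p k) (q (out k))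
  have Ch_le : ∀ k, ∀ x ∈ Ch k, eq2 (D.pt k) x ≤ r := fun k x hx =>
    chord_le (hpr k k rfl) (hqr k _ (out_pt k).symm) hx
  have Ch_mate : ∀ k, Disjoint (Ch k) (Ch (D.mate k)) := by
    intro k
    have hm := (D.pt_mate k).symm
    by_cases h : Disjoint (segment ℝ (p k) (q k)) (segment ℝ (p (D.mate k)) (q (D.mate k)))
    · simp only [Ch, out_mate]
      simp only [out, if_pos h]
      exact h
    · simp only [Ch, out_mate]
      simp only [out, if_neg h, D.mate_mate]
      refine chords_disjoint (hpr k k rfl) (hqr k k rfl) (hpr k _ hm) (hqr k _ hm)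
        ?_ ?_ ?_ ?_ ?_ h
      · intro h1
        exact (hab k).ne (hdist k k rfl _ (hamem k) _ (hbmem k) (har k) h1).2
      · intro h1
        exact hmne k (hdist _ k hm.symm _ (hamem _) _ (hamem k) (har _) h1).1
      · intro h1
        exact hmne k (hdist _ k hm.symm _ (hamem _) _ (hbmem k) (har _) h1).1
      · intro h1
        exact hmne k (hdist _ k hm.symm _ (hbmem _) _ (hamem k) (hbr _) h1).1
      · intro h1
        exact hmne k (hdist _ k hm.symm _ (hbmem _) _ (hbmem k) (hbr _) h1).1
  refine ⟨⟨a, b, out, Ch, ?_, hak, hbk, ?_, ?_, out_inj, ?_, ?_, ?_, ?_, ?_, ?_, ?_⟩⟩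
  · intro k
    have := (ha k).1.1.1
    linarith [(hε1 k).1]
  · intro k
    have := (hb k).1.1.2
    linarith [(hε1 k).2]
  · intro k k' hne hee
    have h1 := hε2 k k' hne hee
    have h2 := (ha k).1.1.1
    have h3 := (hb k).1.1.2
    have h4 := (ha k').1.1.1
    have h5 := (hb k').1.1.2
    rcases le_total k.1.2 k'.1.2 with h | h
    · left
      rw [abs_of_nonpos (by linarith)] at h1
      linarith
    · right
      rw [abs_of_nonneg (by linarith)] at h1
      linarith
  · intro k
    by_cases h : Disjoint (segment ℝ (p k) (q k)) (segment ℝ (p (D.mate k)) (q (D.mate k)))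
    · left; simp only [out, if_pos h]
    · right; simp only [out, if_neg h]; exact D.X_mate k
  · intro k
    simp only [Ch]
    rw [segment_eq_image']
    exact isCompact_Icc.image (by fun_prop)
  · intro k
    exact ⟨⟨_, left_mem_segment ℝ _ _⟩, (convex_segment _ _).isPreconnected⟩
  · exact fun k => left_mem_segment ℝ _ _
  · exact fun k => right_mem_segment ℝ _ _
  · intro k k' hne
    by_cases h : D.pt k = D.pt k'
    · have := (D.eq_or_mate h.symm).resolve_left hne.symm
      rw [this]
      exact Ch_mate k
    · rw [Set.disjoint_left]
      intro x hx hx'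
      exact hr2 k k' h x (Ch_le k x hx) (Ch_le k' x hx')
  · intro k g t ht hx
    obtain ⟨k', h1, h2, h3⟩ := hr1 k g t ht (Ch_le k _ hx)
    have hX : g = k.1.1 ∨ D.X k.1.1 g := by
      rcases D.eq_or_mate h2 with h | h
      · left; rw [← h1, h]
      · right; rw [← h1, h]; exact D.X_mate k
    subst h1
    have hmem : t ∈ Icc (k'.1.2 - ε) (k'.1.2 + ε) ∩ {t | eq2 (D.pt k') (D.γ k'.1.1 t) ≤ r} := by
      rw [abs_lt] at h3
      refine ⟨⟨by linarith, by linarith⟩, ?_⟩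
      have := Ch_le k _ hx
      rw [← h2] at this
      exact this
    have hend : eq2 (D.pt k') (D.γ k'.1.1 t) = r → D.γ k'.1.1 t = p k ∨ D.γ k'.1.1 t = q (out k) := by
      intro h
      rw [h2] at h
      exact chord_end (hpr k k rfl) (hqr k _ (out_pt k).symm) hx h
    refine ⟨hX, k', rfl, ⟨(ha k').2 hmem, (hb k').2 hmem⟩, ?_, ?_⟩
    · intro hta
      have htr : eq2 (D.pt k') (D.γ k'.1.1 t) = r := by rw [hta]; exact har k'
      rcases hend htr with h | h
      · exact (hdist k' k h2 t ht _ (hamem k) htr h).1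
      · have h5 := hdist k' (out k) (h2.trans (out_pt k).symm) t ht _ (hbmem _) htr h
        rw [← h5.1, hta] at h5
        exact absurd h5.2 (hab k').ne
    · intro htb
      have htr : eq2 (D.pt k') (D.γ k'.1.1 t) = r := by rw [htb]; exact hbr k'
      rcases hend htr with h | h
      · have h5 := hdist k' k h2 t ht _ (hamem k) htr h
        rw [← h5.1, htb] at h5
        exact absurd h5.2 (hab k').ne'
      · exact (hdist k' (out k) (h2.trans (out_pt k).symm) t ht _ (hbmem _) htr h).1

end BDrawing

/-! ### Following a partial injection -/

section PartialInjection

variable {S : Type*} (step : S → Option S)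

/-- `Reach step s z`: the state `z` is obtained from `s` by iterating the partial map `step`. -/
def Reach (s z : S) : Prop := Relation.ReflTransGen (fun x y => step x = some y) s z

variable {step}

theorem Reach.eq_of_start {s z : S} (hs : ∀ x, step x ≠ some s) (h : Reach step z s) : z = s := by
  rcases Relation.ReflTransGen.cases_tail h with h | ⟨c, -, h⟩
  · exact h.symm
  · exact absurd h (hs c)

theorem Reach.unique_start (inj : ∀ x y w, step x = some w → step y = some w → x = y) {s s' z : S}
    (hs : ∀ x, step x ≠ some s) (hs' : ∀ x, step x ≠ some s') (h : Reach step s z)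
    (h' : Reach step s' z) : s = s' := by
  rcases Relation.ReflTransGen.total_of_right_unique (r := Function.swap fun x y => step x = some y)
    (fun a b c hb hc => inj b c a hb hc) (Relation.reflTransGen_swap.2 h)
    (Relation.reflTransGen_swap.2 h') with h1 | h1
  · exact (Reach.eq_of_start hs (Relation.reflTransGen_swap.1 h1)).symm
  · exact Reach.eq_of_start hs' (Relation.reflTransGen_swap.1 h1)

theorem Reach.exists_end [Finite S] (inj : ∀ x y w, step x = some w → step y = some w → x = y)
    {s : S} (hs : ∀ x, step x ≠ some s) : ∃ z, Reach step s z ∧ step z = none := by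
  by_contra hcon
  push Not at hcon
  have h1 : ∀ z : {z // Reach step s z}, ∃ w : {z // Reach step s z}, step z.1 = some w.1 := by
    rintro ⟨z, hz⟩
    obtain ⟨w, hw⟩ := Option.ne_none_iff_exists'.1 (hcon z hz)
    exact ⟨⟨w, hz.tail hw⟩, hw⟩
  choose f hf using h1
  have hinj : Function.Injective f := fun x y h =>
    Subtype.ext (inj _ _ (f x).1 (hf x) (h ▸ hf y))
  obtain ⟨x, hx⟩ := Finite.surjective_of_injective hinj ⟨s, Relation.ReflTransGen.refl⟩
  exact hs x.1 (by rw [hf x, hx])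

theorem Reach.unique_end {s z z' : S} (h : Reach step s z) (h' : Reach step s z')
    (hz : step z = none) (hz' : step z' = none) : z = z' := by
  have key : ∀ {x y : S}, Reach step x y → step x = none → x = y := by
    intro x y hxy hx
    rcases Relation.ReflTransGen.cases_head hxy with h | ⟨c, h, -⟩
    · exact h
    · rw [hx] at h; cases h
  rcases Relation.ReflTransGen.total_of_right_unique (r := fun x y => step x = some y)
    (fun a b c hb hc => Option.some.inj (hb.symm.trans hc)) h h' with h1 | h1
  · exact key h1 hz
  · exact (key h1 hz').symm

end PartialInjection

namespace BDrawing

variable {V E : Type*}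

/-! ### Strands -/

/-- The planar strands obtained by resolving the crossings of a drawing: the strand `T e` begins on
the edge `e` near the vertex `α e` and ends on the edge `τ e` near the vertex `β (τ e)`; distinct
strands are disjoint. -/
structure Strands (D : BDrawing V E) (η : ℝ) where
  T : E → Set (ℝ × ℝ)
  τ : E → E
  compact : ∀ e, IsCompact (T e)
  conn : ∀ e, IsConnected (T e)
  disj : ∀ e f, e ≠ f → Disjoint (T e) (T f)
  invol : ∀ e, τ (τ e) = e
  τ_X : ∀ e, τ e = e ∨ D.X e (τ e)
  meet : ∀ e g t, t ∈ Icc (0 : ℝ) 1 → D.γ g t ∈ T e → (g = e ∨ D.X e g) ∧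
    t ∈ Icc (2 * η) (1 - 2 * η) ∧ (t ≤ 3 * η → g = e) ∧ (1 - 3 * η ≤ t → g = τ e)
  start : ∀ e, ∀ t ∈ Icc (2 * η) (4 * η), D.γ e t ∈ T e
  final : ∀ e, D.γ (τ e) (1 - 2 * η) ∈ T e

namespace Resolution

variable {D : BDrawing V E} {η : ℝ} (R : D.Resolution η)

/-- The edge carrying a piece; pieces are indexed by edges (initial pieces) and by passages (pieces
beginning at the exit of a passage). -/
def edge : E ⊕ D.pass → E
  | .inl e => e
  | .inr k => k.1.1

/-- The time at which a piece begins. -/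
def st : E ⊕ D.pass → ℝ
  | .inl _ => 2 * η
  | .inr k => R.b k

theorem exists_nextK [Finite E] (z : E ⊕ D.pass) : ∃ o : Option D.pass,
    (o = none → ∀ k : D.pass, k.1.1 = edge z → ¬ R.st z < R.a k) ∧
    ∀ k, o = some k → k.1.1 = edge z ∧ R.st z < R.a k ∧
      ∀ k' : D.pass, k'.1.1 = edge z → R.st z < R.a k' → R.a k ≤ R.a k' := by
  have := D.pass_finite.to_subtype
  by_cases h : ∃ k : D.pass, k.1.1 = edge z ∧ R.st z < R.a k
  · obtain ⟨k, hk, hm⟩ := Set.exists_min_image {k : D.pass | k.1.1 = edge z ∧ R.st z < R.a k} R.a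
      (Set.toFinite _) h
    refine ⟨some k, by simp, ?_⟩
    rintro k' ⟨⟩
    exact ⟨hk.1, hk.2, fun k' h1 h2 => hm k' ⟨h1, h2⟩⟩
  · refine ⟨none, fun _ k h1 h2 => h ⟨k, h1, h2⟩, by simp⟩

theorem a_lt_b (k : D.pass) : R.a k < R.b k := (R.a_lt k).trans (R.lt_b k)

theorem le_st (hη : 0 < η) (z : E ⊕ D.pass) : 2 * η ≤ R.st z := by
  rcases z with e | k
  · exact le_rfl
  · have := R.lt_a k
    have := R.a_lt_b k
    simp only [st]
    linarith

theorem st_lt (hη : 0 < η) (h12 : 12 * η < 1) (z : E ⊕ D.pass) : R.st z < 1 - 5 * η := by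
  rcases z with e | k
  · simp only [st]; linarith
  · exact R.b_lt k

theorem st_win (hη : 0 < η) {z : E ⊕ D.pass} {k : D.pass} (h : k.1.1 = edge z) :
    z = Sum.inr k ∨ R.b k < R.st z ∨ R.st z < R.a k := by
  rcases z with e | k'
  · right; right
    have := R.lt_a k
    simp only [st]
    linarith
  · by_cases hk : k = k'
    · left; rw [hk]
    · right
      rcases R.windows k k' hk h with h1 | h1
      · left
        exact h1.trans (R.a_lt_b k')
      · right
        exact h1

variable [Finite E]

/-- The next passage met by the edge of a piece after the beginning of the piece. -/
noncomputable def nextK (z : E ⊕ D.pass) : Option D.pass := (R.exists_nextK z).choose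

theorem nextK_none {z : E ⊕ D.pass} (h : R.nextK z = none) (k : D.pass) (hk : k.1.1 = edge z) :
    ¬ R.st z < R.a k := (R.exists_nextK z).choose_spec.1 h k hk

theorem nextK_some {z : E ⊕ D.pass} {k : D.pass} (h : R.nextK z = some k) :
    k.1.1 = edge z ∧ R.st z < R.a k ∧
      ∀ k' : D.pass, k'.1.1 = edge z → R.st z < R.a k' → R.a k ≤ R.a k' :=
  (R.exists_nextK z).choose_spec.2 k h

/-- The time at which a piece ends. -/
noncomputable def en (z : E ⊕ D.pass) : ℝ := (R.nextK z).elim (1 - 2 * η) R.a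

/-- The piece together with the chord following it. -/
noncomputable def W (z : E ⊕ D.pass) : Set (ℝ × ℝ) :=
  D.γ (edge z) '' Icc (R.st z) (R.en z) ∪ (R.nextK z).elim ∅ R.Ch

/-- The piece following a given one. -/
noncomputable def step (z : E ⊕ D.pass) : Option (E ⊕ D.pass) :=
  (R.nextK z).map fun k => Sum.inr (R.out k)

theorem en_none {z : E ⊕ D.pass} (h : R.nextK z = none) : R.en z = 1 - 2 * η := by
  simp [en, h]

theorem en_some {z : E ⊕ D.pass} {k : D.pass} (h : R.nextK z = some k) : R.en z = R.a k := by
  simp [en, h]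

theorem mem_W {z : E ⊕ D.pass} {x : ℝ × ℝ} : x ∈ R.W z ↔
    (∃ t ∈ Icc (R.st z) (R.en z), D.γ (edge z) t = x) ∨ ∃ k, R.nextK z = some k ∧ x ∈ R.Ch k := by
  unfold W
  rcases h : R.nextK z with _ | k <;> simp

theorem step_some {z w : E ⊕ D.pass} (h : R.step z = some w) :
    ∃ k, R.nextK z = some k ∧ w = Sum.inr (R.out k) := by
  unfold step at h
  obtain ⟨k, hk, rfl⟩ := Option.map_eq_some_iff.1 h
  exact ⟨k, hk, rfl⟩

theorem step_none {z : E ⊕ D.pass} (h : R.step z = none) : R.nextK z = none := by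
  unfold step at h
  exact Option.map_eq_none_iff.1 h

theorem step_of_nextK {z : E ⊕ D.pass} {k : D.pass} (h : R.nextK z = some k) :
    R.step z = some (Sum.inr (R.out k)) := by
  simp [step, h]

theorem en_le (hη : 0 < η) (z : E ⊕ D.pass) : R.en z ≤ 1 - 2 * η := by
  rcases h : R.nextK z with _ | k
  · exact (R.en_none h).le
  · rw [R.en_some h]
    have := R.b_lt k
    have := R.a_lt_b k
    linarith

theorem st_lt_en (hη : 0 < η) (h12 : 12 * η < 1) (z : E ⊕ D.pass) : R.st z < R.en z := by
  rcases h : R.nextK z with _ | k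
  · rw [R.en_none h]
    have := R.st_lt hη h12 z
    linarith
  · rw [R.en_some h]
    exact (R.nextK_some h).2.1

/-- Pieces meet the time windows only at their ends. -/
theorem win (hη : 0 < η) {z : E ⊕ D.pass} {k : D.pass} {t : ℝ} (h : k.1.1 = edge z)
    (ht : t ∈ Icc (R.st z) (R.en z)) (hk : t ∈ Icc (R.a k) (R.b k)) :
    (t = R.a k ∧ R.nextK z = some k) ∨ (t = R.b k ∧ z = Sum.inr k) := by
  rcases R.st_win hη h with h1 | h1 | h1
  · right
    refine ⟨le_antisymm hk.2 ?_, h1⟩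
    rw [h1] at ht
    exact ht.1
  · linarith [ht.1, hk.2]
  · left
    rcases h2 : R.nextK z with _ | k'
    · exact absurd h1 (R.nextK_none h2 k h)
    · have h3 := R.nextK_some h2
      have h4 := h3.2.2 k h h1
      have h5 := ht.2
      rw [R.en_some h2] at h5
      have h6 : t = R.a k := le_antisymm (h5.trans h4) hk.1
      refine ⟨h6, ?_⟩
      by_contra hne
      have hne : k' ≠ k := fun h => hne (by rw [h])
      have := R.a_lt_b k
      have := R.a_lt_b k'
      rcases R.windows k' k hne (h3.1.trans h.symm) with h7 | h7 <;> linarith [hk.1]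

theorem sep_aux (hη : 0 < η) {z z' : E ⊕ D.pass} (hs : R.st z ≤ R.st z') (h : edge z = edge z')
    (hne : z ≠ z') : R.en z < R.st z' := by
  rcases z' with e | k'
  · rcases z with e' | k
    · exact absurd (congrArg Sum.inl h) hne
    · simp only [st] at hs
      have := R.lt_a k
      have := R.a_lt_b k
      linarith
  · rcases R.st_win hη (z := z) (k := k') h.symm with h1 | h1 | h1
    · exact absurd h1 hne
    · simp only [st] at hs
      simp only [st] at h1
      linarith
    · rcases h2 : R.nextK z with _ | k
      · exact absurd h1 (R.nextK_none h2 k' h.symm)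
      · rw [R.en_some h2]
        exact ((R.nextK_some h2).2.2 k' h.symm h1).trans_lt (R.a_lt_b k')

theorem sep (hη : 0 < η) {z z' : E ⊕ D.pass} (h : edge z = edge z') (hne : z ≠ z') :
    R.en z < R.st z' ∨ R.en z' < R.st z := by
  rcases le_total (R.st z) (R.st z') with h1 | h1
  · exact Or.inl (R.sep_aux hη h1 h hne)
  · exact Or.inr (R.sep_aux hη h1 h.symm hne.symm)

theorem nextK_inj (hη : 0 < η) {z z' : E ⊕ D.pass} {k : D.pass} (h : R.nextK z = some k)
    (h' : R.nextK z' = some k) : z = z' := by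
  by_contra hne
  have h1 := R.nextK_some h
  have h2 := R.nextK_some h'
  rcases R.sep hη (h1.1.symm.trans h2.1) hne with h3 | h3
  · rw [R.en_some h] at h3; linarith [h2.2.1]
  · rw [R.en_some h'] at h3; linarith [h1.2.1]

theorem end_inj (hη : 0 < η) (h12 : 12 * η < 1) {z z' : E ⊕ D.pass} (h : R.nextK z = none)
    (h' : R.nextK z' = none) (he : edge z = edge z') : z = z' := by
  by_contra hne
  have h1 := R.st_lt hη h12 z
  have h2 := R.st_lt hη h12 z'
  rcases R.sep hη he hne with h3 | h3
  · rw [R.en_none h] at h3; linarith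
  · rw [R.en_none h'] at h3; linarith

theorem step_inj (hη : 0 < η) (x y w : E ⊕ D.pass) (h : R.step x = some w)
    (h' : R.step y = some w) : x = y := by
  obtain ⟨k, hk, rfl⟩ := R.step_some h
  obtain ⟨k', hk', h2⟩ := R.step_some h'
  have h3 : k = k' := R.out_inj (Sum.inr.inj h2)
  subst h3
  exact R.nextK_inj hη hk hk'

theorem step_inl (e : E) (x : E ⊕ D.pass) : R.step x ≠ some (Sum.inl e) := by
  intro h
  obtain ⟨k, -, h⟩ := R.step_some h
  cases h

/-- A point of an edge lying on a piece. -/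
theorem piece_meet (hη : 0 < η) {z : E ⊕ D.pass} {g : E} {t s : ℝ}
    (ht : t ∈ Icc (0 : ℝ) 1)
    (hs : s ∈ Icc (R.st z) (R.en z)) (h : D.γ g t = D.γ (edge z) s) : g = edge z ∧ t = s := by
  have h1 := R.le_st hη z
  have h2 := R.en_le hη z
  have hs' : s ∈ Icc (0 : ℝ) 1 := ⟨by linarith [hs.1], by linarith [hs.2]⟩
  by_cases hg : g = edge z
  · subst hg
    exact ⟨rfl, D.inj _ ht hs' h⟩
  · exfalso
    rcases D.meet ht hs' h with h3 | h3 | h3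
    · let k : D.pass := ⟨(edge z, s), D.pass_of_meet (Ne.symm hg) h3.2 h3.1 h.symm⟩
      have ha : R.a k < s := R.a_lt k
      have hb : s < R.b k := R.lt_b k
      rcases R.win hη (z := z) (k := k) rfl hs ⟨ha.le, hb.le⟩ with h4 | h4
      · exact ha.ne' h4.1
      · exact hb.ne h4.1
    · linarith [hs.1, h3.2.1]
    · linarith [hs.2, h3.2.1]

/-- Where an edge may meet a piece or the chord following it. -/
theorem W_meet (hη : 0 < η) {z : E ⊕ D.pass} {g : E} {t : ℝ}
    (ht : t ∈ Icc (0 : ℝ) 1)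
    (h : D.γ g t ∈ R.W z) : (g = edge z ∧ t ∈ Icc (R.st z) (R.en z)) ∨
      ((g = edge z ∨ D.X (edge z) g) ∧ t ∈ Icc (5 * η) (1 - 5 * η)) := by
  rcases R.mem_W.1 h with ⟨s, hs, h1⟩ | ⟨k, hk, h1⟩
  · obtain ⟨h2, h3⟩ := R.piece_meet hη ht hs h1.symm
    exact Or.inl ⟨h2, h3 ▸ hs⟩
  · right
    obtain ⟨h2, kk, h3, h4, -⟩ := R.Ch_meet k g t ht h1
    rw [(R.nextK_some hk).1] at h2
    exact ⟨h2, (R.lt_a kk).le.trans h4.1, h4.2.trans (R.b_lt kk).le⟩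

/-- Two pieces, each with the chord following it, meet only if one of them follows the other. -/
theorem W_disj (hη : 0 < η) {z z' : E ⊕ D.pass} {x : ℝ × ℝ}
    (hx : x ∈ R.W z) (hx' : x ∈ R.W z') :
    z = z' ∨ R.step z = some z' ∨ R.step z' = some z := by
  have key : ∀ {z z' : E ⊕ D.pass} {t : ℝ}, t ∈ Icc (R.st z) (R.en z) → ∀ k,
      R.nextK z' = some k → D.γ (edge z) t ∈ R.Ch k → z = z' ∨ R.step z' = some z := by
    intro z z' t ht k hk h
    have h1 := R.le_st hη z
    have h2 := R.en_le hη z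
    obtain ⟨-, k', h3, h4, h5, h6⟩ := R.Ch_meet k (edge z) t
      ⟨by linarith [ht.1], by linarith [ht.2]⟩ h
    rcases R.win hη h3 ht h4 with ⟨h7, h8⟩ | ⟨h7, h8⟩
    · left
      rw [h5 h7] at h8
      exact R.nextK_inj hη h8 hk
    · right
      rw [h8, h6 h7]
      exact R.step_of_nextK hk
  rcases R.mem_W.1 hx with ⟨t, ht, h1⟩ | ⟨k, hk, h1⟩
  · rcases R.mem_W.1 hx' with ⟨s, hs, h2⟩ | ⟨k', hk', h2⟩
    · left
      have h3 := R.le_st hη z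
      have h4 := R.en_le hη z
      obtain ⟨h5, h6⟩ := R.piece_meet hη ⟨by linarith [ht.1], by linarith [ht.2]⟩ hs
        (h1.trans h2.symm)
      by_contra hne
      rcases R.sep hη h5 hne with h7 | h7 <;> linarith [ht.1, ht.2, hs.1, hs.2]
    · rw [← h1] at h2
      exact (key ht k' hk' h2).imp id Or.inr
  · rcases R.mem_W.1 hx' with ⟨s, hs, h2⟩ | ⟨k', hk', h2⟩
    · rw [← h2] at h1
      exact (key hs k hk h1).elim (fun h => Or.inl h.symm) fun h => Or.inr (Or.inl h)
    · left
      by_cases hkk : k = k'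
      · subst hkk; exact R.nextK_inj hη hk hk'
      · exact absurd h2 (Set.disjoint_left.1 (R.Ch_disj k k' hkk) h1)

theorem W_compact (z : E ⊕ D.pass) : IsCompact (R.W z) := by
  refine (isCompact_Icc.image (D.cont _)).union ?_
  rcases R.nextK z with _ | k
  · exact isCompact_empty
  · exact R.Ch_compact k

theorem W_conn (hη : 0 < η) (h12 : 12 * η < 1) (z : E ⊕ D.pass) : IsConnected (R.W z) := by
  have h1 := R.st_lt_en hη h12 z
  have h2 : IsConnected (D.γ (edge z) '' Icc (R.st z) (R.en z)) :=
    (isConnected_Icc h1.le).image _ (D.cont _).continuousOn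
  unfold W
  rcases h : R.nextK z with _ | k
  · simpa using h2
  · refine h2.union ⟨D.γ (edge z) (R.a k), ⟨_, ⟨?_, ?_⟩, rfl⟩, ?_⟩ (R.Ch_conn k)
    · exact (R.nextK_some h).2.1.le
    · exact (R.en_some h).ge
    · have := R.start_mem k
      rw [(R.nextK_some h).1] at this
      exact this

theorem W_step (hη : 0 < η) (h12 : 12 * η < 1) {z w : E ⊕ D.pass} (h : R.step z = some w) :
    (R.W z ∩ R.W w).Nonempty := by
  obtain ⟨k, hk, rfl⟩ := R.step_some h
  refine ⟨_, R.mem_W.2 (Or.inr ⟨k, hk, R.end_mem k⟩), R.mem_W.2 (Or.inl ⟨R.b (R.out k), ?_, rfl⟩)⟩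
  exact ⟨le_rfl, (R.st_lt_en hη h12 (Sum.inr (R.out k))).le⟩

theorem reach_edge {e : E} {z : E ⊕ D.pass} (h : Reach R.step (Sum.inl e) z) :
    edge z = e ∨ D.X e (edge z) := by
  induction h with
  | refl => exact Or.inl rfl
  | tail _ h ih =>
    obtain ⟨k, hk, rfl⟩ := R.step_some h
    have h1 := R.out_edge k
    rw [(R.nextK_some hk).1] at h1
    change (R.out k).1.1 = e ∨ D.X e (R.out k).1.1
    rcases h1 with h1 | h1
    · rwa [h1]
    · rcases ih with h2 | h2
      · right; rwa [h2] at h1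
      · left; exact D.X_unique h1 (D.X_symm h2)

/-- The strand of `e` is the union of the pieces reached from the initial piece of `e`. The strands
are disjoint because `step` is injective, and the strand of `e` only uses `e` and the edge crossing
it. -/
theorem exists_strands (R : D.Resolution η) (hη : 0 < η) (h12 : 12 * η < 1) : Nonempty (D.Strands η) := by
  have hfin := D.pass_finite.to_subtype
  have hend : ∀ e : E, ∃ z, Reach R.step (Sum.inl e) z ∧ R.step z = none := fun e =>
    Reach.exists_end (R.step_inj hη) (R.step_inl e)
  choose ez hez hez' using hend
  have hτ : ∀ e, edge (ez e) = e ∨ D.X e (edge (ez e)) := fun e => R.reach_edge (hez e)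
  have hτinj : ∀ e f, edge (ez e) = edge (ez f) → e = f := by
    intro e f h
    have h1 := R.end_inj hη h12 (R.step_none (hez' e)) (R.step_none (hez' f)) h
    exact Sum.inl.inj (Reach.unique_start (R.step_inj hη) (R.step_inl e) (R.step_inl f) (hez e)
      (h1 ▸ hez f))
  have hmemT : ∀ e x, x ∈ (⋃ z ∈ {z | Reach R.step (Sum.inl e) z}, R.W z) ↔
      ∃ z, Reach R.step (Sum.inl e) z ∧ x ∈ R.W z := by
    intro e x
    simp
  refine ⟨{
    T := fun e => ⋃ z ∈ {z | Reach R.step (Sum.inl e) z}, R.W z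
    τ := fun e => edge (ez e)
    compact := fun e => (Set.toFinite _).isCompact_biUnion fun z _ => R.W_compact z
    conn := fun e => ?_
    disj := fun e f hef => ?_
    invol := fun e => ?_
    τ_X := hτ
    meet := ?_
    start := ?_
    final := ?_ }⟩
  · refine IsConnected.biUnion_of_reflTransGen ⟨_, Relation.ReflTransGen.refl⟩
      (fun z _ => R.W_conn hη h12 z) ?_
    have key : ∀ z, Reach R.step (Sum.inl e) z → Relation.ReflTransGen (fun i j =>
        (R.W i ∩ R.W j).Nonempty ∧ i ∈ {z | Reach R.step (Sum.inl e) z}) (Sum.inl e) z := by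
      intro z hz
      induction hz with
      | refl => exact Relation.ReflTransGen.refl
      | tail h h' ih => exact ih.tail ⟨R.W_step hη h12 h', h⟩
    have key' : ∀ z, Reach R.step (Sum.inl e) z → Relation.ReflTransGen (fun i j =>
        (R.W i ∩ R.W j).Nonempty ∧ i ∈ {z | Reach R.step (Sum.inl e) z}) z (Sum.inl e) := by
      intro z hz
      induction hz with
      | refl => exact Relation.ReflTransGen.refl
      | tail h h' ih =>
        refine Relation.ReflTransGen.head ⟨?_, h.tail h'⟩ ih
        rw [Set.inter_comm]
        exact R.W_step hη h12 h'
    intro i hi j hj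
    exact (key' i hi).trans (key j hj)
  · rw [Set.disjoint_left]
    intro x hx hx'
    obtain ⟨z, hz, h1⟩ := (hmemT e x).1 hx
    obtain ⟨z', hz', h2⟩ := (hmemT f x).1 hx'
    apply hef
    have key := fun y h h' => Sum.inl.inj (Reach.unique_start (z := y) (R.step_inj hη)
      (R.step_inl e) (R.step_inl f) h h')
    rcases R.W_disj hη h1 h2 with h3 | h3 | h3
    · exact key z hz (h3 ▸ hz')
    · exact key z' (hz.tail h3) hz'
    · exact key z hz (hz'.tail h3)
  · rcases hτ e with h | h
    · simp only [h]
    · rcases hτ (edge (ez e)) with h1 | h1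
      · exact absurd (hτinj _ _ h1).symm h.1
      · exact D.X_unique h1 (D.X_symm h)
  · intro e g t ht h
    obtain ⟨z, hz, h1⟩ := (hmemT e _).1 h
    have h3 := R.le_st hη z
    have h4 := R.en_le hη z
    rcases R.W_meet hη ht h1 with ⟨h2, h5⟩ | ⟨h2, h5⟩
    · refine ⟨h2 ▸ R.reach_edge hz, ⟨h3.trans h5.1, h5.2.trans h4⟩, fun h6 => ?_, fun h6 => ?_⟩
      · rcases z with e' | k
        · exact h2.trans (Sum.inl.inj (Reach.eq_of_start (R.step_inl e') hz)).symm
        · have := R.lt_a k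
          have := R.a_lt_b k
          have : R.b k ≤ t := h5.1
          linarith
      · rcases h7 : R.nextK z with _ | k
        · rw [h2, Reach.unique_end hz (hez e) (by simp [step, h7]) (hez' e)]
        · have := R.b_lt k
          have := R.a_lt_b k
          have := h5.2
          rw [R.en_some h7] at this
          linarith
    · refine ⟨?_, ⟨by linarith [h5.1], by linarith [h5.2]⟩, fun h6 => by linarith [h5.1],
        fun h6 => by linarith [h5.2]⟩
      rcases R.reach_edge hz with h6 | h6
      · rwa [h6] at h2
      · rcases h2 with h2 | h2
        · right; rwa [h2]
        · left; exact (D.X_unique h2 (D.X_symm h6))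
  · intro e t ht
    refine (hmemT e _).2 ⟨Sum.inl e, Relation.ReflTransGen.refl, R.mem_W.2 (Or.inl ⟨t, ⟨ht.1, ?_⟩,
      rfl⟩)⟩
    refine ht.2.trans ?_
    rcases h7 : R.nextK (Sum.inl e) with _ | k
    · rw [R.en_none h7]; linarith
    · rw [R.en_some h7]
      have := R.lt_a k
      linarith
  · intro e
    refine (hmemT e _).2 ⟨ez e, hez e, R.mem_W.2 (Or.inl ⟨_, ⟨?_, ?_⟩, rfl⟩)⟩
    · have := R.st_lt hη h12 (ez e)
      linarith
    · exact (R.en_none (R.step_none (hez' e))).ge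

end Resolution

end BDrawing

/-! ### The combinatorial model of a drawing -/

/-- The pieces into which a drawing of a bipartite graph is decomposed, with their incidences.
Around each vertex `v` there is a small star `base v`. An edge `e` consists of an arc `A e` near its
end `α e`, an arc `B e` near its end `β e` and a middle arc `M e`; `Γ e` is the whole edge. The
strand `T e` joins `A e` to `B (τ e)`, where `τ e` is `e` or the edge crossing `e` (the relation
`X`), and distinct strands are disjoint. -/
structure Model (V E : Type*) where
  α : E → V
  β : E → V
  τ : E → E
  X : E → E → Prop
  base : V → Set (ℝ × ℝ)
  A : E → Set (ℝ × ℝ)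
  B : E → Set (ℝ × ℝ)
  T : E → Set (ℝ × ℝ)
  M : E → Set (ℝ × ℝ)
  Γ : E → Set (ℝ × ℝ)
  ab : ∀ e f, α e ≠ β f
  ab_inj : ∀ e f, α e = α f → β e = β f → e = f
  X_symm : ∀ e f, X e f → X f e
  X_ne : ∀ e f, X e f → e ≠ f
  X_unique : ∀ e f g, X e f → X e g → f = g
  invol : ∀ e, τ (τ e) = e
  τ_X : ∀ e, τ e = e ∨ X e (τ e)
  base_compact : ∀ v, IsCompact (base v)
  A_compact : ∀ e, IsCompact (A e)
  B_compact : ∀ e, IsCompact (B e)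
  T_compact : ∀ e, IsCompact (T e)
  M_compact : ∀ e, IsCompact (M e)
  Γ_compact : ∀ e, IsCompact (Γ e)
  base_conn : ∀ v, IsConnected (base v)
  A_conn : ∀ e, IsConnected (A e)
  B_conn : ∀ e, IsConnected (B e)
  T_conn : ∀ e, IsConnected (T e)
  M_conn : ∀ e, IsConnected (M e)
  Γ_conn : ∀ e, IsConnected (Γ e)
  base_base : ∀ u v, u ≠ v → Disjoint (base u) (base v)
  A_base : ∀ e v, v ≠ α e → Disjoint (A e) (base v)
  B_base : ∀ e v, v ≠ β e → Disjoint (B e) (base v)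
  A_α : ∀ e, (A e ∩ base (α e)).Nonempty
  B_β : ∀ e, (B e ∩ base (β e)).Nonempty
  A_A : ∀ e f, e ≠ f → Disjoint (A e) (A f)
  B_B : ∀ e f, e ≠ f → Disjoint (B e) (B f)
  A_B : ∀ e f, Disjoint (A e) (B f)
  T_base : ∀ e v, Disjoint (T e) (base v)
  T_T : ∀ e f, e ≠ f → Disjoint (T e) (T f)
  T_A : ∀ e f, f ≠ e → Disjoint (T e) (A f)
  T_A' : ∀ e, (T e ∩ A e).Nonempty
  T_B : ∀ e f, f ≠ τ e → Disjoint (T e) (B f)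
  T_B' : ∀ e, (T e ∩ B (τ e)).Nonempty
  M_base : ∀ e v, Disjoint (M e) (base v)
  M_A : ∀ e f, Disjoint (M e) (A f)
  M_B : ∀ e f, Disjoint (M e) (B f)
  M_M : ∀ e f, e ≠ f → ¬ X e f → Disjoint (M e) (M f)
  M_M' : ∀ e f, X e f → (M e ∩ M f).Nonempty
  M_T : ∀ e f, e ≠ f → ¬ X e f → Disjoint (M e) (T f)
  M_T' : ∀ e, (M e ∩ T e).Nonempty
  Γ_α : ∀ g, (Γ g ∩ base (α g)).Nonempty
  Γ_β : ∀ g, (Γ g ∩ base (β g)).Nonempty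
  Γ_base : ∀ g v, v ≠ α g → v ≠ β g → Disjoint (Γ g) (base v)
  Γ_T : ∀ g e, e ≠ g → ¬ X e g → Disjoint (Γ g) (T e)
  Γ_M : ∀ g e, e ≠ g → ¬ X e g → Disjoint (Γ g) (M e)
  Γ_A : ∀ g e, e ≠ g → Disjoint (Γ g) (A e)
  Γ_B : ∀ g e, e ≠ g → Disjoint (Γ g) (B e)

namespace BDrawing

variable {V E : Type*} (D : BDrawing V E)

theorem arc_disj {η : ℝ} (hk : ∀ k : D.pass, 5 * η < k.1.2 ∧ k.1.2 < 1 - 5 * η) {e f : E}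
    {lo hi lo' hi' : ℝ} (h0 : 0 ≤ lo) (h0' : hi ≤ 1) (h0'' : 0 ≤ lo') (h0''' : hi' ≤ 1)
    (h1 : e = f → hi < lo' ∨ hi' < lo)
    (h2 : D.X e f → hi ≤ 5 * η ∨ 1 - 5 * η ≤ lo ∨ hi' ≤ 5 * η ∨ 1 - 5 * η ≤ lo')
    (h3 : D.α e = D.α f → 0 < lo ∨ 0 < lo') (h4 : D.β e = D.β f → hi < 1 ∨ hi' < 1) :
    Disjoint (D.γ e '' Icc lo hi) (D.γ f '' Icc lo' hi') := by
  rw [Set.disjoint_left]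
  rintro _ ⟨t, ht, rfl⟩ ⟨s, hs, h⟩
  have ht' : t ∈ Icc (0 : ℝ) 1 := ⟨h0.trans ht.1, ht.2.trans h0'⟩
  have hs' : s ∈ Icc (0 : ℝ) 1 := ⟨h0''.trans hs.1, hs.2.trans h0'''⟩
  by_cases hef : e = f
  · subst hef
    have := D.inj e ht' hs' h.symm
    subst this
    rcases h1 rfl with h5 | h5 <;> linarith [ht.1, ht.2, hs.1, hs.2]
  · rcases D.meet ht' hs' h.symm with h5 | h5 | h5
    · have k1 := hk ⟨(e, t), D.pass_of_meet hef h5.1 h5.2 h.symm⟩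
      have k2 := hk ⟨(f, s), D.pass_of_meet (Ne.symm hef) h5.2 h5.1 h⟩
      simp only at k1 k2
      rcases h2 (D.X_of_meet hef h5.1 h5.2 h.symm) with h6 | h6 | h6 | h6 <;>
        linarith [ht.1, ht.2, hs.1, hs.2]
    · rcases h3 h5.2.2 with h6 | h6 <;> linarith [ht.1, hs.1, h5.1, h5.2.1]
    · rcases h4 h5.2.2 with h6 | h6 <;> linarith [ht.2, hs.2, h5.1, h5.2.1]

theorem Strands.arc_disj {D : BDrawing V E} {η : ℝ} (S : D.Strands η) {e g : E} {lo hi : ℝ}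
    (h0 : 0 ≤ lo) (h0' : hi ≤ 1)
    (h : (g = e ∨ D.X e g) → hi < 2 * η ∨ 1 - 2 * η < lo ∨ (hi ≤ 3 * η ∧ g ≠ e) ∨
      (1 - 3 * η ≤ lo ∧ g ≠ S.τ e)) : Disjoint (S.T e) (D.γ g '' Icc lo hi) := by
  rw [Set.disjoint_right]
  rintro _ ⟨t, ht, rfl⟩ hT
  obtain ⟨h1, h2, h3, h4⟩ := S.meet e g t ⟨h0.trans ht.1, ht.2.trans h0'⟩ hT
  rcases h h1 with h5 | h5 | h5 | h5
  · linarith [ht.2, h2.1]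
  · linarith [ht.1, h2.2]
  · exact h5.2 (h3 (ht.2.trans h5.1))
  · exact h5.2 (h4 (h5.1.trans ht.1))

/-- The star formed by the initial parts of the edges at `v`. -/
def star (η : ℝ) (v : V) : Set (ℝ × ℝ) :=
  (⋃ e ∈ {e | D.α e = v}, D.γ e '' Icc 0 η) ∪ ⋃ e ∈ {e | D.β e = v}, D.γ e '' Icc (1 - η) 1

theorem star_disj {η : ℝ} {v : V} {S : Set (ℝ × ℝ)}
    (h : ∀ e, D.α e = v → Disjoint (D.γ e '' Icc 0 η) S)
    (h' : ∀ e, D.β e = v → Disjoint (D.γ e '' Icc (1 - η) 1) S) : Disjoint (D.star η v) S := by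
  unfold star
  rw [Set.disjoint_union_left]
  simp only [Set.disjoint_iUnion_left]
  exact ⟨h, h'⟩

theorem star_disj' {η : ℝ} {v : V} {S : Set (ℝ × ℝ)}
    (h : ∀ e, D.α e = v → Disjoint S (D.γ e '' Icc 0 η))
    (h' : ∀ e, D.β e = v → Disjoint S (D.γ e '' Icc (1 - η) 1)) : Disjoint S (D.star η v) :=
  (D.star_disj (fun e he => (h e he).symm) fun e he => (h' e he).symm).symm

/-- A drawing without isolated vertices has a decomposition into pieces with the required incidences. -/
theorem exists_model [Finite E] (hsurj : ∀ v, ∃ e, D.α e = v ∨ D.β e = v) :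
    ∃ m : Model V E, m.α = D.α ∧ m.β = D.β := by
  obtain ⟨η, hη, h12, hk⟩ := D.exists_eta
  obtain ⟨R⟩ := D.exists_resolution hη hk
  obtain ⟨S⟩ := R.exists_strands hη h12
  have arcC : ∀ e lo hi, IsCompact (D.γ e '' Icc lo hi) := fun e lo hi =>
    isCompact_Icc.image (D.cont e)
  have arcN : ∀ e {lo hi : ℝ}, lo ≤ hi → IsConnected (D.γ e '' Icc lo hi) := fun e lo hi h =>
    (isConnected_Icc h).image _ (D.cont e).continuousOn
  have pos_star : ∀ v, D.pos v ∈ D.star η v := by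
    intro v
    obtain ⟨e, he | he⟩ := hsurj v
    · left
      refine mem_iUnion₂.2 ⟨e, he, 0, ⟨le_rfl, hη.le⟩, ?_⟩
      rw [D.zero, he]
    · right
      refine mem_iUnion₂.2 ⟨e, he, 1, ⟨by linarith, le_rfl⟩, ?_⟩
      rw [D.one, he]
  have memα : ∀ e, ∀ t ∈ Icc 0 η, D.γ e t ∈ D.star η (D.α e) := fun e t ht =>
    Or.inl (mem_iUnion₂.2 ⟨e, rfl, t, ht, rfl⟩)
  have memβ : ∀ e, ∀ t ∈ Icc (1 - η) 1, D.γ e t ∈ D.star η (D.β e) := fun e t ht =>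
    Or.inr (mem_iUnion₂.2 ⟨e, rfl, t, ht, rfl⟩)
  refine ⟨{
    α := D.α, β := D.β, τ := S.τ, X := D.X
    base := D.star η
    A := fun e => D.γ e '' Icc η (3 * η)
    B := fun e => D.γ e '' Icc (1 - 3 * η) (1 - η)
    T := S.T
    M := fun e => D.γ e '' Icc (4 * η) (1 - 4 * η)
    Γ := fun e => D.γ e '' Icc 0 1
    ab := D.ab, ab_inj := D.ab_inj
    X_symm := fun _ _ => D.X_symm, X_ne := fun _ _ h => h.1
    X_unique := fun _ _ _ => D.X_unique
    invol := S.invol, τ_X := S.τ_X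
    base_compact := fun v => ((Set.toFinite _).isCompact_biUnion fun e _ => arcC e _ _).union
      ((Set.toFinite _).isCompact_biUnion fun e _ => arcC e _ _)
    A_compact := fun e => arcC e _ _
    B_compact := fun e => arcC e _ _
    T_compact := S.compact
    M_compact := fun e => arcC e _ _
    Γ_compact := fun e => arcC e _ _
    base_conn := fun v => ⟨⟨_, pos_star v⟩, isPreconnected_of_forall (D.pos v) ?_⟩
    A_conn := fun e => arcN e (by linarith)
    B_conn := fun e => arcN e (by linarith)
    T_conn := S.conn
    M_conn := fun e => arcN e (by linarith)
    Γ_conn := fun e => arcN e (by linarith)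
    base_base := fun u v huv => ?_
    A_base := fun e v hv => ?_
    B_base := fun e v hv => ?_
    A_α := fun e => ⟨D.γ e η, ⟨η, ⟨le_rfl, by linarith⟩, rfl⟩, memα e η ⟨hη.le, le_rfl⟩⟩
    B_β := fun e => ⟨D.γ e (1 - η), ⟨1 - η, ⟨by linarith, le_rfl⟩, rfl⟩,
      memβ e (1 - η) ⟨le_rfl, by linarith⟩⟩
    A_A := fun e f hef => ?_
    B_B := fun e f hef => ?_
    A_B := fun e f => ?_
    T_base := fun e v => D.star_disj' (fun g hg => S.arc_disj (by linarith) (by linarith)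
      fun _ => Or.inl (by linarith)) fun g hg => S.arc_disj (by linarith) (by linarith)
      fun _ => Or.inr (Or.inl (by linarith))
    T_T := S.disj
    T_A := fun e f hef => S.arc_disj (by linarith) (by linarith)
      fun _ => Or.inr (Or.inr (Or.inl ⟨by linarith, hef⟩))
    T_A' := fun e => ⟨D.γ e (2 * η), S.start e _ ⟨le_rfl, by linarith⟩, 2 * η,
      ⟨by linarith, by linarith⟩, rfl⟩
    T_B := fun e f hef => S.arc_disj (by linarith) (by linarith)
      fun _ => Or.inr (Or.inr (Or.inr ⟨by linarith, hef⟩))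
    T_B' := fun e => ⟨_, S.final e, 1 - 2 * η, ⟨by linarith, by linarith⟩, rfl⟩
    M_base := fun e v => ?_
    M_A := fun e f => ?_
    M_B := fun e f => ?_
    M_M := fun e f hef hX => ?_
    M_M' := fun e f h => ?_
    M_T := fun e f hef hX => (S.arc_disj (by linarith) (by linarith) fun h =>
      (h.elim (fun h => hef h) fun h => hX (D.X_symm h)).elim).symm
    M_T' := fun e => ⟨D.γ e (4 * η), ⟨4 * η, ⟨le_rfl, by linarith⟩, rfl⟩,
      S.start e _ ⟨by linarith, le_rfl⟩⟩
    Γ_α := fun e => ⟨D.γ e 0, ⟨0, by simp, rfl⟩, memα e 0 ⟨le_rfl, hη.le⟩⟩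
    Γ_β := fun e => ⟨D.γ e 1, ⟨1, by simp, rfl⟩, memβ e 1 ⟨by linarith, le_rfl⟩⟩
    Γ_base := fun g v h1 h2 => ?_
    Γ_T := fun g e hef hX => (S.arc_disj (by linarith) (by linarith) fun h =>
      (h.elim (fun h => hef h.symm) fun h => hX h).elim).symm
    Γ_M := fun g e hef hX => ?_
    Γ_A := fun g e hef => ?_
    Γ_B := fun g e hef => ?_ }, rfl, rfl⟩
  · -- every point of a star is joined to the centre by an arc of the star
    intro y hy
    rcases hy with hy | hy
    · obtain ⟨e, he, hy⟩ := mem_iUnion₂.1 hy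
      refine ⟨_, fun x hx => Or.inl (mem_iUnion₂.2 ⟨e, he, hx⟩), ⟨0, ⟨le_rfl, hη.le⟩, ?_⟩, hy,
        (arcN e hη.le).isPreconnected⟩
      rw [D.zero, show D.α e = v from he]
    · obtain ⟨e, he, hy⟩ := mem_iUnion₂.1 hy
      refine ⟨_, fun x hx => Or.inr (mem_iUnion₂.2 ⟨e, he, hx⟩), ⟨1, ⟨by linarith, le_rfl⟩, ?_⟩, hy,
        (arcN e (by linarith)).isPreconnected⟩
      rw [D.one, show D.β e = v from he]
  · -- stars
    refine D.star_disj (fun e he => D.star_disj' (fun f hf => ?_) fun f hf => ?_)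
      fun e he => D.star_disj' (fun f hf => ?_) fun f hf => ?_
    · exact D.arc_disj hk (by linarith) (by linarith) (by linarith) (by linarith)
        (fun h => (huv (by rw [← he, ← hf, h])).elim) (fun _ => Or.inl (by linarith))
        (fun h => (huv (by rw [← he, ← hf, h])).elim) (fun _ => Or.inl (by linarith))
    · exact D.arc_disj hk (by linarith) (by linarith) (by linarith) (by linarith)
        (fun h => Or.inl (by linarith)) (fun _ => Or.inl (by linarith))
        (fun h => Or.inr (by linarith)) (fun _ => Or.inl (by linarith))
    · exact D.arc_disj hk (by linarith) (by linarith) (by linarith) (by linarith)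
        (fun h => Or.inr (by linarith)) (fun _ => Or.inr (Or.inl (by linarith)))
        (fun h => Or.inl (by linarith)) (fun _ => Or.inr (by linarith))
    · exact D.arc_disj hk (by linarith) (by linarith) (by linarith) (by linarith)
        (fun h => (huv (by rw [← he, ← hf, h])).elim) (fun _ => Or.inr (Or.inl (by linarith)))
        (fun h => Or.inl (by linarith)) (fun h => (huv (by rw [← he, ← hf, h])).elim)
  · refine D.star_disj' (fun f hf => ?_) fun f hf => ?_
    · exact D.arc_disj hk (by linarith) (by linarith) (by linarith) (by linarith)
        (fun h => (hv (by rw [← hf, h])).elim) (fun _ => Or.inl (by linarith))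
        (fun h => Or.inl (by linarith)) (fun h => Or.inl (by linarith))
    · exact D.arc_disj hk (by linarith) (by linarith) (by linarith) (by linarith)
        (fun h => Or.inl (by linarith)) (fun _ => Or.inl (by linarith))
        (fun h => Or.inl (by linarith)) (fun h => Or.inl (by linarith))
  · refine D.star_disj' (fun f hf => ?_) fun f hf => ?_
    · exact D.arc_disj hk (by linarith) (by linarith) (by linarith) (by linarith)
        (fun h => Or.inr (by linarith)) (fun _ => Or.inr (Or.inl (by linarith)))
        (fun h => Or.inl (by linarith)) (fun h => Or.inl (by linarith))
    · exact D.arc_disj hk (by linarith) (by linarith) (by linarith) (by linarith)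
        (fun h => (hv (by rw [← hf, h])).elim) (fun _ => Or.inr (Or.inl (by linarith)))
        (fun h => Or.inl (by linarith)) (fun h => Or.inl (by linarith))
  · exact D.arc_disj hk (by linarith) (by linarith) (by linarith) (by linarith)
        (fun h => (hef h).elim) (fun _ => Or.inl (by linarith))
        (fun h => Or.inl (by linarith)) (fun h => Or.inl (by linarith))
  · exact D.arc_disj hk (by linarith) (by linarith) (by linarith) (by linarith)
        (fun h => (hef h).elim) (fun _ => Or.inr (Or.inl (by linarith)))
        (fun h => Or.inl (by linarith)) (fun h => Or.inl (by linarith))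
  · exact D.arc_disj hk (by linarith) (by linarith) (by linarith) (by linarith)
        (fun h => Or.inl (by linarith)) (fun _ => Or.inl (by linarith))
        (fun h => Or.inl (by linarith)) (fun h => Or.inl (by linarith))
  · refine D.star_disj' (fun f hf => ?_) fun f hf => ?_
    · exact D.arc_disj hk (by linarith) (by linarith) (by linarith) (by linarith)
        (fun h => Or.inr (by linarith)) (fun _ => Or.inr (Or.inr (Or.inl (by linarith))))
        (fun h => Or.inl (by linarith)) (fun h => Or.inl (by linarith))
    · exact D.arc_disj hk (by linarith) (by linarith) (by linarith) (by linarith)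
        (fun h => Or.inl (by linarith)) (fun _ => Or.inr (Or.inr (Or.inr (by linarith))))
        (fun h => Or.inl (by linarith)) (fun h => Or.inl (by linarith))
  · exact D.arc_disj hk (by linarith) (by linarith) (by linarith) (by linarith)
        (fun h => Or.inr (by linarith)) (fun _ => Or.inr (Or.inr (Or.inl (by linarith))))
        (fun h => Or.inl (by linarith)) (fun h => Or.inl (by linarith))
  · exact D.arc_disj hk (by linarith) (by linarith) (by linarith) (by linarith)
        (fun h => Or.inl (by linarith)) (fun _ => Or.inr (Or.inr (Or.inr (by linarith))))
        (fun h => Or.inl (by linarith)) (fun h => Or.inl (by linarith))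
  · exact D.arc_disj hk (by linarith) (by linarith) (by linarith) (by linarith)
        (fun h => (hef h).elim) (fun h => (hX h).elim)
        (fun h => Or.inl (by linarith)) (fun h => Or.inl (by linarith))
  · obtain ⟨hne, p, ⟨t, ht, rfl⟩, ⟨s, hs, h⟩⟩ := h
    have k1 := hk ⟨(e, t), D.pass_of_meet hne ht hs h.symm⟩
    have k2 := hk ⟨(f, s), D.pass_of_meet (Ne.symm hne) hs ht h⟩
    simp only at k1 k2
    exact ⟨_, ⟨t, ⟨by linarith, by linarith⟩, rfl⟩, ⟨s, ⟨by linarith, by linarith⟩, h⟩⟩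
  · refine D.star_disj' (fun f hf => ?_) fun f hf => ?_
    · exact D.arc_disj hk (by linarith) (by linarith) (by linarith) (by linarith)
        (fun h => (h1 (by rw [← hf, h])).elim) (fun _ => Or.inr (Or.inr (Or.inl (by linarith))))
        (fun h => (h1 (by rw [← hf, h])).elim) (fun h => Or.inr (by linarith))
    · exact D.arc_disj hk (by linarith) (by linarith) (by linarith) (by linarith)
        (fun h => (h2 (by rw [← hf, h])).elim) (fun _ => Or.inr (Or.inr (Or.inr (by linarith))))
        (fun h => Or.inr (by linarith)) (fun h => (h2 (by rw [← hf, h])).elim)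
  · exact D.arc_disj hk (by linarith) (by linarith) (by linarith) (by linarith)
        (fun h => (hef h.symm).elim) (fun h => (hX (D.X_symm h)).elim)
        (fun h => Or.inr (by linarith)) (fun h => Or.inr (by linarith))
  · exact D.arc_disj hk (by linarith) (by linarith) (by linarith) (by linarith)
        (fun h => (hef h.symm).elim) (fun _ => Or.inr (Or.inr (Or.inl (by linarith))))
        (fun h => Or.inr (by linarith)) (fun h => Or.inr (by linarith))
  · exact D.arc_disj hk (by linarith) (by linarith) (by linarith) (by linarith)
        (fun h => (hef h.symm).elim) (fun _ => Or.inr (Or.inr (Or.inr (by linarith))))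
        (fun h => Or.inr (by linarith)) (fun h => Or.inr (by linarith))

end BDrawing

/-! ### Two applications of planarity -/

theorem conn_star {ι : Type*} {s : Set (ℝ × ℝ)} {t : ι → Set (ℝ × ℝ)} (hs : IsConnected s)
    (ht : ∀ i, IsConnected (t i)) (h : ∀ i, (s ∩ t i).Nonempty) : IsConnected (s ∪ ⋃ i, t i) := by
  obtain ⟨x, hx⟩ := hs.nonempty
  refine ⟨⟨x, Or.inl hx⟩, isPreconnected_of_forall x ?_⟩
  rintro y (hy | hy)
  · exact ⟨s, subset_union_left, hx, hy, hs.isPreconnected⟩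
  · obtain ⟨i, hi⟩ := mem_iUnion.1 hy
    exact ⟨s ∪ t i, union_subset_union_right _ (subset_iUnion t i), Or.inl hx, Or.inr hi,
      (hs.union (h i) (ht i)).isPreconnected⟩

namespace Model

variable {V E : Type*} (m : Model V E)

theorem τ_inj {e f : E} (h : m.τ e = m.τ f) : e = f := by
  rw [← m.invol e, h, m.invol]

theorem X_eq {e f : E} (he : m.τ e ≠ e) (h : m.X e f) : f = m.τ e :=
  m.X_unique e _ _ h ((m.τ_X e).resolve_left he)

/-- The middle parts of an edge `e` and of the edge `τ e` crossing it. -/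
def MM (e : E) : Set (ℝ × ℝ) := m.M e ∪ m.M (m.τ e)

theorem MM_conn {e : E} (he : m.τ e ≠ e) : IsConnected (m.MM e) :=
  (m.M_conn e).union (m.M_M' _ _ ((m.τ_X e).resolve_left he)) (m.M_conn _)

theorem MM_compact (e : E) : IsCompact (m.MM e) := (m.M_compact e).union (m.M_compact _)

theorem ττ_ne {e : E} (he : m.τ e ≠ e) : m.τ (m.τ e) ≠ m.τ e := by
  rw [m.invol]; exact he.symm

theorem MM_T {e f : E} (he : m.τ e ≠ e) (h1 : f ≠ e) (h2 : f ≠ m.τ e) :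
    Disjoint (m.MM e) (m.T f) := by
  unfold MM
  refine Disjoint.union_left (m.M_T _ _ h1.symm fun h => h2 (m.X_eq he h))
    (m.M_T _ _ h2.symm fun h => h1 ?_)
  rw [m.X_eq (m.ττ_ne he) h, m.invol]

theorem MM_M {e f : E} (he : m.τ e ≠ e) (h1 : f ≠ e) (h2 : f ≠ m.τ e) :
    Disjoint (m.MM e) (m.M f) := by
  unfold MM
  refine Disjoint.union_left (m.M_M _ _ h1.symm fun h => h2 (m.X_eq he h))
    (m.M_M _ _ h2.symm fun h => h1 ?_)
  rw [m.X_eq (m.ττ_ne he) h, m.invol]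

theorem MM_MM {e f : E} (he : m.τ e ≠ e) (h1 : f ≠ e) (h2 : f ≠ m.τ e) :
    Disjoint (m.MM e) (m.MM f) := by
  refine Disjoint.union_right (m.MM_M he h1 h2) (m.MM_M he ?_ ?_)
  · rintro h; apply h2; rw [← h, m.invol]
  · exact fun h => h1 (m.τ_inj h)

theorem MM_A (e f : E) : Disjoint (m.MM e) (m.A f) := Disjoint.union_left (m.M_A _ _) (m.M_A _ _)

theorem MM_B (e f : E) : Disjoint (m.MM e) (m.B f) := Disjoint.union_left (m.M_B _ _) (m.M_B _ _)

theorem MM_base (e : E) (v : V) : Disjoint (m.MM e) (m.base v) :=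
  Disjoint.union_left (m.M_base _ _) (m.M_base _ _)

section

variable (Dg : Set E)

open Classical in
/-- The vertex to which the strand `T e` is attached. -/
noncomputable def own (e : E) : V := if m.τ e ∈ Dg then m.β (m.τ e) else m.α e

open Classical in
/-- The strand `T e` with the arc joining it to the vertex to which it is attached. -/
noncomputable def H (e : E) : Set (ℝ × ℝ) :=
  if m.τ e ∈ Dg then m.T e ∪ m.B (m.τ e) else m.T e ∪ m.A e

open Classical in
/-- The arc joining the strand `T e` to the vertex to which it is not attached. -/
noncomputable def K (e : E) : Set (ℝ × ℝ) := if m.τ e ∈ Dg then m.A e else m.B (m.τ e)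

theorem T_sub_H (e : E) : m.T e ⊆ m.H Dg e := by
  unfold H; split_ifs <;> exact subset_union_left

theorem H_conn (e : E) : IsConnected (m.H Dg e) := by
  unfold H; split_ifs
  · exact (m.T_conn e).union (m.T_B' e) (m.B_conn _)
  · exact (m.T_conn e).union (m.T_A' e) (m.A_conn _)

theorem H_compact (e : E) : IsCompact (m.H Dg e) := by
  unfold H; split_ifs
  · exact (m.T_compact e).union (m.B_compact _)
  · exact (m.T_compact e).union (m.A_compact _)

theorem H_own (e : E) : (m.base (m.own Dg e) ∩ m.H Dg e).Nonempty := by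
  unfold H own; split_ifs
  · obtain ⟨x, h1, h2⟩ := m.B_β (m.τ e)
    exact ⟨x, h2, Or.inr h1⟩
  · obtain ⟨x, h1, h2⟩ := m.A_α e
    exact ⟨x, h2, Or.inr h1⟩

theorem H_base {e : E} {v : V} (h : v ≠ m.own Dg e) : Disjoint (m.H Dg e) (m.base v) := by
  unfold H; unfold own at h; split_ifs at h ⊢
  · exact Disjoint.union_left (m.T_base _ _) (m.B_base _ _ h)
  · exact Disjoint.union_left (m.T_base _ _) (m.A_base _ _ h)

theorem H_H {e f : E} (h : e ≠ f) : Disjoint (m.H Dg e) (m.H Dg f) := by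
  have h' : m.τ e ≠ m.τ f := fun h1 => h (m.τ_inj h1)
  unfold H; split_ifs
  · exact Disjoint.union_left (Disjoint.union_right (m.T_T _ _ h) (m.T_B _ _ h'.symm))
      (Disjoint.union_right (m.T_B _ _ h').symm (m.B_B _ _ h'))
  · exact Disjoint.union_left (Disjoint.union_right (m.T_T _ _ h) (m.T_A _ _ h.symm))
      (Disjoint.union_right (m.T_B _ _ h').symm (m.A_B _ _).symm)
  · exact Disjoint.union_left (Disjoint.union_right (m.T_T _ _ h) (m.T_B _ _ h'.symm))
      (Disjoint.union_right (m.T_A _ _ h).symm (m.A_B _ _))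
  · exact Disjoint.union_left (Disjoint.union_right (m.T_T _ _ h) (m.T_A _ _ h.symm))
      (Disjoint.union_right (m.T_A _ _ h).symm (m.A_A _ _ h))

theorem K_compact (e : E) : IsCompact (m.K Dg e) := by
  unfold K; split_ifs
  exacts [m.A_compact _, m.B_compact _]

theorem K_conn (e : E) : IsConnected (m.K Dg e) := by
  unfold K; split_ifs
  exacts [m.A_conn _, m.B_conn _]

theorem K_H {e f : E} (h : e ≠ f) : Disjoint (m.K Dg e) (m.H Dg f) := by
  have h' : m.τ e ≠ m.τ f := fun h1 => h (m.τ_inj h1)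
  unfold K H; split_ifs
  · exact Disjoint.union_right (m.T_A _ _ h).symm (m.A_B _ _)
  · exact Disjoint.union_right (m.T_A _ _ h).symm (m.A_A _ _ h)
  · exact Disjoint.union_right (m.T_B _ _ h').symm (m.B_B _ _ h')
  · exact Disjoint.union_right (m.T_B _ _ h').symm (m.A_B _ _).symm

theorem K_base {e : E} {v : V} (h1 : v ≠ m.α e) (h2 : v ≠ m.β (m.τ e)) :
    Disjoint (m.K Dg e) (m.base v) := by
  unfold K; split_ifs
  exacts [m.A_base _ _ h1, m.B_base _ _ h2]

theorem K_K {e f : E} (h : e ≠ f) : Disjoint (m.K Dg e) (m.K Dg f) := by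
  have h' : m.τ e ≠ m.τ f := fun h1 => h (m.τ_inj h1)
  unfold K; split_ifs
  exacts [m.A_A _ _ h, m.A_B _ _, (m.A_B _ _).symm, m.B_B _ _ h']

theorem MM_K (e f : E) : Disjoint (m.MM e) (m.K Dg f) := by
  unfold K; split_ifs
  exacts [m.MM_A _ _, m.MM_B _ _]

theorem MM_H {e f : E} (he : m.τ e ≠ e) (h1 : f ≠ e) (h2 : f ≠ m.τ e) :
    Disjoint (m.MM e) (m.H Dg f) := by
  unfold H; split_ifs
  exacts [Disjoint.union_right (m.MM_T he h1 h2) (m.MM_B _ _),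
    Disjoint.union_right (m.MM_T he h1 h2) (m.MM_A _ _)]

/-- The connected set representing a vertex: its star and the strands attached to it. -/
noncomputable def Cv (v : V) : Set (ℝ × ℝ) := m.base v ∪ ⋃ e : {e // m.own Dg e = v}, m.H Dg e.1

theorem base_sub_Cv (v : V) : m.base v ⊆ m.Cv Dg v := subset_union_left

theorem H_sub_Cv {e : E} {v : V} (h : m.own Dg e = v) : m.H Dg e ⊆ m.Cv Dg v := fun _ hx =>
  Or.inr (mem_iUnion.2 ⟨⟨e, h⟩, hx⟩)

theorem disj_Cv {S : Set (ℝ × ℝ)} {v : V} (h1 : Disjoint S (m.base v))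
    (h2 : ∀ e, m.own Dg e = v → Disjoint S (m.H Dg e)) : Disjoint S (m.Cv Dg v) := by
  refine Disjoint.union_right h1 ?_
  rw [Set.disjoint_iUnion_right]
  exact fun e => h2 e.1 e.2

variable {Dg}

open Classical in
/-- Resolving the crossings of a drawing and routing one edge of some of the crossing pairs `e, τ e`
through the crossing (those with `e ∈ Dg`) gives a plane bipartite multigraph, so that the number of
pairs of vertices in `W` joined in it is at most `2 |W| - 4`. -/
theorem resolved_bound [Finite E] (hD : ∀ e ∈ Dg, m.τ e ≠ e ∧ m.τ e ∉ Dg) (W : Finset V)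
    (hW : 3 ≤ W.card) (P : Finset (V × V))
    (hP : ∀ p ∈ P, p.1 ∈ W ∧ p.2 ∈ W ∧
      ((∃ e, p = (m.α e, m.β (m.τ e))) ∨ ∃ e ∈ Dg, p = (m.α e, m.β e))) :
    P.card + 4 ≤ 2 * W.card := by
  have hrep : ∀ p : P, ∃ r : E ⊕ Dg, (∀ e, r = Sum.inl e → p.1 = (m.α e, m.β (m.τ e))) ∧
      ∀ e : Dg, r = Sum.inr e → p.1 = (m.α e, m.β e) := by
    rintro ⟨p, hp⟩
    rcases (hP p hp).2.2 with ⟨e, he⟩ | ⟨e, heD, he⟩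
    · refine ⟨Sum.inl e, ?_, by simp⟩
      rintro _ ⟨⟩
      exact he
    · refine ⟨Sum.inr ⟨e, heD⟩, by simp, ?_⟩
      rintro _ ⟨⟩
      exact he
  choose r hr1 hr2 using hrep
  have hrinj : ∀ p q, r p = r q → p = q := by
    intro p q h
    rcases h1 : r p with e | e
    · exact Subtype.ext ((hr1 p e h1).trans (hr1 q e (h ▸ h1)).symm)
    · exact Subtype.ext ((hr2 p e h1).trans (hr2 q e (h ▸ h1)).symm)
  have hownD : ∀ e ∈ Dg, m.own Dg e = m.α e ∧ m.own Dg (m.τ e) = m.β e := by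
    intro e he
    unfold own
    rw [if_neg (hD e he).2, m.invol, if_pos he]
    exact ⟨rfl, rfl⟩
  have hfst : ∀ p : P, ∃ e, p.1.1 = m.α e := by
    intro p
    rcases h1 : r p with e | e
    · exact ⟨e, by rw [hr1 p e h1]⟩
    · exact ⟨e, by rw [hr2 p e h1]⟩
  have hsnd : ∀ p : P, ∃ e, p.1.2 = m.β e := by
    intro p
    rcases h1 : r p with e | e
    · exact ⟨m.τ e, by rw [hr1 p e h1]⟩
    · exact ⟨e, by rw [hr2 p e h1]⟩
  have main := planar_bound (V := W) (I := P) (fun v => m.Cv Dg v.1)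
    (fun p => Sum.elim (m.K Dg) (fun e : Dg => m.MM e.1) (r p))
    (fun p => ⟨p.1.1, (hP p.1 p.2).1⟩) (fun p => ⟨p.1.2, (hP p.1 p.2).2.1⟩)
    (fun v => (m.base_compact _).union (isCompact_iUnion fun e => m.H_compact Dg e.1))
    (fun v => conn_star (m.base_conn _) (fun e => m.H_conn Dg e.1) fun e => by
      have := m.H_own Dg e.1
      rwa [e.2] at this)
    (fun p => by
      rcases r p with e | e
      exacts [m.K_compact Dg e, m.MM_compact e.1])
    (fun p => by
      rcases r p with e | e
      exacts [(m.K_conn Dg e).isPreconnected, (m.MM_conn (hD e.1 e.2).1).isPreconnected])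
    (fun u v huv => by
      have huv' : u.1 ≠ v.1 := fun h => huv (Subtype.ext h)
      refine m.disj_Cv Dg (m.disj_Cv Dg (m.base_base _ _ huv'.symm) fun e he => ?_).symm
        fun e he => (m.disj_Cv Dg ?_ fun f hf => ?_).symm
      · exact (m.H_base Dg (by rw [he]; exact huv'.symm)).symm
      · exact m.H_base Dg (by rw [he]; exact huv')
      · exact m.H_H Dg (by rintro rfl; exact huv' (hf.symm.trans he)))
    (fun p q hpq => by
      have h0 : r p ≠ r q := fun h => hpq (hrinj p q h)
      rcases hp : r p with e | e <;> rcases hq : r q with f | f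
      · exact m.K_K Dg (fun h => h0 (by rw [hp, hq, h]))
      · exact (m.MM_K Dg _ _).symm
      · exact m.MM_K Dg _ _
      · have hef : f.1 ≠ e.1 := fun h => h0 (by rw [hp, hq, Subtype.ext h])
        exact m.MM_MM (hD e.1 e.2).1 hef fun h => (hD e.1 e.2).2 (h ▸ f.2))
    (fun p v hv1 hv2 => by
      have h1 : v.1 ≠ p.1.1 := fun h => hv1 (Subtype.ext h)
      have h2 : v.1 ≠ p.1.2 := fun h => hv2 (Subtype.ext h)
      rcases h0 : r p with e | e
      · rw [hr1 p e h0] at h1 h2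
        refine m.disj_Cv Dg (m.K_base Dg h1 h2) fun f hf => m.K_H Dg ?_
        rintro rfl
        unfold own at hf
        split_ifs at hf
        exacts [h2 hf.symm, h1 hf.symm]
      · rw [hr2 p e h0] at h1 h2
        refine m.disj_Cv Dg (m.MM_base _ _) fun f hf => m.MM_H Dg (hD e.1 e.2).1 ?_ ?_
        · rintro rfl; exact h1 (hf.symm.trans (hownD _ e.2).1)
        · rintro rfl; exact h2 (hf.symm.trans (hownD _ e.2).2))
    (fun p => by
      rcases h0 : r p with e | e
      · simp only [Sum.elim_inl, hr1 p e h0]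
        unfold K
        split_ifs with h
        · obtain ⟨x, hx, hx'⟩ := m.A_α e
          exact ⟨x, hx, m.base_sub_Cv Dg _ hx'⟩
        · obtain ⟨x, hx, hx'⟩ := m.T_B' e
          exact ⟨x, hx', m.H_sub_Cv Dg (by simp [own, h]) (m.T_sub_H Dg e hx)⟩
      · simp only [Sum.elim_inr, hr2 p e h0]
        obtain ⟨x, hx, hx'⟩ := m.M_T' e
        exact ⟨x, Or.inl hx, m.H_sub_Cv Dg (hownD _ e.2).1 (m.T_sub_H Dg _ hx')⟩)
    (fun p => by
      rcases h0 : r p with e | e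
      · simp only [Sum.elim_inl, hr1 p e h0]
        unfold K
        split_ifs with h
        · obtain ⟨x, hx, hx'⟩ := m.T_A' e
          exact ⟨x, hx', m.H_sub_Cv Dg (by simp [own, h]) (m.T_sub_H Dg e hx)⟩
        · obtain ⟨x, hx, hx'⟩ := m.B_β (m.τ e)
          exact ⟨x, hx, m.base_sub_Cv Dg _ hx'⟩
      · simp only [Sum.elim_inr, hr2 p e h0]
        obtain ⟨x, hx, hx'⟩ := m.M_T' (m.τ e)
        exact ⟨x, Or.inr hx, m.H_sub_Cv Dg (hownD _ e.2).2 (m.T_sub_H Dg _ hx')⟩)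
    (fun p q h => by
      obtain ⟨e, he⟩ := hfst p
      obtain ⟨f, hf⟩ := hsnd q
      have : p.1.1 = q.1.2 := congrArg Subtype.val h
      rw [he, hf] at this
      exact m.ab e f this)
    (fun p q h1 h2 => Subtype.ext (Prod.ext (congrArg Subtype.val h1) (congrArg Subtype.val h2)))
    (by simpa using hW)
  simpa using main

end

/-- `K₃,₃` has no planar drawing with vertices thickened to connected sets. -/
theorem no_K33 {P0 P1 P2 : Set (ℝ × ℝ)} {Q L0 L1 L2 : Fin 3 → Set (ℝ × ℝ)}
    (hP0 : IsCompact P0 ∧ IsConnected P0) (hP1 : IsCompact P1 ∧ IsConnected P1)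
    (hP2 : IsCompact P2 ∧ IsConnected P2) (hQ : ∀ i, IsCompact (Q i) ∧ IsConnected (Q i))
    (hL0 : ∀ i, IsCompact (L0 i) ∧ IsConnected (L0 i))
    (hL1 : ∀ i, IsCompact (L1 i) ∧ IsConnected (L1 i))
    (hL2 : ∀ i, IsCompact (L2 i) ∧ IsConnected (L2 i))
    (h01 : Disjoint P0 P1) (h02 : Disjoint P0 P2) (h12 : Disjoint P1 P2)
    (h0Q : ∀ i, Disjoint P0 (Q i)) (h1Q : ∀ i, Disjoint P1 (Q i)) (h2Q : ∀ i, Disjoint P2 (Q i))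
    (hQQ : ∀ i j, i ≠ j → Disjoint (Q i) (Q j))
    (l00 : ∀ i j, i ≠ j → Disjoint (L0 i) (L0 j)) (l11 : ∀ i j, i ≠ j → Disjoint (L1 i) (L1 j))
    (l22 : ∀ i j, i ≠ j → Disjoint (L2 i) (L2 j)) (l01 : ∀ i j, Disjoint (L0 i) (L1 j))
    (l02 : ∀ i j, Disjoint (L0 i) (L2 j)) (l12 : ∀ i j, Disjoint (L1 i) (L2 j))
    (a01 : ∀ i, Disjoint (L0 i) P1) (a02 : ∀ i, Disjoint (L0 i) P2)
    (a10 : ∀ i, Disjoint (L1 i) P0) (a12 : ∀ i, Disjoint (L1 i) P2)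
    (a20 : ∀ i, Disjoint (L2 i) P0) (a21 : ∀ i, Disjoint (L2 i) P1)
    (q0 : ∀ i j, i ≠ j → Disjoint (L0 i) (Q j)) (q1 : ∀ i j, i ≠ j → Disjoint (L1 i) (Q j))
    (q2 : ∀ i j, i ≠ j → Disjoint (L2 i) (Q j))
    (m0 : ∀ i, (L0 i ∩ P0).Nonempty) (m1 : ∀ i, (L1 i ∩ P1).Nonempty)
    (m2 : ∀ i, (L2 i ∩ P2).Nonempty) (n0 : ∀ i, (L0 i ∩ Q i).Nonempty)
    (n1 : ∀ i, (L1 i ∩ Q i).Nonempty) (n2 : ∀ i, (L2 i ∩ Q i).Nonempty) : False := by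
  have main := planar_bound (V := Fin 3 ⊕ Fin 3) (I := Fin 3 × Fin 3)
    (Sum.elim ![P0, P1, P2] Q) (fun p => ![L0 p.2, L1 p.2, L2 p.2] p.1)
    (fun p => Sum.inl p.1) (fun p => Sum.inr p.2) ?_ ?_ ?_ ?_ ?_ ?_ ?_ ?_ ?_ (by simp) ?_ (by simp)
  · simp at main
  · rintro (j | j)
    · fin_cases j
      exacts [hP0.1, hP1.1, hP2.1]
    · exact (hQ j).1
  · rintro (j | j)
    · fin_cases j
      exacts [hP0.2, hP1.2, hP2.2]
    · exact (hQ j).2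
  · rintro ⟨j, i⟩
    fin_cases j
    exacts [(hL0 i).1, (hL1 i).1, (hL2 i).1]
  · rintro ⟨j, i⟩
    fin_cases j
    exacts [(hL0 i).2.isPreconnected, (hL1 i).2.isPreconnected, (hL2 i).2.isPreconnected]
  · have h1 : ∀ j i, Disjoint ((![P0, P1, P2] : Fin 3 → Set (ℝ × ℝ)) j) (Q i) := by
      intro j i
      fin_cases j
      exacts [h0Q i, h1Q i, h2Q i]
    rintro (j | j) (j' | j') hne
    · fin_cases j <;> fin_cases j'
      exacts [(hne rfl).elim, h01, h02, h01.symm, (hne rfl).elim, h12, h02.symm, h12.symm,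
        (hne rfl).elim]
    · exact h1 j j'
    · exact (h1 j' j).symm
    · exact hQQ _ _ fun h => hne (by rw [h])
  · rintro ⟨j, i⟩ ⟨j', i'⟩ hne
    have hii : j = j' → i ≠ i' := fun h h' => hne (by rw [h, h'])
    fin_cases j <;> fin_cases j'
    exacts [l00 _ _ (hii rfl), l01 _ _, l02 _ _, (l01 _ _).symm, l11 _ _ (hii rfl), l12 _ _,
      (l02 _ _).symm, (l12 _ _).symm, l22 _ _ (hii rfl)]
  · rintro ⟨j, i⟩ (j' | i') h1 h2
    · have h1' : j' ≠ j := fun h => h1 (by rw [h])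
      fin_cases j <;> fin_cases j'
      exacts [(h1' rfl).elim, a01 i, a02 i, a10 i, (h1' rfl).elim, a12 i, a20 i, a21 i,
        (h1' rfl).elim]
    · have h2' : i ≠ i' := fun h => h2 (by rw [h])
      fin_cases j
      exacts [q0 _ _ h2', q1 _ _ h2', q2 _ _ h2']
  · rintro ⟨j, i⟩
    fin_cases j
    exacts [m0 i, m1 i, m2 i]
  · rintro ⟨j, i⟩
    fin_cases j
    exacts [n0 i, n1 i, n2 i]
  · rintro ⟨j, i⟩ ⟨j', i'⟩ h hi
    exact Prod.ext (Sum.inl.inj h) (Sum.inr.inj hi)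

/-- The edges of the graph without `w` and `z`, as a connected set, with strands `T f` for `f ∈ F`
attached to it. -/
theorem exists_rest [Finite V] [Finite E] (w z v₀ : V) (hv₀ : v₀ ≠ w ∧ v₀ ≠ z) (F : Set E)
    (hF : ∀ f ∈ F, m.α f ≠ w) (hzα : ∀ g, m.α g ≠ z) (hwβ : ∀ g, m.β g ≠ w)
    (hconn : ∀ u v, u ≠ w → u ≠ z → v ≠ w → v ≠ z → Relation.ReflTransGen (fun x y =>
      ∃ g, m.α g ≠ w ∧ m.β g ≠ z ∧ ((m.α g = x ∧ m.β g = y) ∨ (m.α g = y ∧ m.β g = x))) u v) :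
    ∃ κ : Set (ℝ × ℝ), IsCompact κ ∧ IsConnected κ ∧ (∀ f ∈ F, m.T f ⊆ κ) ∧
      ∀ S : Set (ℝ × ℝ), (∀ v, v ≠ w → v ≠ z → Disjoint S (m.base v)) →
      (∀ g, m.α g ≠ w → m.β g ≠ z → Disjoint S (m.Γ g)) →
      (∀ f ∈ F, Disjoint S (m.T f)) → (∀ f ∈ F, Disjoint S (m.A f)) →
      Disjoint S κ := by
  let N1 : V → Set (ℝ × ℝ) := fun v => m.base v ∪
    ⋃ g : {g // m.α g ≠ w ∧ m.β g ≠ z ∧ (m.α g = v ∨ m.β g = v)}, m.Γ g.1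
  let N : V → Set (ℝ × ℝ) := fun v => N1 v ∪
    ⋃ f : {f // f ∈ F ∧ m.α f = v}, (m.T f.1 ∪ m.A f.1)
  have hNconn : ∀ v, IsConnected (N v) := by
    intro v
    have h1 : IsConnected (N1 v) := by
      refine conn_star (m.base_conn v) (fun g => m.Γ_conn g.1) ?_
      rintro ⟨g, -, -, rfl | rfl⟩
      · obtain ⟨x, h1, h2⟩ := m.Γ_α g
        exact ⟨x, h2, h1⟩
      · obtain ⟨x, h1, h2⟩ := m.Γ_β g
        exact ⟨x, h2, h1⟩
    refine conn_star h1 (fun i => (m.T_conn _).union (m.T_A' _) (m.A_conn _)) ?_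
    rintro ⟨f, -, rfl⟩
    obtain ⟨x, h1, h2⟩ := m.A_α f
    exact ⟨x, Or.inl h2, Or.inr h1⟩
  have hNcomp : ∀ v, IsCompact (N v) := fun v =>
    IsCompact.union (IsCompact.union (m.base_compact v) (isCompact_iUnion fun g => m.Γ_compact _))
      (isCompact_iUnion fun i => IsCompact.union (m.T_compact _) (m.A_compact _))
  have hmemN : ∀ g y, m.α g ≠ w → m.β g ≠ z → (m.α g = y ∨ m.β g = y) → m.Γ g ⊆ N y :=
    fun g y hg1 hg2 hy p hp => Or.inl (Or.inr (mem_iUnion.2 ⟨⟨g, hg1, hg2, hy⟩, hp⟩))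
  have hTN : ∀ f ∈ F, m.T f ⊆ N (m.α f) := fun f hf x hx =>
    Or.inr (mem_iUnion.2 ⟨⟨f, hf, rfl⟩, Or.inl hx⟩)
  have hNdisj : ∀ (S : Set (ℝ × ℝ)) v, Disjoint S (m.base v) →
      (∀ g, m.α g ≠ w → m.β g ≠ z → Disjoint S (m.Γ g)) →
      (∀ f ∈ F, Disjoint S (m.T f)) → (∀ f ∈ F, Disjoint S (m.A f)) → Disjoint S (N v) := by
    intro S v h1 h2 h3 h4
    refine Disjoint.union_right (Disjoint.union_right h1 ?_) ?_
    · exact Set.disjoint_iUnion_right.2 fun g => h2 g.1 g.2.1 g.2.2.1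
    · exact Set.disjoint_iUnion_right.2 fun i =>
        Disjoint.union_right (h3 i.1 i.2.1) (h4 i.1 i.2.1)
  clear_value N
  refine ⟨⋃ v ∈ {v | v ≠ w ∧ v ≠ z}, N v,
    (Set.toFinite _).isCompact_biUnion fun v _ => hNcomp v, ?_, ?_, ?_⟩
  · refine IsConnected.biUnion_of_reflTransGen ⟨_, hv₀⟩ (fun v _ => hNconn v) ?_
    intro u hu v hv
    have h1 := hconn u v hu.1 hu.2 hv.1 hv.2
    clear hv
    induction h1 with
    | refl => exact Relation.ReflTransGen.refl
    | @tail x y hx hxy ih =>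
      obtain ⟨g, hg1, hg2, hg3⟩ := hxy
      obtain ⟨p, hp⟩ := (m.Γ_conn g).nonempty
      refine ih.tail ⟨⟨p, hmemN g x hg1 hg2 ?_ hp, hmemN g y hg1 hg2 ?_ hp⟩, ?_⟩
      · rcases hg3 with h | h
        exacts [Or.inl h.1, Or.inr h.2]
      · rcases hg3 with h | h
        exacts [Or.inr h.2, Or.inl h.1]
      · rcases hg3 with h | h
        · rw [← h.1]; exact ⟨hg1, hzα g⟩
        · rw [← h.2]; exact ⟨hwβ g, hg2⟩
  · exact fun f hf x hx => mem_iUnion₂.2 ⟨_, ⟨hF f hf, hzα f⟩, hTN f hf hx⟩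
  · intro S h1 h2 h3 h4
    exact Set.disjoint_iUnion₂_right.2 fun v hv => hNdisj S v (h1 v hv.1 hv.2) h2 h3 h4

/-- If the graph remains connected after deleting `w` and `z`, then at most two strands of crossed
edges run from `w` to `z`: three of them would give a planar drawing of `K₃,₃`. -/
theorem no_three_strands [Finite V] [Finite E] (w z : V) (e : Fin 3 → E)
    (he : Function.Injective e)
    (hw : ∀ i, m.α (e i) = w) (hz : ∀ i, m.β (m.τ (e i)) = z) (hτ : ∀ i, m.τ (e i) ≠ e i)
    (hne : ∀ i, m.α (m.τ (e i)) ≠ w)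
    (hconn : ∀ u v, u ≠ w → u ≠ z → v ≠ w → v ≠ z → Relation.ReflTransGen (fun x y =>
      ∃ g, m.α g ≠ w ∧ m.β g ≠ z ∧ ((m.α g = x ∧ m.β g = y) ∨ (m.α g = y ∧ m.β g = x))) u v) :
    False := by
  have hfe : ∀ i j, m.τ (e i) ≠ e j := fun i j h => hne i (by rw [h, hw])
  have hff : ∀ i j, i ≠ j → m.τ (e i) ≠ m.τ (e j) := fun i j hij h => hij (he (m.τ_inj h))
  have hfz : ∀ i, m.α (m.τ (e i)) ≠ z := fun i => by rw [← hz i]; exact m.ab _ _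
  have hwz : w ≠ z := by rw [← hw 0, ← hz 0]; exact m.ab _ _
  have hwβ : ∀ g, m.β g ≠ w := fun g h => m.ab (e 0) g ((hw 0).trans h.symm)
  have hzα : ∀ g, m.α g ≠ z := fun g h => m.ab g (m.τ (e 0)) (h.trans (hz 0).symm)
  obtain ⟨κ, hκcomp, hκconn, hTκ, hκ⟩ := m.exists_rest w z _ ⟨hne 0, hfz 0⟩
    (Set.range fun i => m.τ (e i)) (by rintro _ ⟨i, rfl⟩; exact hne i) hzα hwβ hconn
  simp only [forall_mem_range] at hTκ hκ
  have hbase : ∀ v, (v = w ∨ v = z) → Disjoint (m.base v) κ := by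
    intro v hv
    refine hκ _ (fun u h1 h2 => m.base_base _ _ ?_) (fun g h1 h2 => (m.Γ_base _ _ ?_ ?_).symm)
      (fun i => (m.T_base _ _).symm) (fun i => (m.A_base _ _ ?_).symm)
    · rcases hv with rfl | rfl
      exacts [h1.symm, h2.symm]
    · rcases hv with rfl | rfl
      exacts [h1.symm, (hzα g).symm]
    · rcases hv with rfl | rfl
      exacts [(hwβ g).symm, h2.symm]
    · rcases hv with rfl | rfl
      exacts [(hne i).symm, (hfz i).symm]
  have hTe : ∀ i, Disjoint (m.T (e i)) κ := by
    intro i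
    refine hκ _ (fun u h1 h2 => m.T_base _ _) (fun g h1 h2 => (m.Γ_T _ _ ?_ fun h => ?_).symm)
      (fun j => m.T_T _ _ (hfe j i).symm) (fun j => m.T_A _ _ (hfe j i))
    · rintro rfl; exact h1 (hw i)
    · rw [m.X_eq (hτ i) h] at h2; exact h2 (hz i)
  have hA : ∀ i, Disjoint (m.A (e i)) κ := by
    intro i
    refine hκ _ (fun u h1 h2 => m.A_base _ _ (by rw [hw]; exact h1))
      (fun g h1 h2 => (m.Γ_A _ _ ?_).symm)
      (fun j => (m.T_A _ _ (hfe j i).symm).symm) (fun j => m.A_A _ _ (hfe j i).symm)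
    rintro rfl; exact h1 (hw i)
  have hB : ∀ i, Disjoint (m.B (m.τ (e i))) κ := by
    intro i
    refine hκ _ (fun u h1 h2 => m.B_base _ _ (by rw [hz]; exact h2))
      (fun g h1 h2 => (m.Γ_B _ _ ?_).symm)
      (fun j => (m.T_B _ _ (by rw [m.invol]; exact hfe i j)).symm) (fun j => (m.A_B _ _).symm)
    rintro rfl; exact h2 (hz i)
  refine no_K33 (P0 := m.base w) (P1 := m.base z) (P2 := κ) (Q := fun i => m.T (e i))
    (L0 := fun i => m.A (e i)) (L1 := fun i => m.B (m.τ (e i))) (L2 := fun i => m.MM (e i))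
    ⟨m.base_compact w, m.base_conn w⟩ ⟨m.base_compact z, m.base_conn z⟩ ⟨hκcomp, hκconn⟩
    (fun i => ⟨m.T_compact _, m.T_conn _⟩) (fun i => ⟨m.A_compact _, m.A_conn _⟩)
    (fun i => ⟨m.B_compact _, m.B_conn _⟩) (fun i => ⟨m.MM_compact _, m.MM_conn (hτ i)⟩)
    (m.base_base w z hwz) (hbase w (Or.inl rfl)) (hbase z (Or.inr rfl))
    (fun i => (m.T_base _ _).symm) (fun i => (m.T_base _ _).symm) (fun i => (hTe i).symm)
    (fun i j h => m.T_T _ _ fun h' => h (he h'))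
    (fun i j h => m.A_A _ _ fun h' => h (he h')) (fun i j h => m.B_B _ _ (hff _ _ h))
    (fun i j h => m.MM_MM (hτ i) (fun h' => h (he h').symm) (hfe i j).symm)
    (fun i j => m.A_B _ _) (fun i j => (m.MM_A _ _).symm) (fun i j => (m.MM_B _ _).symm)
    (fun i => m.A_base _ _ (by rw [hw]; exact hwz.symm)) hA
    (fun i => m.B_base _ _ (by rw [hz]; exact hwz)) hB
    (fun i => m.MM_base _ _) (fun i => m.MM_base _ _)
    (fun i j h => (m.T_A _ _ fun h' => h (he h')).symm)
    (fun i j h => (m.T_B _ _ (hff _ _ h)).symm)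
    (fun i j h => m.MM_T (hτ i) (fun h' => h (he h').symm) (hfe i j).symm) ?_ ?_ ?_ ?_ ?_ ?_
  · intro i
    have := m.A_α (e i); rw [hw] at this; exact this
  · intro i
    have := m.B_β (m.τ (e i)); rw [hz] at this; exact this
  · intro i
    obtain ⟨x, hx, hx'⟩ := m.M_T' (m.τ (e i))
    exact ⟨x, Or.inr hx, hTκ i hx'⟩
  · intro i
    obtain ⟨x, hx, hx'⟩ := m.T_A' (e i)
    exact ⟨x, hx', hx⟩
  · intro i
    obtain ⟨x, hx, hx'⟩ := m.T_B' (e i)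
    exact ⟨x, hx', hx⟩
  · intro i
    obtain ⟨x, hx, hx'⟩ := m.M_T' (e i)
    exact ⟨x, Or.inl hx, hx'⟩

end Model

/-! ### Counting in the resolved graph -/

namespace Model

variable {V E : Type*} (m : Model V E)

/-- The pair of ends of an edge. -/
def pr (e : E) : V × V := (m.α e, m.β e)

/-- The pair of vertices joined by the strand of an edge. -/
def lam (e : E) : V × V := (m.α e, m.β (m.τ e))

/-- The strand of `e` continues on a crossing edge having no end in common with `e`. -/
def Sp (e : E) : Prop := m.τ e ≠ e ∧ m.α (m.τ e) ≠ m.α e ∧ m.β (m.τ e) ≠ m.β e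

theorem Sp_τ {e : E} (h : m.Sp e) : m.Sp (m.τ e) := by
  refine ⟨m.ττ_ne h.1, ?_, ?_⟩
  · rw [m.invol]; exact h.2.1.symm
  · rw [m.invol]; exact h.2.2.symm

theorem pr_inj {e f : E} (h : m.pr e = m.pr f) : e = f :=
  m.ab_inj e f (congrArg Prod.fst h) (congrArg Prod.snd h)

theorem pr_lam {e : E} (h : ¬ m.Sp e) : ∃ f, m.pr e = m.lam f := by
  by_cases h1 : m.τ e = e
  · exact ⟨e, by simp [pr, lam, h1]⟩
  · by_cases h2 : m.α (m.τ e) = m.α e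
    · exact ⟨m.τ e, by simp [pr, lam, h2, m.invol]⟩
    · by_cases h3 : m.β (m.τ e) = m.β e
      · exact ⟨e, by simp [pr, lam, h3]⟩
      · exact absurd ⟨h1, h2, h3⟩ h

variable [Fintype E]

open Classical in
/-- The pairs of vertices joined by strands of crossed edges, where only crossing edges `e`, `τ e`
without a common end are taken into account. -/
noncomputable def SS : Finset (V × V) := (Finset.univ.filter m.Sp).image m.lam

theorem lam_mem_SS {e : E} (h : m.Sp e) : m.lam e ∈ m.SS := by
  classical
  unfold SS
  exact Finset.mem_image_of_mem _ (by simpa using h)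

/-- An edge `e` is active if `e` and the crossing edge `τ e` have no common end and neither of them
joins a pair of vertices in `SS`. -/
def Act (e : E) : Prop := m.Sp e ∧ m.pr e ∉ m.SS ∧ m.pr (m.τ e) ∉ m.SS

theorem Act_τ {e : E} (h : m.Act e) : m.Act (m.τ e) :=
  ⟨m.Sp_τ h.1, h.2.2, by rw [m.invol]; exact h.2.1⟩

open Classical in
/-- The set of all active edges. -/
noncomputable def AA : Finset E := Finset.univ.filter m.Act

theorem mem_AA {e : E} : e ∈ m.AA ↔ m.Act e := by simp [AA]

open Classical in
/-- All pairs joined by edges or strands of crossed edges. -/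
noncomputable def EE : Finset (V × V) := Finset.univ.image m.pr ∪ m.SS

open Classical in
/-- All pairs joined by inactive edges or strands of crossed edges. -/
noncomputable def UU : Finset (V × V) := m.EE \ m.AA.image m.pr

open Classical in
/-- The pairs in `EE` other than those joined by active edges not in `N`. -/
noncomputable def QQ (N : Finset E) : Finset (V × V) := m.EE \ (m.AA \ N).image m.pr

theorem mem_EE {p : V × V} : p ∈ m.EE ↔ (∃ e, m.pr e = p) ∨ p ∈ m.SS := by simp [EE]

theorem mem_SS {p : V × V} : p ∈ m.SS ↔ ∃ e, m.Sp e ∧ m.lam e = p := by simp [SS]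

theorem EE_ends {p : V × V} (h : p ∈ m.EE) : (∃ e, p.1 = m.α e) ∧ ∃ e, p.2 = m.β e := by
  rcases m.mem_EE.1 h with ⟨e, rfl⟩ | h
  · exact ⟨⟨e, rfl⟩, ⟨e, rfl⟩⟩
  · obtain ⟨e, -, rfl⟩ := m.mem_SS.1 h
    exact ⟨⟨e, rfl⟩, ⟨m.τ e, rfl⟩⟩

theorem card_E_le : Fintype.card E ≤ m.EE.card := by
  classical
  unfold EE
  refine le_trans ?_ (Finset.card_le_card Finset.subset_union_left)
  rw [Finset.card_image_of_injective _ fun e f h => m.pr_inj h, Finset.card_univ]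

/-- A selection of exactly one edge of each active pair. -/
def Selects (N : Finset E) : Prop := N ⊆ m.AA ∧ ∀ e, m.Act e → (e ∈ N ↔ m.τ e ∉ N)

/-- Exactly half of the active edges are missing from `QQ N`, and all of them from `UU`. -/
theorem EE_add_UU {N : Finset E} (hN : m.Selects N) :
    m.EE.card + m.UU.card = 2 * (m.QQ N).card := by
  classical
  have h0 : ∀ F : Finset E, F.image m.pr ⊆ m.EE := by
    intro F p hp
    obtain ⟨e, -, rfl⟩ := Finset.mem_image.1 hp
    exact m.mem_EE.2 (Or.inl ⟨e, rfl⟩)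
  have hc : ∀ F : Finset E, (F.image m.pr).card = F.card := fun F =>
    Finset.card_image_of_injective _ fun e f h => m.pr_inj h
  have h1 := Finset.card_sdiff_add_card_eq_card (h0 m.AA)
  have h2 := Finset.card_sdiff_add_card_eq_card (h0 (m.AA \ N))
  rw [hc] at h1 h2
  have h3 := Finset.card_sdiff_add_card_eq_card hN.1
  have h4 : (m.AA \ N).card = N.card := by
    refine Finset.card_bij (fun e _ => m.τ e) ?_ (fun e _ f _ h => m.τ_inj h) ?_
    · intro e he
      rw [Finset.mem_sdiff, mem_AA] at he
      by_contra hcon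
      exact he.2 ((hN.2 e he.1).2 hcon)
    · intro e he
      have hA := m.mem_AA.1 (hN.1 he)
      refine ⟨m.τ e, ?_, m.invol e⟩
      rw [Finset.mem_sdiff, mem_AA]
      exact ⟨m.Act_τ hA, (hN.2 e hA).1 he⟩
  have h5 : (m.EE \ m.AA.image m.pr) = m.UU := rfl
  have h6 : (m.EE \ (m.AA \ N).image m.pr) = m.QQ N := rfl
  rw [h5] at h1
  rw [h6] at h2
  omega

/-- The pairs in `QQ N` are joined in a plane graph: by strands, or by one edge of some of the
crossing pairs routed through the crossing. -/
theorem QQ_bound {N : Finset E} (hN : m.Selects N) (W : Finset V) (hW : 3 ≤ W.card)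
    (P : Finset (V × V)) (hP : P ⊆ m.QQ N) (hPW : ∀ p ∈ P, p.1 ∈ W ∧ p.2 ∈ W) :
    P.card + 4 ≤ 2 * W.card := by
  classical
  refine m.resolved_bound (Dg := {e | (m.Sp e ∧ m.pr e ∉ m.SS ∧ m.pr (m.τ e) ∈ m.SS) ∨ e ∈ N}) ?_
    W hW P ?_
  · rintro e (he | he)
    · refine ⟨he.1.1, ?_⟩
      rintro (h | h)
      · exact h.2.1 he.2.2
      · exact (m.mem_AA.1 (hN.1 h)).2.1 he.2.2
    · have hA := m.mem_AA.1 (hN.1 he)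
      refine ⟨hA.1.1, ?_⟩
      rintro (h | h)
      · exact hA.2.1 (m.invol e ▸ h.2.2)
      · exact (hN.2 e hA).1 he h
  · intro p hp
    refine ⟨(hPW p hp).1, (hPW p hp).2, ?_⟩
    obtain ⟨h1, h2⟩ := Finset.mem_sdiff.1 (hP hp)
    by_cases hS : p ∈ m.SS
    · obtain ⟨e, -, rfl⟩ := m.mem_SS.1 hS
      exact Or.inl ⟨e, rfl⟩
    · obtain ⟨e, rfl⟩ := (m.mem_EE.1 h1).resolve_right hS
      by_cases hs : m.Sp e
      · right
        by_cases hτ : m.pr (m.τ e) ∈ m.SS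
        · exact ⟨e, Or.inl ⟨hs, hS, hτ⟩, rfl⟩
        · refine ⟨e, Or.inr ?_, rfl⟩
          by_contra hcon
          exact h2 (Finset.mem_image_of_mem _
            (Finset.mem_sdiff.2 ⟨m.mem_AA.2 ⟨hs, hS, hτ⟩, hcon⟩))
      · obtain ⟨f, hf⟩ := m.pr_lam hs
        exact Or.inl ⟨f, hf⟩

theorem lam_mem_UU {e : E} (h : m.Act e) : m.lam e ∈ m.UU := by
  classical
  refine Finset.mem_sdiff.2 ⟨m.mem_EE.2 (Or.inr (m.lam_mem_SS h.1)), fun h1 => ?_⟩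
  obtain ⟨f, hf, h2⟩ := Finset.mem_image.1 h1
  exact (m.mem_AA.1 hf).2.1 (h2 ▸ m.lam_mem_SS h.1)

theorem pr_mem_UU {e : E} (h : ¬ m.Act e) : m.pr e ∈ m.UU := by
  classical
  refine Finset.mem_sdiff.2 ⟨m.mem_EE.2 (Or.inl ⟨e, rfl⟩), fun h1 => ?_⟩
  obtain ⟨f, hf, h2⟩ := Finset.mem_image.1 h1
  exact h (m.pr_inj h2 ▸ m.mem_AA.1 hf)

open Classical in
theorem deg_aux (F : Finset E) (Y : Finset (V × V)) (φ : E → V × V)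
    (h1 : ∀ e ∈ F, m.Act e → φ e ∈ Y) (h2 : ∀ e ∈ F, ¬ m.Act e → m.pr e ∈ Y)
    (h3 : ∀ p, (F.filter fun e => m.Act e ∧ φ e = p).card ≤ 2) : F.card ≤ 3 * Y.card := by
  have h4 : (F.filter m.Act).card ≤ 2 * Y.card := by
    have := Finset.card_le_mul_card_image_of_maps_to (s := F.filter m.Act) (t := Y) (f := φ)
      (fun e he => h1 e (Finset.mem_filter.1 he).1 (Finset.mem_filter.1 he).2) 2 (fun p _ => by
        rw [Finset.filter_filter]; exact h3 p)
    exact this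
  have h5 : (F.filter fun e => ¬ m.Act e).card ≤ Y.card :=
    Finset.card_le_card_of_injOn m.pr
      (fun e he => h2 e (Finset.mem_filter.1 he).1 (Finset.mem_filter.1 he).2)
      fun e _ f _ h => m.pr_inj h
  have := Finset.card_filter_add_card_filter_not (s := F) m.Act
  omega

/-- Any two vertices are joined by at most two strands whose crossing edges `e`, `τ e` have no
common end. -/
def AtMostTwo : Prop := ∀ w z, ∀ F : Finset E,
  (∀ e ∈ F, m.Sp e ∧ m.α e = w ∧ m.β (m.τ e) = z) → F.card ≤ 2

open Classical in
/-- An active edge at `w` is charged to the pair joined by its strand, and an inactive edge to its own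
pair of ends. Every pair is charged by at most two active edges and by at most one inactive edge. -/
theorem deg_α (h2 : m.AtMostTwo) (w : V) : (Finset.univ.filter fun e => m.α e = w).card ≤
    3 * (m.UU.filter fun p => p.1 = w).card := by
  refine m.deg_aux _ _ m.lam ?_ ?_ ?_
  · intro e he hA
    exact Finset.mem_filter.2 ⟨m.lam_mem_UU hA, (Finset.mem_filter.1 he).2⟩
  · intro e he hA
    exact Finset.mem_filter.2 ⟨m.pr_mem_UU hA, (Finset.mem_filter.1 he).2⟩
  · rintro ⟨a, b⟩
    refine h2 a b _ fun e he => ?_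
    obtain ⟨-, hA, h⟩ := Finset.mem_filter.1 he
    exact ⟨hA.1, congrArg Prod.fst h, congrArg Prod.snd h⟩

open Classical in
theorem deg_β (h2 : m.AtMostTwo) (z : V) : (Finset.univ.filter fun e => m.β e = z).card ≤
    3 * (m.UU.filter fun p => p.2 = z).card := by
  refine m.deg_aux _ _ (fun e => m.lam (m.τ e)) ?_ ?_ ?_
  · intro e he hA
    refine Finset.mem_filter.2 ⟨m.lam_mem_UU (m.Act_τ hA), ?_⟩
    simp only [lam, m.invol]
    exact (Finset.mem_filter.1 he).2
  · intro e he hA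
    exact Finset.mem_filter.2 ⟨m.pr_mem_UU hA, (Finset.mem_filter.1 he).2⟩
  · rintro ⟨a, b⟩
    rw [← Finset.card_image_of_injective _ fun e f h => m.τ_inj h]
    refine h2 a b _ fun e he => ?_
    obtain ⟨f, hf, rfl⟩ := Finset.mem_image.1 he
    obtain ⟨-, hA, h⟩ := Finset.mem_filter.1 hf
    exact ⟨m.Sp_τ hA.1, congrArg Prod.fst h, congrArg Prod.snd h⟩

/-- The selection of one edge from each active pair can be made so that none of the selected edges
ends at the vertex `w`. -/
theorem exists_selects (w : V) : ∃ N, m.Selects N ∧ ∀ e ∈ N, m.α e ≠ w ∧ m.β e ≠ w := by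
  classical
  let r := Fintype.equivFin E
  have hat : ∀ e, m.Act e → (m.α e = w ∨ m.β e = w) → ¬ (m.α (m.τ e) = w ∨ m.β (m.τ e) = w) := by
    rintro e hA (h | h) (h' | h')
    · exact hA.1.2.1 (h'.trans h.symm)
    · exact m.ab _ _ (h.trans h'.symm)
    · exact m.ab _ _ (h'.trans h.symm)
    · exact hA.1.2.2 (h'.trans h.symm)
  refine ⟨m.AA.filter fun e => ¬ (m.α e = w ∨ m.β e = w) ∧
    ((m.α (m.τ e) = w ∨ m.β (m.τ e) = w) ∨ r e < r (m.τ e)), ⟨Finset.filter_subset _ _, ?_⟩, ?_⟩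
  · intro e he
    have h1 := hat e he
    have hlt : ¬ r e < r (m.τ e) ↔ r (m.τ e) < r e := by
      have : r e ≠ r (m.τ e) := fun h => he.1.1 (r.injective h).symm
      rw [not_lt]
      exact ⟨fun h => lt_of_le_of_ne h this.symm, le_of_lt⟩
    have hlt' : r (m.τ e) < r e → ¬ r e < r (m.τ e) := fun h => not_lt.2 h.le
    simp only [Finset.mem_filter, mem_AA, he, m.Act_τ he, true_and, m.invol]
    tauto
  · intro e he
    exact not_or.1 (Finset.mem_filter.1 he).2.1

theorem two_mul_card_le {A : Finset V} {f : V → ℕ} (h1 : ∀ w ∈ A, 1 ≤ f w)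
    (h2 : ∀ u ∈ A, ∀ v ∈ A, u ≠ v → 2 ≤ f u ∨ 2 ≤ f v) : 2 * A.card ≤ ∑ w ∈ A, f w + 1 := by
  classical
  by_cases h : ∃ u ∈ A, f u < 2
  · obtain ⟨u, hu, hlt⟩ := h
    have h3 := Finset.add_sum_erase A f hu
    have h4 : (A.erase u).card • 2 ≤ ∑ w ∈ A.erase u, f w :=
      Finset.card_nsmul_le_sum _ _ _ fun v hv => by
        rcases h2 u hu v (Finset.mem_of_mem_erase hv) (Finset.ne_of_mem_erase hv).symm with h | h
        · omega
        · exact h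
    have h5 := Finset.card_erase_add_one hu
    have h6 := h1 u hu
    simp only [smul_eq_mul] at h4
    omega
  · push Not at h
    have h4 : A.card • 2 ≤ ∑ w ∈ A, f w := Finset.card_nsmul_le_sum _ _ _ h
    simp only [smul_eq_mul] at h4
    omega

open Classical in
/-- The upper bound for graphs without isolated vertices, provided that all degrees are at least four
or that the number of vertices is odd and at most one vertex in each class has degree less than four.
In the second case a vertex `w` of degree one in `UU` is removed before the planar bound is used. -/
theorem count [Fintype V] (h2 : m.AtMostTwo) (c : V → Prop) (hα : ∀ e, c (m.α e)) (hβ : ∀ e, ¬ c (m.β e))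
    (hV : 4 ≤ Fintype.card V)
    (d : V → ℕ) (hd : ∀ v, d v = (Finset.univ.filter fun e => m.α e = v ∨ m.β e = v).card)
    (h3 : ∀ v, 1 ≤ d v) :
    ((∀ v, 4 ≤ d v) → Fintype.card E + 8 ≤ 3 * Fintype.card V) ∧
    (Odd (Fintype.card V) → (∀ u v, u ≠ v → (c u ↔ c v) → 4 ≤ d u ∨ 4 ≤ d v) →
      Fintype.card E + 9 ≤ 3 * Fintype.card V) := by
  let A : Finset V := Finset.univ.filter c
  let B : Finset V := Finset.univ.filter fun v => ¬ c v
  have hAB : A.card + B.card = Fintype.card V := by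
    rw [← Finset.card_univ]; exact Finset.card_filter_add_card_filter_not c
  let u : V → ℕ := fun v => (m.UU.filter fun p => p.1 = v ∨ p.2 = v).card
  have hUE : ∀ p ∈ m.UU, p ∈ m.EE := fun p hp => (Finset.mem_sdiff.1 hp).1
  have hc1 : ∀ p ∈ m.EE, c p.1 := fun p hp => by
    obtain ⟨e, he⟩ := (m.EE_ends hp).1; rw [he]; exact hα e
  have hc2 : ∀ p ∈ m.EE, ¬ c p.2 := fun p hp => by
    obtain ⟨e, he⟩ := (m.EE_ends hp).2; rw [he]; exact hβ e
  have huA : ∀ v, c v → (m.UU.filter fun p => p.1 = v) = m.UU.filter fun p => p.1 = v ∨ p.2 = v := by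
    intro v hv
    refine Finset.filter_congr fun p hp => ⟨Or.inl, fun h => h.resolve_right ?_⟩
    rintro rfl
    exact hc2 p (hUE p hp) hv
  have huB : ∀ v, ¬ c v →
      (m.UU.filter fun p => p.2 = v) = m.UU.filter fun p => p.1 = v ∨ p.2 = v := by
    intro v hv
    refine Finset.filter_congr fun p hp => ⟨Or.inr, fun h => h.resolve_left ?_⟩
    rintro rfl
    exact hv (hc1 p (hUE p hp))
  have hdu : ∀ v, d v ≤ 3 * u v := by
    intro v
    rw [hd v]
    by_cases hv : c v
    · have h5 := m.deg_α h2 v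
      rw [huA v hv] at h5
      refine le_trans (le_of_eq ?_) h5
      congr 1
      refine Finset.filter_congr fun e _ => ⟨fun h => h.resolve_right ?_, Or.inl⟩
      rintro rfl
      exact hβ e hv
    · have h5 := m.deg_β h2 v
      rw [huB v hv] at h5
      refine le_trans (le_of_eq ?_) h5
      congr 1
      refine Finset.filter_congr fun e _ => ⟨fun h => h.resolve_left ?_, Or.inr⟩
      rintro rfl
      exact hv (hα e)
  have hsumA : m.UU.card = ∑ w ∈ A, u w := by
    rw [Finset.card_eq_sum_card_fiberwise (f := Prod.fst) (t := A)]
    · refine Finset.sum_congr rfl fun v hv => ?_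
      rw [huA v (by simpa [A] using hv)]
    · intro p hp
      simpa [A] using hc1 p (hUE p hp)
  have hsumB : m.UU.card = ∑ w ∈ B, u w := by
    rw [Finset.card_eq_sum_card_fiberwise (f := Prod.snd) (t := B)]
    · refine Finset.sum_congr rfl fun v hv => ?_
      rw [huB v (by simpa [B] using hv)]
    · intro p hp
      simpa [B] using hc2 p (hUE p hp)
  have hE := m.card_E_le
  have good : (∀ v, 2 ≤ u v) → 2 * A.card ≤ m.UU.card ∧ 2 * B.card ≤ m.UU.card ∧
      m.EE.card + m.UU.card + 8 ≤ 4 * Fintype.card V := by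
    intro h
    refine ⟨?_, ?_, ?_⟩
    · have := Finset.card_nsmul_le_sum A u 2 fun v _ => h v
      rw [← hsumA] at this
      simp only [smul_eq_mul] at this
      omega
    · have := Finset.card_nsmul_le_sum B u 2 fun v _ => h v
      rw [← hsumB] at this
      simp only [smul_eq_mul] at this
      omega
    · obtain ⟨v⟩ : Nonempty V := Fintype.card_pos_iff.1 (by omega)
      obtain ⟨N, hN, -⟩ := m.exists_selects v
      have h5 := m.EE_add_UU hN
      have h6 := m.QQ_bound hN Finset.univ (by rw [Finset.card_univ]; omega) (m.QQ N) subset_rfl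
        (by simp)
      rw [Finset.card_univ] at h6
      omega
  refine ⟨fun h4 => ?_, fun hodd h4 => ?_⟩
  · have := good fun v => by have := hdu v; have := h4 v; omega
    omega
  · obtain ⟨k, hk⟩ := hodd
    by_cases hbad : ∃ w, u w < 2
    · obtain ⟨w, hw⟩ := hbad
      have hone : ∀ v, 1 ≤ u v := fun v => by have := hdu v; have := h3 v; omega
      have hA := two_mul_card_le (A := A) (f := u) (fun v _ => hone v) fun v hv v' hv' hne => by
        have h5 := hdu v
        have h6 := hdu v'
        rcases h4 v v' hne (iff_of_true (by simpa [A] using hv) (by simpa [A] using hv')) with h | h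
        · left; omega
        · right; omega
      have hB := two_mul_card_le (A := B) (f := u) (fun v _ => hone v) fun v hv v' hv' hne => by
        have h5 := hdu v
        have h6 := hdu v'
        rcases h4 v v' hne (iff_of_false (by simpa [B] using hv) (by simpa [B] using hv'))
          with h | h
        · left; omega
        · right; omega
      rw [← hsumA] at hA
      rw [← hsumB] at hB
      obtain ⟨N, hN, hNw⟩ := m.exists_selects w
      have h5 := m.EE_add_UU hN
      have h6 := m.QQ_bound hN (Finset.univ.erase w)
        (by rw [Finset.card_erase_of_mem (Finset.mem_univ _), Finset.card_univ]; omega)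
        ((m.QQ N).filter fun p => ¬ (p.1 = w ∨ p.2 = w)) (Finset.filter_subset _ _)
        (fun p hp => by
          have := not_or.1 (Finset.mem_filter.1 hp).2
          simpa using this)
      rw [Finset.card_erase_of_mem (Finset.mem_univ _), Finset.card_univ] at h6
      have h7 := Finset.card_filter_add_card_filter_not (s := m.QQ N) fun p => p.1 = w ∨ p.2 = w
      have h8 : ((m.QQ N).filter fun p => p.1 = w ∨ p.2 = w).card ≤ u w := by
        refine Finset.card_le_card fun p hp => ?_
        obtain ⟨h9, h10⟩ := Finset.mem_filter.1 hp
        refine Finset.mem_filter.2 ⟨?_, h10⟩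
        obtain ⟨h11, h12⟩ := Finset.mem_sdiff.1 h9
        refine Finset.mem_sdiff.2 ⟨h11, fun h13 => ?_⟩
        obtain ⟨e, he, rfl⟩ := Finset.mem_image.1 h13
        by_cases heN : e ∈ N
        · exact h10.elim (hNw e heN).1 (hNw e heN).2
        · exact h12 (Finset.mem_image_of_mem _ (Finset.mem_sdiff.2 ⟨he, heN⟩))
      omega
    · push Not at hbad
      have := good hbad
      omega

end Model

/-! ### The upper bound -/

open Classical in
/-- In a minimal counterexample no two vertices are joined by three strands of crossed edges:
such vertices would separate the graph into two parts, whose edges are counted by `IH`. -/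
theorem Model.atMostTwo {V E : Type*} [Fintype V] [Fintype E] (m : Model V E) (c : V → Prop)
    (hα : ∀ e, c (m.α e)) (hβ : ∀ e, ¬ c (m.β e))
    (IH : ∀ s : Finset V, 4 ≤ s.card → s.card < Fintype.card V →
      (Finset.univ.filter fun e => m.α e ∈ s ∧ m.β e ∈ s).card + 8 ≤ 3 * s.card)
    (hd : ∀ v, 2 ≤ (Finset.univ.filter fun e => m.α e = v ∨ m.β e = v).card)
    (hE : 3 * Fintype.card V < Fintype.card E + 10) : m.AtMostTwo := by
  intro w z F hF
  by_contra hlt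
  push Not at hlt
  obtain ⟨F', hF', hcard⟩ := Finset.exists_subset_card_eq (show 3 ≤ F.card by omega)
  let en := F'.equivFinOfCardEq hcard
  let e : Fin 3 → E := fun i => (en.symm i : E)
  have heF : ∀ i, e i ∈ F := fun i => hF' (en.symm i).2
  have hcw : c w := by rw [← (hF _ (heF 0)).2.1]; exact hα _
  have hcz : ¬ c z := by rw [← (hF _ (heF 0)).2.2]; exact hβ _
  refine m.no_three_strands w z e (fun i j h => en.symm.injective (Subtype.ext h))
    (fun i => (hF _ (heF i)).2.1) (fun i => (hF _ (heF i)).2.2) (fun i => (hF _ (heF i)).1.1)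
    (fun i => by rw [← (hF _ (heF i)).2.1]; exact (hF _ (heF i)).1.2.1) ?_
  intro u v huw huz hvw hvz
  by_contra hnot
  set R : V → V → Prop := fun x y =>
    ∃ g, m.α g ≠ w ∧ m.β g ≠ z ∧ ((m.α g = x ∧ m.β g = y) ∨ (m.α g = y ∧ m.β g = x)) with hR
  have hsymm : ∀ x y, R x y → R y x := by
    rintro x y ⟨g, h1, h2, h3⟩
    exact ⟨g, h1, h2, h3.symm⟩
  have hzw : z ≠ w := fun h => hcz (h ▸ hcw)
  -- every vertex off `w`, `z` has a neighbour off `w`, `z`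
  have hnb : ∀ x, x ≠ w → x ≠ z → ∃ y, y ≠ w ∧ y ≠ z ∧ y ≠ x ∧ R x y := by
    intro x hxw hxz
    obtain ⟨g, hg, g', hg', hne⟩ := Finset.one_lt_card.1 (hd x)
    simp only [Finset.mem_filter, Finset.mem_univ, true_and] at hg hg'
    by_cases hx : c x
    · have h1 : ∀ g, m.α g = x ∨ m.β g = x → m.α g = x := fun g h =>
        h.resolve_right fun h' => hβ g (h' ▸ hx)
      have h2 : ∀ g, m.α g = x → m.β g ≠ z → ∃ y, y ≠ w ∧ y ≠ z ∧ y ≠ x ∧ R x y :=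
        fun g hg hz => ⟨m.β g, fun h => hβ g (h ▸ hcw), hz, fun h => hβ g (h ▸ hx),
          g, hg ▸ hxw, hz, Or.inl ⟨hg, rfl⟩⟩
      by_cases h3 : m.β g = z
      · refine h2 g' (h1 _ hg') fun h4 => hne ?_
        exact m.ab_inj _ _ ((h1 _ hg).trans (h1 _ hg').symm) (h3.trans h4.symm)
      · exact h2 g (h1 _ hg) h3
    · have h1 : ∀ g, m.α g = x ∨ m.β g = x → m.β g = x := fun g h =>
        h.resolve_left fun h' => hx (h' ▸ hα g)
      have h2 : ∀ g, m.β g = x → m.α g ≠ w → ∃ y, y ≠ w ∧ y ≠ z ∧ y ≠ x ∧ R x y :=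
        fun g hg hw => ⟨m.α g, hw, fun h => hcz (h ▸ hα g), fun h => hx (h ▸ hα g),
          g, hw, hg ▸ hxz, Or.inr ⟨rfl, hg⟩⟩
      by_cases h3 : m.α g = w
      · refine h2 g' (h1 _ hg') fun h4 => hne ?_
        exact m.ab_inj _ _ (h3.trans h4.symm) ((h1 _ hg).trans (h1 _ hg').symm)
      · exact h2 g (h1 _ hg) h3
  let Q : V → Prop := Relation.ReflTransGen R u
  have hQR : ∀ x y, R x y → (Q x ↔ Q y) := fun x y h =>
    ⟨fun h' => h'.tail h, fun h' => h'.tail (hsymm _ _ h)⟩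
  let s₁ : Finset V := Finset.univ.filter fun x => x = w ∨ x = z ∨ Q x
  let s₂ : Finset V := Finset.univ.filter fun x => x = w ∨ x = z ∨ ¬ Q x
  have hun : s₁ ∪ s₂ = Finset.univ := by
    ext x
    simp only [s₁, s₂, Finset.mem_union, Finset.mem_filter, Finset.mem_univ, true_and]
    tauto
  have hin : s₁ ∩ s₂ = {w, z} := by
    ext x
    simp only [s₁, s₂, Finset.mem_inter, Finset.mem_filter, Finset.mem_univ, true_and,
      Finset.mem_insert, Finset.mem_singleton]
    tauto
  have hcards := Finset.card_union_add_card_inter s₁ s₂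
  rw [hun, hin, Finset.card_pair hzw.symm, Finset.card_univ] at hcards
  have hQu : Q u := Relation.ReflTransGen.refl
  have four : ∀ (s : Finset V) (x y : V), w ∈ s → z ∈ s → x ∈ s → y ∈ s → x ≠ w → x ≠ z →
      y ≠ w → y ≠ z → y ≠ x → 4 ≤ s.card := by
    intro s x y h1 h2 h3 h4 h5 h6 h7 h8 h9
    have : ({w, z, x, y} : Finset V) ⊆ s := by
      intro t ht
      simp only [Finset.mem_insert, Finset.mem_singleton] at ht
      rcases ht with rfl | rfl | rfl | rfl <;> assumption
    refine le_trans (le_of_eq ?_) (Finset.card_le_card this)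
    rw [Finset.card_insert_of_notMem, Finset.card_insert_of_notMem, Finset.card_pair h9.symm]
    · simp [h6.symm, h8.symm]
    · simp [hzw.symm, h5.symm, h7.symm]
  have h41 : 4 ≤ s₁.card := by
    obtain ⟨y, hyw, hyz, hyx, hy⟩ := hnb u huw huz
    refine four s₁ u y ?_ ?_ ?_ ?_ huw huz hyw hyz hyx <;>
      simp [s₁, hQu, (hQR _ _ hy).1 hQu]
  have h42 : 4 ≤ s₂.card := by
    obtain ⟨y, hyw, hyz, hyx, hy⟩ := hnb v hvw hvz
    have hv : ¬ Q v := hnot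
    have hy' : ¬ Q y := fun h => hv ((hQR _ _ hy).2 h)
    refine four s₂ v y ?_ ?_ ?_ ?_ hvw hvz hyw hyz hyx <;> simp [s₂, hv, hy']
  have hs₁ := IH s₁ h41
  have hs₂ := IH s₂ h42
  have hsub : (Finset.univ : Finset E) ⊆
      (Finset.univ.filter fun e => m.α e ∈ s₁ ∧ m.β e ∈ s₁) ∪
      (Finset.univ.filter fun e => m.α e ∈ s₂ ∧ m.β e ∈ s₂) := by
    intro g _
    have : m.α g ≠ w → m.β g ≠ z → (Q (m.α g) ↔ Q (m.β g)) := fun h1 h2 =>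
      hQR _ _ ⟨g, h1, h2, Or.inl ⟨rfl, rfl⟩⟩
    simp only [s₁, s₂, Finset.mem_union, Finset.mem_filter, Finset.mem_univ, true_and]
    tauto
  have h5 := (Finset.card_le_card hsub).trans (Finset.card_union_le _ _)
  rw [Finset.card_univ] at h5
  have h6 := hs₁ (by omega)
  have h7 := hs₂ (by omega)
  omega

/-- The restriction of a drawing to the vertices in `s`. -/
def BDrawing.restrict {V E : Type*} (D : BDrawing V E) (s : Finset V) :
    BDrawing s {e // D.α e ∈ s ∧ D.β e ∈ s} where
  pos v := D.pos v
  γ e := D.γ e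
  α e := ⟨D.α e, e.2.1⟩
  β e := ⟨D.β e, e.2.2⟩
  pos_inj := fun _ _ h => Subtype.ext (D.pos_inj h)
  cont e := D.cont e
  inj e := D.inj e
  zero e := D.zero e
  one e := D.one e
  interior e t ht v := D.interior e t ht v
  finite_meet e f h := D.finite_meet e f fun h' => h (Subtype.ext h')
  no_triple p e f g h1 h2 h3 := D.no_triple p e f g (fun h' => h1 (Subtype.ext h'))
    (fun h' => h2 (Subtype.ext h')) (fun h' => h3 (Subtype.ext h'))
  ab e f h := D.ab e f (congrArg Subtype.val h)
  ab_inj e f h1 h2 := Subtype.ext (D.ab_inj e f (congrArg Subtype.val h1) (congrArg Subtype.val h2))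
  one_cross e f g h1 h2 := Subtype.ext (D.one_cross e f g ⟨fun h' => h1.1 (Subtype.ext h'), h1.2⟩
    ⟨fun h' => h2.1 (Subtype.ext h'), h2.2⟩)

open Classical in
/-- The number of edges is at most the product of the sizes of the two classes. -/
theorem BDrawing.card_le_mul {V E : Type*} [Fintype V] [Fintype E] (D : BDrawing V E)
    (c : V → Prop) (hα : ∀ e, c (D.α e)) (hβ : ∀ e, ¬ c (D.β e)) :
    ∃ a b : ℕ, a + b = Fintype.card V ∧ Fintype.card E ≤ a * b := by
  refine ⟨(Finset.univ.filter c).card, (Finset.univ.filter fun v => ¬ c v).card, ?_, ?_⟩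
  · rw [← Finset.card_univ]; exact Finset.card_filter_add_card_filter_not c
  · rw [← Finset.card_product, ← Finset.card_univ]
    refine Finset.card_le_card_of_injOn (fun e => (D.α e, D.β e)) (fun e _ => ?_)
      fun e _ f _ h => D.ab_inj e f (congrArg Prod.fst h) (congrArg Prod.snd h)
    simp [hα e, hβ e]

theorem mul_le_of_add {a b n k : ℕ} (h : a + b = n) (hk : n * n ≤ 4 * k + 3) : a * b ≤ k := by
  have h1 : 4 * (a * b) ≤ n * n := by
    subst h
    zify
    nlinarith [sq_nonneg ((a : ℤ) - b)]
  omega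

open Classical in
/-- The upper bound by induction on the number `n` of vertices. For `n ≤ 8` it follows from the
trivial bound by the product of the sizes of the classes; otherwise deleting one or two vertices
shows that a counterexample satisfies the degree conditions of `Model.count`. -/
theorem BDrawing.bound_aux.{u, v} (n : ℕ) : ∀ (V : Type u) (E : Type v) [Fintype V] [Fintype E]
    (D : BDrawing V E) (c : V → Prop), (∀ e, c (D.α e)) → (∀ e, ¬ c (D.β e)) →
    Fintype.card V = n → 4 ≤ n →
    Fintype.card E + 8 ≤ 3 * n ∧ (Odd n → Fintype.card E + 9 ≤ 3 * n) := by
  induction n using Nat.strong_induction_on with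
  | _ n ih =>
  intro V E _ _ D c hα hβ hn h4
  by_cases hsmall : n ≤ 8
  · obtain ⟨a, b, hab, hE⟩ := D.card_le_mul c hα hβ
    rw [hn] at hab
    have key : ∀ k, n * n ≤ 4 * k + 3 → Fintype.card E ≤ k := fun k hk =>
      hE.trans (mul_le_of_add hab hk)
    interval_cases n
    · exact ⟨by have := key 4; omega, fun h => absurd h (by decide)⟩
    · have := key 6; exact ⟨by omega, fun _ => by omega⟩
    · exact ⟨by have := key 9; omega, fun h => absurd h (by decide)⟩
    · have := key 12; exact ⟨by omega, fun _ => by omega⟩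
    · exact ⟨by have := key 16; omega, fun h => absurd h (by decide)⟩
  push Not at hsmall
  have IH : ∀ s : Finset V, 4 ≤ s.card → s.card < n →
      (Finset.univ.filter fun e => D.α e ∈ s ∧ D.β e ∈ s).card + 8 ≤ 3 * s.card ∧
      (Odd s.card → (Finset.univ.filter fun e => D.α e ∈ s ∧ D.β e ∈ s).card + 9 ≤ 3 * s.card) := by
    intro s hs4 hsn
    have := ih s.card hsn s {e // D.α e ∈ s ∧ D.β e ∈ s} (D.restrict s) (fun v => c v)
      (fun e => hα e) (fun e => hβ e) (by simp) hs4
    rwa [Fintype.card_subtype] at this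
  set d : V → ℕ := fun v => (Finset.univ.filter fun e => D.α e = v ∨ D.β e = v).card with hd
  have hdel : ∀ v, (Finset.univ.filter fun e =>
      D.α e ∈ Finset.univ.erase v ∧ D.β e ∈ Finset.univ.erase v).card + d v = Fintype.card E := by
    intro v
    rw [← Finset.card_univ, ← Finset.card_filter_add_card_filter_not (s := Finset.univ)
      fun e => D.α e = v ∨ D.β e = v, add_comm]
    congr 2
    ext e
    simp
  have hcard1 : ∀ v : V, (Finset.univ.erase v).card = n - 1 := fun v => by
    rw [Finset.card_erase_of_mem (Finset.mem_univ _), Finset.card_univ, hn]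
  have hdel2 : ∀ u v, u ≠ v → ((Finset.univ.erase v).erase u).card = n - 2 ∧
      Fintype.card E ≤ (Finset.univ.filter fun e => D.α e ∈ (Finset.univ.erase v).erase u ∧
        D.β e ∈ (Finset.univ.erase v).erase u).card + d v + d u := by
    intro u v huv
    constructor
    · rw [Finset.card_erase_of_mem (by simp [huv]), hcard1]; omega
    · rw [← Finset.card_univ]
      refine le_trans (Finset.card_le_card (t := ((Finset.univ.filter fun e =>
        D.α e ∈ (Finset.univ.erase v).erase u ∧ D.β e ∈ (Finset.univ.erase v).erase u) ∪
        Finset.univ.filter fun e => D.α e = v ∨ D.β e = v) ∪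
        Finset.univ.filter fun e => D.α e = u ∨ D.β e = u) ?_) ?_
      · intro e _
        simp only [Finset.mem_union, Finset.mem_filter, Finset.mem_univ, true_and,
          Finset.mem_erase]
        tauto
      · refine (Finset.card_union_le _ _).trans ?_
        gcongr
        exact Finset.card_union_le _ _
  -- the two claims hold together once the minimal degrees are known
  have main : (3 * n < Fintype.card E + 10) → (∀ v, 2 ≤ d v) →
      ((∀ v, 4 ≤ d v) → Fintype.card E + 8 ≤ 3 * n) ∧
      (Odd n → (∀ u v, u ≠ v → (c u ↔ c v) → 4 ≤ d u ∨ 4 ≤ d v) →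
        Fintype.card E + 9 ≤ 3 * n) := by
    intro hE hd2
    obtain ⟨m, hmα, hmβ⟩ := D.exists_model fun v => by
      obtain ⟨e, he⟩ := Finset.card_pos.1 (show 0 < d v by have := hd2 v; omega)
      exact ⟨e, (Finset.mem_filter.1 he).2⟩
    have h2 : m.AtMostTwo := m.atMostTwo c (by rw [hmα]; exact hα) (by rw [hmβ]; exact hβ)
      (by rw [hmα, hmβ, hn]; exact fun s h h' => (IH s h h').1) (by rw [hmα, hmβ]; exact hd2)
      (by rw [hn]; exact hE)
    have := m.count h2 c (by rw [hmα]; exact hα) (by rw [hmβ]; exact hβ) (by omega) d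
      (by rw [hmα, hmβ]; exact fun _ => rfl) (fun v => by have := hd2 v; omega)
    rwa [hn] at this
  rcases Nat.even_or_odd n with hpar | hpar
  · refine ⟨?_, fun h => absurd h (Nat.not_odd_iff_even.2 hpar)⟩
    by_contra hlt
    obtain ⟨k, hk⟩ := hpar
    have hdeg : ∀ v, 4 ≤ d v := by
      intro v
      have h1 := (IH (Finset.univ.erase v) (by rw [hcard1]; omega) (by rw [hcard1]; omega)).2
        (by rw [hcard1]; exact ⟨k - 1, by omega⟩)
      have h2 := hdel v
      rw [hcard1] at h1
      omega
    exact hlt ((main (by omega) fun v => by have := hdeg v; omega).1 hdeg)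
  · suffices h : Fintype.card E + 9 ≤ 3 * n from ⟨by omega, fun _ => h⟩
    by_contra hlt
    have hdeg : ∀ v, 3 ≤ d v := by
      intro v
      have h1 := (IH (Finset.univ.erase v) (by rw [hcard1]; omega) (by rw [hcard1]; omega)).1
      have h2 := hdel v
      rw [hcard1] at h1
      omega
    refine hlt ((main (by omega) fun v => by have := hdeg v; omega).2 hpar fun u v huv _ => ?_)
    by_contra hsm
    push Not at hsm
    obtain ⟨h1, h2⟩ := hdel2 u v huv
    obtain ⟨k, hk⟩ := hpar
    have h3 := (IH ((Finset.univ.erase v).erase u) (by omega) (by omega)).2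
      (by rw [h1]; exact ⟨k - 1, by omega⟩)
    omega

/-- The upper bound on the number of edges. -/
theorem BDrawing.bound {V E : Type*} [Fintype V] [Fintype E] (D : BDrawing V E)
    (c : V → Prop) (hα : ∀ e, c (D.α e)) (hβ : ∀ e, ¬ c (D.β e)) (h4 : 4 ≤ Fintype.card V) :
    Fintype.card E + 8 ≤ 3 * Fintype.card V ∧
    (Odd (Fintype.card V) → Fintype.card E + 9 ≤ 3 * Fintype.card V) :=
  BDrawing.bound_aux _ V E D c hα hβ rfl h4

/-! ### From drawings of graphs to drawings of bipartite graphs -/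

/-- An edge curve, parametrised on the whole line and oriented from the class `c`. -/
theorem Drawing.exists_oriented {V : Type*} {G : SimpleGraph V} (D : Drawing G) (c : V → Prop)
    (hc : ∀ a b, G.Adj a b → (c a ↔ ¬ c b)) (e : G.edgeSet) :
    ∃ (γ : ℝ → ℝ × ℝ) (a b : V), (e : Sym2 V) = s(a, b) ∧ c a ∧ ¬ c b ∧ Continuous γ ∧
      InjOn γ (Icc 0 1) ∧ γ 0 = D.pos a ∧ γ 1 = D.pos b ∧
      γ '' Ioo 0 1 = D.curve e '' Ioo 0 1 ∧ γ '' Icc 0 1 = D.curve e '' Icc 0 1 := by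
  obtain ⟨a, b, hab, h0, h1⟩ := D.curve_ends e
  have hadj : G.Adj a b := by
    have := e.2; rw [hab] at this; exact this
  let κ : ℝ → ℝ := fun t => max 0 (min 1 t)
  have hκ : ∀ t ∈ Icc (0 : ℝ) 1, κ t = t := fun t ht => by simp [κ, ht.1, ht.2]
  have hκI : ∀ t, κ t ∈ Icc (0 : ℝ) 1 := fun t => ⟨le_max_left _ _, by simp [κ]⟩
  have hcont : Continuous fun t => D.curve e (κ t) :=
    (D.curve_cont e).comp_continuous (by fun_prop) hκI
  have heq : EqOn (fun t => D.curve e (κ t)) (D.curve e) (Icc 0 1) := fun t ht => by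
    simp only [hκ t ht]
  have hI : (fun t : ℝ => 1 - t) '' Ioo 0 1 = Ioo 0 1 := by simp
  have hI' : (fun t : ℝ => 1 - t) '' Icc 0 1 = Icc 0 1 := by simp
  by_cases ha : c a
  · refine ⟨fun t => D.curve e (κ t), a, b, hab, ha, (hc a b hadj).1 ha, hcont,
      (D.curve_inj e).congr heq.symm, ?_, ?_, (heq.mono Ioo_subset_Icc_self).image_eq,
      heq.image_eq⟩
    · simp [hκ 0 (by simp), h0]
    · simp [hκ 1 (by simp), h1]
  · refine ⟨fun t => D.curve e (κ (1 - t)), b, a, by rw [hab, Sym2.eq_swap],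
      (hc b a hadj.symm).2 ha, ha, hcont.comp (by fun_prop : Continuous fun t : ℝ => 1 - t), ?_,
      ?_, ?_, ?_, ?_⟩
    · intro s hs t ht hst
      have hs' : 1 - s ∈ Icc (0 : ℝ) 1 := ⟨by linarith [hs.2], by linarith [hs.1]⟩
      have ht' : 1 - t ∈ Icc (0 : ℝ) 1 := ⟨by linarith [ht.2], by linarith [ht.1]⟩
      simp only [hκ _ hs', hκ _ ht'] at hst
      linarith [D.curve_inj e hs' ht' hst]
    · simp [hκ 1 (by simp), h1]
    · simp [hκ 0 (by simp), h0]
    · rw [← (heq.mono Ioo_subset_Icc_self).image_eq, ← hI, image_image]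
      simp
    · rw [← heq.image_eq, ← hI', image_image]
      simp

/-- An almost planar drawing of a graph with a proper colouring by two classes as a bipartite
drawing. -/
theorem Drawing.exists_BDrawing {V : Type*} {G : SimpleGraph V} (D : Drawing G)
    (hD : D.IsAlmostPlanar) (c : V → Prop) (hc : ∀ a b, G.Adj a b → (c a ↔ ¬ c b)) :
    ∃ B : BDrawing V G.edgeSet, (∀ e, c (B.α e)) ∧ ∀ e, ¬ c (B.β e) := by
  choose γ a b hab ha hb hcont hinj h0 h1 hIoo hIcc using D.exists_oriented c hc
  exact ⟨{
    pos := D.pos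
    γ := γ
    α := a
    β := b
    pos_inj := D.pos_inj
    cont := hcont
    inj := hinj
    zero := h0
    one := h1
    interior := fun e t ht v h => by
      obtain ⟨s, hs, hst⟩ : γ e t ∈ D.curve e '' Ioo 0 1 := hIoo e ▸ mem_image_of_mem _ ht
      exact D.interior_no_vertex e s hs v (hst.trans h)
    finite_meet := fun e f h => by rw [hIcc, hIcc]; exact D.finite_meet e f h
    no_triple := by simp only [hIoo]; exact D.no_triple_point
    ab := fun e f h => hb f (h ▸ ha e)
    ab_inj := fun e f h h' => Subtype.ext (by rw [hab e, hab f, h, h'])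
    one_cross := by simp only [hIoo]; exact hD }, ha, hb⟩

/-- The upper bound for graphs. -/
theorem upper_bound (v : ℕ) (hv : 4 ≤ v) (G : SimpleGraph (Fin v)) (hG : G.Colorable 2)
    (hP : G.AlmostPlanar) : G.edgeSet.ncard + 8 ≤ 3 * v ∧
      (Odd v ∨ v = 6 → G.edgeSet.ncard + 9 ≤ 3 * v) := by
  classical
  obtain ⟨C⟩ := hG
  obtain ⟨D, hD⟩ := hP
  obtain ⟨B, hα, hβ⟩ := D.exists_BDrawing hD (fun x => C x = 0) fun a b hab => by
    have := C.valid hab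
    generalize C a = x at *
    generalize C b = y at *
    revert x y
    decide
  have hcard : G.edgeSet.ncard = Fintype.card G.edgeSet := by
    rw [← Nat.card_coe_set_eq, Nat.card_eq_fintype_card]
  obtain ⟨h1, h2⟩ := B.bound (fun x => C x = 0) hα hβ (by simpa using hv)
  obtain ⟨p, q, h3, h4⟩ := B.card_le_mul (fun x => C x = 0) hα hβ
  rw [← hcard, Fintype.card_fin] at h1 h2
  rw [Fintype.card_fin] at h3
  rw [← hcard] at h4
  refine ⟨h1, ?_⟩
  rintro (h | rfl)
  · exact h2 h
  · have := mul_le_of_add (k := 9) h3 (by norm_num)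
    omega

/-! ### Book drawings -/

/-- The parabolic arc from `(i, 0)` to `(j, 0)`, above the axis for `s = 1` and below it for
`s = -1`. -/
def arcCurve (i j s : ℝ) (t : ℝ) : ℝ × ℝ := (i + (j - i) * t, s * ((j - i) ^ 2 * (t * (1 - t))))

theorem arcCurve_Icc {i j s : ℝ} (h : i < j) {p : ℝ × ℝ} (hp : p ∈ arcCurve i j s '' Icc 0 1) :
    i ≤ p.1 ∧ p.1 ≤ j ∧ p.2 = s * ((p.1 - i) * (j - p.1)) := by
  obtain ⟨t, ht, rfl⟩ := hp
  refine ⟨?_, ?_, ?_⟩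
  · simp only [arcCurve]; nlinarith [ht.1]
  · simp only [arcCurve]; nlinarith [ht.2]
  · simp only [arcCurve]; ring

theorem arcCurve_Ioo {i j s : ℝ} (h : i < j) {p : ℝ × ℝ} (hp : p ∈ arcCurve i j s '' Ioo 0 1) :
    i < p.1 ∧ p.1 < j ∧ p.2 = s * ((p.1 - i) * (j - p.1)) := by
  obtain ⟨t, ht, rfl⟩ := hp
  refine ⟨?_, ?_, ?_⟩
  · simp only [arcCurve]; nlinarith [ht.1]
  · simp only [arcCurve]; nlinarith [ht.2]
  · simp only [arcCurve]; ring

/-- The arcs `(i, j)` and `(k, l)` interleave. -/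
def Interleave (i j k l : ℕ) : Prop := (i < k ∧ k < j ∧ j < l) ∨ (k < i ∧ i < l ∧ l < j)

/-- Distinct arcs of a book drawing cross only on the same page, and only if they interleave. -/
theorem arcCurve_cross {i j k l : ℕ} (hij : i < j) (hkl : k < l) (hne : ¬ (i = k ∧ j = l))
    {s s' : ℝ} (hs : s = 1 ∨ s = -1) (hs' : s' = 1 ∨ s' = -1) {p : ℝ × ℝ}
    (hp : p ∈ arcCurve i j s '' Ioo 0 1) (hp' : p ∈ arcCurve k l s' '' Ioo 0 1) :
    s = s' ∧ Interleave i j k l := by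
  obtain ⟨h1, h2, h3⟩ := arcCurve_Ioo (by exact_mod_cast hij) hp
  obtain ⟨h4, h5, h6⟩ := arcCurve_Ioo (by exact_mod_cast hkl) hp'
  have h7 : 0 < (p.1 - i) * (j - p.1) := mul_pos (by linarith) (by linarith)
  have h8 : 0 < (p.1 - k) * (l - p.1) := mul_pos (by linarith) (by linarith)
  have hss : s = s' := by
    rcases hs with rfl | rfl <;> rcases hs' with rfl | rfl <;> first | rfl | (exfalso; linarith)
  refine ⟨hss, ?_⟩
  have h9 : (p.1 - i) * (j - p.1) = (p.1 - k) * (l - p.1) := by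
    subst hss
    rcases hs with rfl | rfl <;> linarith
  have hil : i < l := by exact_mod_cast h1.trans h5
  have hkj : k < j := by exact_mod_cast h4.trans h2
  -- one of two distinct nested arcs lies strictly below the other
  rcases lt_trichotomy i k with h | h | h
  · rcases lt_or_ge j l with h' | h'
    · exact Or.inl ⟨h, hkj, h'⟩
    · have h10 : (i : ℝ) < k := by exact_mod_cast h
      have h11 : (l : ℝ) ≤ j := by exact_mod_cast h'
      nlinarith
  · subst h
    have h10 : (j : ℝ) = l := by
      have := mul_left_cancel₀ (by linarith : p.1 - (i : ℝ) ≠ 0) h9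
      linarith
    exact absurd ⟨rfl, by exact_mod_cast h10⟩ hne
  · rcases lt_or_ge l j with h' | h'
    · exact Or.inr ⟨h, hil, h'⟩
    · have h10 : (k : ℝ) < i := by exact_mod_cast h
      have h11 : (j : ℝ) ≤ l := by exact_mod_cast h'
      nlinarith

theorem arcCurve_finite {i j k l : ℕ} (hij : i < j) (hkl : k < l) (hne : ¬ (i = k ∧ j = l))
    {s s' : ℝ} (hs : s = 1 ∨ s = -1) (hs' : s' = 1 ∨ s' = -1) :
    (arcCurve i j s '' Icc 0 1 ∩ arcCurve k l s' '' Icc 0 1).Finite := by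
  have hij' : (i : ℝ) < j := by exact_mod_cast hij
  have hkl' : (k : ℝ) < l := by exact_mod_cast hkl
  -- the abscissa of a common point is an end of the first arc or solves a linear equation
  let f : ℝ → ℝ × ℝ := fun x => (x, s * ((x - i) * (j - x)))
  refine (((Set.finite_singleton (((k : ℝ) * l - i * j) / (k + l - i - j))).insert
    (j : ℝ)).insert (i : ℝ)).image f |>.subset ?_
  rintro p ⟨hp, hp'⟩
  obtain ⟨h1, h2, h3⟩ := arcCurve_Icc hij' hp
  obtain ⟨h4, h5, h6⟩ := arcCurve_Icc hkl' hp'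
  refine ⟨p.1, ?_, Prod.ext rfl h3.symm⟩
  simp only [mem_insert_iff, mem_singleton_iff]
  have h7 : 0 ≤ (p.1 - i) * (j - p.1) := mul_nonneg (by linarith) (by linarith)
  have h8 : 0 ≤ (p.1 - k) * (l - p.1) := mul_nonneg (by linarith) (by linarith)
  have hcases : (p.1 - i) * (j - p.1) = 0 ∨
      (p.1 - i) * (j - p.1) = (p.1 - k) * (l - p.1) := by
    rcases hs with rfl | rfl <;> rcases hs' with rfl | rfl
    · right; linarith
    · left; linarith
    · left; linarith
    · right; linarith
  rcases hcases with h | h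
  · rcases mul_eq_zero.1 h with h | h
    · left; linarith
    · right; left; linarith
  · right; right
    have hlin : p.1 * (k + l - i - j) = (k : ℝ) * l - i * j := by linarith
    have hne0 : ((k : ℝ) + l - i - j) ≠ 0 := by
      intro h0
      rw [h0, mul_zero] at hlin
      have e1 : ((k : ℝ) - i) * (k - j) = 0 := by
        have : (l : ℝ) = i + j - k := by linarith
        rw [this] at hlin
        linarith
      rcases mul_eq_zero.1 e1 with e | e
      · exact hne ⟨by exact_mod_cast (by linarith : (i : ℝ) = k),
          by exact_mod_cast (by linarith : (j : ℝ) = l)⟩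
      · linarith
    rw [eq_div_iff hne0, hlin]

/-- The graph on `Fin v` with the given arcs as edges. -/
def arcGraph (v : ℕ) (arc : ℕ → ℕ → Prop) (harc : ∀ i j, arc i j → i < j) :
    SimpleGraph (Fin v) where
  Adj a b := arc a b ∨ arc b a
  symm := ⟨fun _ _ h => h.symm⟩
  loopless := ⟨fun a h => by rcases h with h | h <;> exact lt_irrefl _ (harc _ _ h)⟩

/-- A graph whose edges can be assigned to two pages so that every edge interleaves with at most one
edge on its page is almost planar. -/
theorem arcGraph_almostPlanar (v : ℕ) (arc up : ℕ → ℕ → Prop) (harc : ∀ i j, arc i j → i < j)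
    (H : ∀ i j k l m n, arc i j → arc k l → arc m n → (up i j ↔ up k l) → (up i j ↔ up m n) →
      Interleave i j k l → Interleave i j m n → k = m ∧ l = n) :
    (arcGraph v arc harc).AlmostPlanar := by
  classical
  have hex : ∀ e : (arcGraph v arc harc).edgeSet, ∃ a b : Fin v, (e : Sym2 (Fin v)) = s(a, b) ∧
      arc a b := by
    rintro ⟨e, he⟩
    induction e using Sym2.ind with
    | _ a b =>
      rcases he with h | h
      · exact ⟨a, b, rfl, h⟩
      · exact ⟨b, a, Sym2.eq_swap, h⟩
  choose lo hi hlh har using hex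
  let σ : (arcGraph v arc harc).edgeSet → ℝ := fun e => if up (lo e) (hi e) then 1 else -1
  have hσ : ∀ e, σ e = 1 ∨ σ e = -1 := fun e => by
    by_cases h : up (lo e) (hi e) <;> simp [σ, h]
  have hσ' : ∀ e f, σ e = σ f → (up (lo e) (hi e) ↔ up (lo f) (hi f)) := fun e f => by
    by_cases h : up (lo e) (hi e) <;> by_cases h' : up (lo f) (hi f) <;> simp [σ, h, h'] <;>
      norm_num
  have hlt : ∀ e, (lo e : ℕ) < hi e := fun e => harc _ _ (har e)
  have hlt' : ∀ e, ((lo e : ℕ) : ℝ) < (hi e : ℕ) := fun e => by exact_mod_cast hlt e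
  have hne : ∀ e f, e ≠ f → ¬ ((lo e : ℕ) = lo f ∧ (hi e : ℕ) = hi f) := fun e f h h' =>
    h (Subtype.ext (by rw [hlh e, hlh f, Fin.ext h'.1, Fin.ext h'.2]))
  let C : (arcGraph v arc harc).edgeSet → ℝ → ℝ × ℝ :=
    fun e => arcCurve (lo e : ℕ) (hi e : ℕ) (σ e)
  have hone : ∀ e f g, (e ≠ f ∧ ∃ p, p ∈ C e '' Ioo 0 1 ∧ p ∈ C f '' Ioo 0 1) →
      (e ≠ g ∧ ∃ p, p ∈ C e '' Ioo 0 1 ∧ p ∈ C g '' Ioo 0 1) → f = g := by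
    rintro e f g ⟨h1, p, hp, hp'⟩ ⟨h2, q, hq, hq'⟩
    obtain ⟨h3, h4⟩ := arcCurve_cross (hlt e) (hlt f) (hne e f h1) (hσ e) (hσ f) hp hp'
    obtain ⟨h5, h6⟩ := arcCurve_cross (hlt e) (hlt g) (hne e g h2) (hσ e) (hσ g) hq hq'
    by_contra hfg
    exact hne f g hfg (H _ _ _ _ _ _ (har e) (har f) (har g) (hσ' e f h3) (hσ' e g h5) h4 h6)
  refine ⟨{
    pos := fun a => ((a : ℕ), 0)
    pos_inj := fun a b h => by
      have h1 : ((a : ℕ) : ℝ) = (b : ℕ) := congrArg Prod.fst h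
      exact Fin.ext (by exact_mod_cast h1)
    curve := C
    curve_cont := fun e => Continuous.continuousOn (by unfold C arcCurve; fun_prop)
    curve_inj := fun e s _ t _ h => by
      have h1 := congrArg Prod.fst h
      simp only [C, arcCurve] at h1
      have h2 := hlt' e
      exact mul_left_cancel₀ (by linarith : ((hi e : ℕ) : ℝ) - (lo e : ℕ) ≠ 0) (by linarith)
    curve_ends := fun e => ⟨lo e, hi e, hlh e, by simp [C, arcCurve], by simp [C, arcCurve]⟩
    interior_no_vertex := fun e t ht a h => by
      obtain ⟨h1, h2, h3⟩ := arcCurve_Ioo (hlt' e) (mem_image_of_mem (C e) ht)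
      rw [h] at h1 h2 h3
      have h7 := mul_pos (sub_pos.2 h1) (sub_pos.2 h2)
      rcases hσ e with h8 | h8 <;> rw [h8] at h3 <;> simp only at h3 h7 <;> linarith
    finite_meet := fun e f h => arcCurve_finite (hlt e) (hlt f) (hne e f h) (hσ e) (hσ f)
    no_triple_point := fun p e f g h1 h2 h3 hp hq hr =>
      h3 (hone e f g ⟨h1, p, hp, hq⟩ ⟨h2, p, hp, hr⟩) }, hone⟩

theorem arcGraph_colorable (v : ℕ) (arc : ℕ → ℕ → Prop) (harc : ∀ i j, arc i j → i < j)
    (hodd : ∀ i j, arc i j → (i + j) % 2 = 1) : (arcGraph v arc harc).Colorable 2 := by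
  refine ⟨SimpleGraph.Coloring.mk (fun a => ⟨(a : ℕ) % 2, Nat.mod_lt _ (by norm_num)⟩) ?_⟩
  rintro a b (h | h) h'
  · have := hodd _ _ h
    have := congrArg Fin.val h'
    simp only at this
    omega
  · have := hodd _ _ h
    have := congrArg Fin.val h'
    simp only at this
    omega

theorem arcGraph_card (v : ℕ) (arc : ℕ → ℕ → Prop) (harc : ∀ i j, arc i j → i < j)
    (S : Finset (ℕ × ℕ)) (hS : ∀ p ∈ S, arc p.1 p.2 ∧ p.2 < v) :
    S.card ≤ (arcGraph v arc harc).edgeSet.ncard := by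
  rw [← Set.ncard_coe_finset]
  refine (Set.ncard_le_ncard (t := (fun e : Sym2 (Fin v) => ((e.inf : ℕ), (e.sup : ℕ))) ''
    (arcGraph v arc harc).edgeSet) ?_ (Set.toFinite _)).trans (Set.ncard_image_le (Set.toFinite _))
  intro p hp
  obtain ⟨h1, h2⟩ := hS p hp
  have h3 := harc _ _ h1
  have h4 : (⟨p.1, h3.trans h2⟩ : Fin v) ≤ ⟨p.2, h2⟩ := h3.le
  refine ⟨s(⟨p.1, h3.trans h2⟩, ⟨p.2, h2⟩), Or.inl h1, ?_⟩
  simp [h4]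

/-! ### The extremal graphs -/

/-- The complete bipartite graphs with at most seven vertices and classes of nearly equal size: the
edges are the pairs with odd sum. -/
theorem lower_small (v K : ℕ) (hv : v ≤ 7)
    (hK : K ≤ ((Finset.range v ×ˢ Finset.range v).filter
      fun p => p.1 < p.2 ∧ (p.1 + p.2) % 2 = 1).card) :
    ∃ G : SimpleGraph (Fin v), G.Colorable 2 ∧ G.AlmostPlanar ∧ K ≤ G.edgeSet.ncard := by
  let arc : ℕ → ℕ → Prop := fun i j => i < j ∧ j < 7 ∧ (i + j) % 2 = 1
  have harc : ∀ i j, arc i j → i < j := fun i j h => h.1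
  refine ⟨arcGraph v arc harc, arcGraph_colorable v arc harc fun i j h => h.2.2,
    arcGraph_almostPlanar v arc (fun i j => j = i + 1 ∨ i + j = 5 ∨ i + j = 7) harc ?_,
    hK.trans (arcGraph_card v arc harc _ fun p hp => ?_)⟩
  · have key : ∀ i j k l, arc i j → arc k l →
        ((j = i + 1 ∨ i + j = 5 ∨ i + j = 7) ↔ (l = k + 1 ∨ k + l = 5 ∨ k + l = 7)) →
        Interleave i j k l →
        (i + j = 5 ∧ k = i + 1 ∧ l = j + 1) ∨ (i + j = 7 ∧ i = k + 1 ∧ j = l + 1) := by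
      rintro i j k l ⟨h1, h2, h3⟩ ⟨h4, h5, h6⟩ h7 h8
      simp only [Interleave] at h8
      interval_cases j <;> interval_cases l <;> omega
    intro i j k l m n h1 h2 h3 h4 h5 h6 h7
    have h8 := key i j k l h1 h2 h4 h6
    have h9 := key i j m n h1 h3 h5 h7
    omega
  · simp only [Finset.mem_filter, Finset.mem_product, Finset.mem_range] at hp
    exact ⟨⟨hp.2.1, by omega, hp.2.2⟩, hp.1.2⟩

/-- The arcs of the extremal graphs on `2h` and on `2h + 1` vertices. -/
def bigArc (h i j : ℕ) : Prop := i < j ∧ j ≤ 2 * h ∧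
  ((j = i + 1 ∨ i + j + 1 = 2 * h ∨ i + j = 2 * h + 1) ∨
    (j < 2 * h ∧ (i + j = 3 ∨ i + j = 5 ∨ i + j = 2 * h + 3 ∨ i + j = 2 * h + 5)))

/-- The arcs drawn on the upper page. -/
def bigUp (h i j : ℕ) : Prop := j = i + 1 ∨ i + j + 1 = 2 * h ∨ i + j = 2 * h + 1

/-- The list of all interleaving pairs of arcs on the same page; every arc occurs in at most one. -/
theorem bigArc_cross {h i j k l : ℕ} (h1 : bigArc h i j) (h2 : bigArc h k l)
    (h3 : bigUp h i j ↔ bigUp h k l) (h4 : Interleave i j k l) :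
    (i + j + 1 = 2 * h ∧ k = i + 1 ∧ l = j + 1) ∨ (i + j = 2 * h + 1 ∧ i = k + 1 ∧ j = l + 1) ∨
    (i = 0 ∧ j = 3 ∧ k = 1 ∧ l = 4) ∨ (i = 1 ∧ j = 4 ∧ k = 0 ∧ l = 3) ∨
    (i = 0 ∧ j = 5 ∧ k = 4 ∧ l + 1 = 2 * h) ∨ (i = 4 ∧ j + 1 = 2 * h ∧ k = 0 ∧ l = 5) ∨
    (i + j = 2 * h + 3 ∧ 5 ≤ i ∧ k = i + 1 ∧ l = j + 1) ∨
    (i + j = 2 * h + 5 ∧ i = k + 1 ∧ j = l + 1) := by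
  obtain ⟨a1, a2, a3⟩ := h1
  obtain ⟨b1, b2, b3⟩ := h2
  simp only [Interleave] at h4
  by_cases hu : bigUp h i j
  · have hu' := h3.1 hu
    clear a3 b3 h3
    simp only [bigUp] at hu hu'
    rcases hu with hu | hu | hu <;> rcases hu' with hu' | hu' | hu' <;>
      first
      | (exfalso; omega)
      | (left; omega)
      | (right; left; omega)
  · have hu' := fun h' => hu (h3.2 h')
    have a4 := a3.resolve_left hu
    have b4 := b3.resolve_left hu'
    clear a3 b3 h3
    simp only [bigUp] at hu hu'
    rcases a4 with ⟨a5, a6 | a6 | a6 | a6⟩ <;> rcases b4 with ⟨b5, b6 | b6 | b6 | b6⟩ <;>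
      first
      | (exfalso; omega)
      | (right; right; right; right; right; right; left; omega)
      | (right; right; right; right; right; right; right; omega)
      | (right; right; right; right; right; left; omega)
      | (right; right; left; omega)
      | (right; right; right; left; omega)
      | (right; right; right; right; left; omega)

/-- An enumeration of the arcs: the path, the two long families on the upper page, the two on the
lower page, the three short arcs on the lower page, and the two arcs at the vertex `2h`. -/
def bigEnum (h k : ℕ) : ℕ × ℕ :=
  if k < 2 * h - 1 then (k, k + 1)
  else if k < 3 * h - 2 then (k - (2 * h - 1), 4 * h - 2 - k)
  else if k < 4 * h - 4 then (k + 4 - 3 * h, 5 * h - 3 - k)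
  else if k < 5 * h - 7 then (k + 8 - 4 * h, 6 * h - 5 - k)
  else if k < 6 * h - 11 then (k + 13 - 5 * h, 7 * h - 8 - k)
  else if k = 6 * h - 11 then (0, 3)
  else if k = 6 * h - 10 then (0, 5)
  else if k = 6 * h - 9 then (1, 4)
  else if k = 6 * h - 8 then (1, 2 * h)
  else (2 * h - 1, 2 * h)

theorem bigEnum_spec {h k : ℕ} (hh : 4 ≤ h) (hk : k < 6 * h - 6) :
    ∃ i j, bigEnum h k = (i, j) ∧
    ((j = i + 1 ∧ j < 2 * h ∧ k = i) ∨
      (i + j + 1 = 2 * h ∧ i + 1 < j ∧ k + 1 = i + 2 * h) ∨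
      (i + j = 2 * h + 1 ∧ i + 1 < j ∧ j < 2 * h ∧ k + 4 = i + 3 * h) ∨
      (i + j = 2 * h + 3 ∧ i + 1 < j ∧ j < 2 * h ∧ k + 8 = i + 4 * h) ∨
      (i + j = 2 * h + 5 ∧ i + 1 < j ∧ j < 2 * h ∧ k + 13 = i + 5 * h) ∨
      (i = 0 ∧ j = 3 ∧ k + 11 = 6 * h) ∨ (i = 0 ∧ j = 5 ∧ k + 10 = 6 * h) ∨
      (i = 1 ∧ j = 4 ∧ k + 9 = 6 * h) ∨ (i = 1 ∧ j = 2 * h ∧ k + 8 = 6 * h) ∨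
      (i + 1 = 2 * h ∧ j = 2 * h ∧ k + 7 = 6 * h)) := by
  unfold bigEnum
  split_ifs
  · exact ⟨_, _, rfl, by left; omega⟩
  · exact ⟨_, _, rfl, by right; left; omega⟩
  · exact ⟨_, _, rfl, by right; right; left; omega⟩
  · exact ⟨_, _, rfl, by right; right; right; left; omega⟩
  · exact ⟨_, _, rfl, by right; right; right; right; left; omega⟩
  · exact ⟨_, _, rfl, by right; right; right; right; right; left; omega⟩
  · exact ⟨_, _, rfl, by right; right; right; right; right; right; left; omega⟩
  · exact ⟨_, _, rfl, by right; right; right; right; right; right; right; left; omega⟩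
  · exact ⟨_, _, rfl, by right; right; right; right; right; right; right; right; left; omega⟩
  · exact ⟨_, _, rfl, by right; right; right; right; right; right; right; right; right; omega⟩

theorem bigEnum_inj {h : ℕ} (hh : 4 ≤ h) :
    Set.InjOn (bigEnum h) (Finset.range (6 * h - 6)) := by
  intro k hk l hl hkl
  simp only [Finset.coe_range, Set.mem_Iio] at hk hl
  obtain ⟨i, j, hij, h1⟩ := bigEnum_spec hh hk
  obtain ⟨i', j', hij', h2⟩ := bigEnum_spec hh hl
  obtain ⟨rfl, rfl⟩ := Prod.mk.inj (hij.symm.trans (hkl.trans hij'))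
  clear hij hij' hkl
  rcases h1 with h1 | h1 | h1 | h1 | h1 | h1 | h1 | h1 | h1 | h1 <;>
    rcases h2 with h2 | h2 | h2 | h2 | h2 | h2 | h2 | h2 | h2 | h2 <;> omega

theorem bigEnum_arc {h k : ℕ} (hh : 4 ≤ h) (hk : k < 6 * h - 6) :
    bigArc h (bigEnum h k).1 (bigEnum h k).2 ∧ (k < 6 * h - 8 → (bigEnum h k).2 < 2 * h) := by
  obtain ⟨i, j, hij, h1⟩ := bigEnum_spec hh hk
  rw [hij]
  constructor
  · simp only [bigArc]
    rcases h1 with h1 | h1 | h1 | h1 | h1 | h1 | h1 | h1 | h1 | h1 <;> omega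
  · intro _
    show j < 2 * h
    omega

/-- The graphs attaining the bound on `2h` and on `2h + 1` vertices, for `h ≥ 4`. -/
theorem lower_big (h v K : ℕ) (hh : 4 ≤ h)
    (hv : (v = 2 * h ∧ K = 6 * h - 8) ∨ (v = 2 * h + 1 ∧ K = 6 * h - 6)) :
    ∃ G : SimpleGraph (Fin v), G.Colorable 2 ∧ G.AlmostPlanar ∧ K ≤ G.edgeSet.ncard := by
  have harc : ∀ i j, bigArc h i j → i < j := fun i j h => h.1
  refine ⟨arcGraph v (bigArc h) harc, arcGraph_colorable v _ harc ?_,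
    arcGraph_almostPlanar v _ (bigUp h) harc ?_,
    le_trans ?_ (arcGraph_card v _ harc ((Finset.range K).image (bigEnum h)) ?_)⟩
  · rintro i j ⟨-, -, h3⟩
    omega
  · intro i j k l m n h1 h2 h3 h4 h5 h6 h7
    have h8 := bigArc_cross h1 h2 h4 h6
    have h9 := bigArc_cross h1 h3 h5 h7
    clear h1 h2 h3 h4 h5 h6 h7
    omega
  · rw [Finset.card_image_of_injOn, Finset.card_range]
    exact (bigEnum_inj hh).mono fun k hk => by
      simp only [Finset.coe_range, Set.mem_Iio] at hk ⊢
      omega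
  · intro p hp
    obtain ⟨k, hk, rfl⟩ := Finset.mem_image.1 hp
    rw [Finset.mem_range] at hk
    obtain ⟨h1, h2⟩ := bigEnum_arc hh (show k < 6 * h - 6 by omega)
    refine ⟨h1, ?_⟩
    rcases hv with ⟨rfl, rfl⟩ | ⟨rfl, rfl⟩
    · exact h2 hk
    · have := h1.2.1
      omega

/-- The lower bound. -/
theorem lower_bound (v K : ℕ) (hv : 4 ≤ v)
    (hK : (Even v ∧ v ≠ 6 ∧ K = 3 * v - 8) ∨ ((Odd v ∨ v = 6) ∧ K = 3 * v - 9)) :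
    ∃ G : SimpleGraph (Fin v), G.Colorable 2 ∧ G.AlmostPlanar ∧ K ≤ G.edgeSet.ncard := by
  by_cases hs : v ≤ 7
  · refine lower_small v K hs ?_
    rw [Nat.even_iff, Nat.odd_iff] at hK
    interval_cases v
    · refine le_trans (b := 4) (by omega) (by decide)
    · refine le_trans (b := 6) (by omega) (by decide)
    · refine le_trans (b := 9) (by omega) (by decide)
    · refine le_trans (b := 12) (by omega) (by decide)
  · rw [Nat.even_iff, Nat.odd_iff] at hK
    exact lower_big (v / 2) v K (by omega) (by omega)

/-- For `v ≥ 4`, the maximum number of edges of a bipartite almost planar simple graph on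
`v` vertices is `3v - 8` for even `v ≠ 6`, and `3v - 9` for odd `v` or `v = 6`. -/
theorem max_edges_bipartite_almostPlanar (v : ℕ) (hv : 4 ≤ v) :
    (Even v ∧ v ≠ 6 →
      IsGreatest {k : ℕ | ∃ G : SimpleGraph (Fin v), G.Colorable 2 ∧ G.AlmostPlanar ∧
        G.edgeSet.ncard = k} (3 * v - 8)) ∧
    (Odd v ∨ v = 6 →
      IsGreatest {k : ℕ | ∃ G : SimpleGraph (Fin v), G.Colorable 2 ∧ G.AlmostPlanar ∧
        G.edgeSet.ncard = k} (3 * v - 9)) := by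
  refine ⟨fun h => ⟨?_, ?_⟩, fun h => ⟨?_, ?_⟩⟩
  · obtain ⟨G, h1, h2, h3⟩ := lower_bound v _ hv (Or.inl ⟨h.1, h.2, rfl⟩)
    have := (upper_bound v hv G h1 h2).1
    exact ⟨G, h1, h2, by omega⟩
  · rintro _ ⟨G, h1, h2, rfl⟩
    have := (upper_bound v hv G h1 h2).1
    omega
  · obtain ⟨G, h1, h2, h3⟩ := lower_bound v _ hv (Or.inr ⟨h, rfl⟩)
    have := (upper_bound v hv G h1 h2).2 h
    exact ⟨G, h1, h2, by omega⟩
  · rintro _ ⟨G, h1, h2, rfl⟩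
    have := (upper_bound v hv G h1 h2).2 h
    omega
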